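/- There exists a constant C with 0 < C < 10^6 such that the following holds. Let K be a field of characteristic 0, let d ≥ 2, and let w_1 ∈ A_{r_1}, …, w_m ∈ A_{r_m} be algebra words of degree at most d. Let n ≥ 1 be such that each word map φ_{w_i} : M_n^{r_i} → M_n is generating. If m ≥ C·d³, then the convolution φ_{w_1} * ⋯ * φ_{w_m} : M_n^{r_1+⋯+r_m} → M_n, (x_1,…,x_m) ↦ φ_{w_1}(x_1) + ⋯ + φ_{w_m}(x_m), is a flat morphism of affine K-varieties. -/

import Mathlib

/-!
Flatness descends from the algebraic closure, so the ground field `k` may be taken algebraically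
closed. The criterion is a degeneration argument (`flat_of_lead`): if, for some nonnegative weight
on the variables, polynomials `f₁, …, f_N` have leading monomials in pairwise disjoint sets of
variables, then the polynomial ring is free over `k[f₁, …, f_N]`, with the monomials divisible by
none of the leading monomials as a basis. It may be applied after any linear change of
coordinates in the target and after a substitution of the variables that has a left inverse
(`flat_of_functionals`). So it suffices to find `n²` independent linear functionals on `M_n`, a
substitution of the generic matrices, and a weight for which the values of the functionals on the
sum of the words have leading monomials in disjoint sets of variables. The summands,
called blocks below, use different variables, and there are at least `1000 d³` blocks to distribute.

Two degrees belong to each word: `e`, the largest degree of a homogeneous part that matters, and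
`e'`, the largest degree of a homogeneous part whose trace is not identically zero; the latter
exists because the word is generating. The trace functional is the delicate one, since it is
invariant under conjugation. It is assigned to the block `i₀` with the largest ratio `e' / e`: this
block is translated by a new variable `τ` times a point at which the trace of degree `e'` does not
vanish, and the trace gets the leading monomial `τ ^ e'`. Maximality of the ratio ensures that the
other blocks, scaled so that their parts of degree `e` have a common weight, do not disturb it.

*Small matrices*, `n ≤ d` (`core_small`). Here `e` is the largest degree in which the values are
not all scalar. There are enough blocks to give every functional other than the trace two blocks
with the same `e` and the same `e'`, and both are translated along a line, as above. The
directions are chosen so that the traces of the two blocks cancel, while the sum of their values of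
degree `e` is a prescribed member of a basis of `M_n` containing `1`. This is possible since a
subspace which contains `1` and all differences `g x g⁻¹ - x`, for one nonscalar matrix `x`, is
all of `M_n` (`eq_top_of_conj`).

*Large matrices*, `n > d` (`core_large`). Here `e` is the degree of the word, and `ω` is a word of
length `e` which occurs in it. An entry `(a, b)` of a word in generic matrices is a sum over walks
from `a` to `b` labelled by words, so that a leading monomial is a unique heaviest walk
(`ev_lead`). There are `n² - 1` functionals but a number of blocks which does not depend on `n`,
so that each block has to serve many entries, along edge-disjoint walks.

* Entries off the diagonal. The indices are cut into at most `2 (d + 1)` intervals of length `Q`.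
  For each ordered pair of intervals and each sign of `b - a`, some blocks with the same degree `e`
  use walks labelled by `ω` from the first interval to the second one, through `e - 1` other
  intervals. To each edge used by such walks is given the weight
  `q + (potential difference) - (position difference)²`, where the positions are integers with
  spacing `e` in each interval, shifted by a multiple of `ρ` depending on the layer. For a walk
  from `a` to `b`, the sum of the position differences is `e Δ`, where `Δ` is the difference of
  the residues of `b` and `a` modulo `Q`. Hence by convexity the heaviest walk is the one whose
  positions increase by exactly `Δ` in each step, and it exists precisely in the block with
  `ρ ≡ Δ` modulo `e` (`tile_walk`, `tile_path`, `tile_rigid`). An edge of such a walk determines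
  `Δ` and `a`, whence the disjointness (`tile_disj`). The potential is linear at the ends; it makes
  these entries heavier than all closed walks, which do not see it.
* Entries on the diagonal. The functionals are the partial sums `M₀₀ + ⋯ + M_aa`, of which the
  last one is the trace. Conjugating a block by the unipotent matrix that adds the index `a` to
  `a + 1` adds the entry `(a, a + 1)`, up to sign, to the partial sum up to `a`, and that entry
  gets a heaviest walk through short intervals. The indices `a` are sorted into `2 (d + 1)`
  classes, for each of which the walks are disjoint, and each class is given one block
  (`diagPath_inj`).

The two kinds of blocks are put together in `flat_of_weights`.
-/

/-!
Statement 1: Theorem B (flatness part). There exists `0 < C < 10^6` such that for any field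
`K` of characteristic zero, any `d ≥ 2`, and any associative algebra words
`w₁ ∈ A_{r₁}, …, w_m ∈ A_{r_m}` of degree at most `d`, if `n ≥ 1` is such that each matrix
word map `φ_{w_i} : M_n^{r_i} → M_n` is generating (its image over an algebraic closure `K̄`
is not contained in any coset of a proper `K̄`-linear subspace of `M_n(K̄)`), and `m ≥ C·d³`,
then the convolution `φ_{w₁} * ⋯ * φ_{w_m} : M_n^{r₁+⋯+r_m} → M_n` is flat: the induced
homomorphism of coordinate rings is flat.
-/

/-- `IsAlgMonomialOfLength K x n` : `x` is a product of `n` generators of the free associative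
algebra (the empty product `1` for `n = 0`). -/
inductive IsAlgMonomialOfLength (K : Type) [CommRing K] {r : ℕ} :
    FreeAlgebra K (Fin r) → ℕ → Prop
  | one : IsAlgMonomialOfLength K 1 0
  | of (i : Fin r) : IsAlgMonomialOfLength K (FreeAlgebra.ι K i) 1
  | mul {x y : FreeAlgebra K (Fin r)} {a b : ℕ} :
      IsAlgMonomialOfLength K x a → IsAlgMonomialOfLength K y b →
      IsAlgMonomialOfLength K (x * y) (a + b)

/-- An algebra word `w ∈ A_r` has degree at most `d` if it is a `K`-linear combination of
monomials in the generators of length at most `d`. -/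
def AlgWordDegLE (K : Type) [CommRing K] {r : ℕ} (d : ℕ)
    (w : FreeAlgebra K (Fin r)) : Prop :=
  w ∈ Submodule.span K {x : FreeAlgebra K (Fin r) | ∃ n ≤ d, IsAlgMonomialOfLength K x n}

/-- The matrix word map `φ_w : M_n(A)^r → M_n(A)` associated to an algebra word `w ∈ A_r`,
evaluated in the `K`-algebra of `n×n` matrices over a `K`-algebra `A`. -/
noncomputable def matrixWordMap {K : Type} [CommRing K] {r : ℕ}
    (w : FreeAlgebra K (Fin r)) {n : ℕ} {A : Type} [CommRing A] [Algebra K A]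
    (y : Fin r → Matrix (Fin n) (Fin n) A) : Matrix (Fin n) (Fin n) A :=
  FreeAlgebra.lift K y w

/-- `φ_w : M_n^r → M_n` is generating: over the algebraic closure `K̄`, its image is not
contained in any coset of a proper `K̄`-linear subspace of `M_n(K̄)`. -/
def MatrixWordGenerating (K : Type) [Field K] {r : ℕ} (n : ℕ)
    (w : FreeAlgebra K (Fin r)) : Prop :=
  ∀ (W : Submodule (AlgebraicClosure K)
        (Matrix (Fin n) (Fin n) (AlgebraicClosure K)))
    (c : Matrix (Fin n) (Fin n) (AlgebraicClosure K)),
    (∀ y : Fin r → Matrix (Fin n) (Fin n) (AlgebraicClosure K),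
        matrixWordMap w y - c ∈ W) → W = ⊤

namespace WordFlat

open MvPolynomial

/-! ### Weight filtrations and a flatness criterion -/

section Weights

variable {σ : Type*} {K : Type*} [CommRing K]

/-- The weight `∑ β s * W s` of a monomial exponent `β`. -/
noncomputable abbrev wt (W : σ → ℤ) : (σ →₀ ℕ) →+ ℤ := Finsupp.weight W

/-- The polynomials all of whose monomials have weight at most `N`. -/
noncomputable def WLe (K : Type*) [CommRing K] (W : σ → ℤ) (N : ℤ) :
    Submodule K (MvPolynomial σ K) :=
  restrictSupport K {β | wt W β ≤ N}

lemma mem_WLe {W : σ → ℤ} {N : ℤ} {p : MvPolynomial σ K} :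
    p ∈ WLe K W N ↔ ∀ β, coeff β p ≠ 0 → wt W β ≤ N := by
  rw [WLe, mem_restrictSupport_iff]
  constructor
  · intro h β hβ
    exact h (by simpa using hβ)
  · intro h β hβ
    exact h β (by simpa using hβ)

lemma monomial_mem_WLe {W : σ → ℤ} {N : ℤ} {β : σ →₀ ℕ} (a : K) (h : wt W β ≤ N) :
    monomial β a ∈ WLe K W N :=
  (monomial_mem_restrictSupport K).2 (Or.inl h)

lemma WLe_mono (W : σ → ℤ) {N M : ℤ} (h : N ≤ M) : WLe K W N ≤ WLe K W M :=
  restrictSupport_mono K fun _ hx => le_trans hx h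

lemma mul_mem_WLe {W : σ → ℤ} {N M : ℤ} {p q : MvPolynomial σ K}
    (hp : p ∈ WLe K W N) (hq : q ∈ WLe K W M) : p * q ∈ WLe K W (N + M) := by
  classical
  rw [mem_WLe] at *
  intro β hβ
  rw [coeff_mul] at hβ
  obtain ⟨x, hx, hne⟩ := Finset.exists_ne_zero_of_sum_ne_zero hβ
  rw [Finset.HasAntidiagonal.mem_antidiagonal] at hx
  rw [← hx, map_add]
  exact add_le_add (hp _ (left_ne_zero_of_mul hne)) (hq _ (right_ne_zero_of_mul hne))

lemma X_mem_WLe {W : σ → ℤ} {N : ℤ} {s : σ} (h : W s ≤ N) :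
    (X s : MvPolynomial σ K) ∈ WLe K W N :=
  monomial_mem_WLe _ (by simpa [wt, Finsupp.weight_single] using h)

lemma C_mem_WLe {W : σ → ℤ} {N : ℤ} (a : K) (h : 0 ≤ N) :
    (C a : MvPolynomial σ K) ∈ WLe K W N :=
  monomial_mem_WLe _ (by simpa using h)

lemma wt_nonneg {W : σ → ℤ} (hW : ∀ s, 0 ≤ W s) (β : σ →₀ ℕ) : 0 ≤ wt W β := by
  rw [wt, Finsupp.weight_apply]
  exact Finset.sum_nonneg fun s _ => by simpa using mul_nonneg (Int.natCast_nonneg _) (hW s)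

/-- `p` has the leading monomial `x^β`, up to a nonzero scalar, for the weight `W`: all other
monomials of `p` have smaller weight. -/
def Lead (W : σ → ℤ) (β : σ →₀ ℕ) (p : MvPolynomial σ K) : Prop :=
  ∃ c : K, c ≠ 0 ∧ p - monomial β c ∈ WLe K W (wt W β - 1)

lemma Lead.mem {W : σ → ℤ} {β : σ →₀ ℕ} {p : MvPolynomial σ K} (h : Lead W β p) :
    p ∈ WLe K W (wt W β) := by
  obtain ⟨c, -, h⟩ := h
  have := add_mem (WLe_mono W (by lia) h) (monomial_mem_WLe (W := W) (β := β) c le_rfl)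
  simpa using this

lemma Lead.add {W : σ → ℤ} {β : σ →₀ ℕ} {p q : MvPolynomial σ K} (h : Lead W β p)
    (hq : q ∈ WLe K W (wt W β - 1)) : Lead W β (p + q) := by
  obtain ⟨c, hc, h⟩ := h
  refine ⟨c, hc, ?_⟩
  rw [add_sub_right_comm]
  exact add_mem h hq

variable [IsDomain K]

lemma Lead.mul {W : σ → ℤ} {β γ : σ →₀ ℕ} {p q : MvPolynomial σ K} (hp : Lead W β p)
    (hq : Lead W γ q) : Lead W (β + γ) (p * q) := by
  have hq' := hq.mem
  obtain ⟨c, hc, hp⟩ := hp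
  obtain ⟨c', hc', hq⟩ := hq
  refine ⟨c * c', mul_ne_zero hc hc', ?_⟩
  have e : p * q - monomial (β + γ) (c * c')
      = (p - monomial β c) * q + monomial β c * (q - monomial γ c') := by
    rw [mul_sub, monomial_mul]; ring
  rw [e, map_add]
  refine add_mem ?_ ?_
  · have := mul_mem_WLe hp hq'
    exact WLe_mono W (by lia) this
  · have := mul_mem_WLe (monomial_mem_WLe (W := W) (β := β) c le_rfl) hq
    exact WLe_mono W (by lia) this

lemma Lead.one {W : σ → ℤ} : Lead W 0 (1 : MvPolynomial σ K) :=
  ⟨1, one_ne_zero, by simp⟩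

lemma Lead.monomial_one {W : σ → ℤ} (β : σ →₀ ℕ) : Lead W β (monomial β (1 : K)) :=
  ⟨1, one_ne_zero, by simp⟩

lemma Lead.pow {W : σ → ℤ} {β : σ →₀ ℕ} {p : MvPolynomial σ K} (hp : Lead W β p) (a : ℕ) :
    Lead W (a • β) (p ^ a) := by
  induction a with
  | zero => simpa using Lead.one
  | succ a ih => rw [pow_succ, succ_nsmul]; exact ih.mul hp

lemma Lead.prod {T : Type*} {W : σ → ℤ} {β : T → σ →₀ ℕ} {p : T → MvPolynomial σ K}
    (s : Finset T) (hp : ∀ t, Lead W (β t) (p t)) :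
    Lead W (∑ t ∈ s, β t) (∏ t ∈ s, p t) := by
  classical
  induction s using Finset.induction_on with
  | empty => simpa using Lead.one
  | insert a s ha ih => rw [Finset.sum_insert ha, Finset.prod_insert ha]; exact (hp a).mul ih

end Weights

section Criterion

variable {σ : Type*} {K : Type*} [Field K]

/-- A linear endomorphism of the polynomial ring which is triangular with respect to a
nonnegative weight is bijective. -/
lemma bijective_of_lead {W : σ → ℤ} (hW : ∀ s, 0 ≤ W s)
    (L : MvPolynomial σ K →ₗ[K] MvPolynomial σ K)
    (hL : ∀ β, Lead W β (L (monomial β 1))) : Function.Bijective L := by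
  classical
  choose c hc hlow using hL
  constructor
  · rw [← LinearMap.ker_eq_bot, LinearMap.ker_eq_bot']
    intro p hp
    by_contra hne
    obtain ⟨β, hβ, hmax⟩ := p.support.exists_max_image (wt W) (by simpa using hne)
    have hcoef : coeff β (L p) = coeff β p * c β := by
      conv_lhs => rw [p.as_sum]
      rw [map_sum, coeff_sum, Finset.sum_eq_single β]
      · have : monomial β (coeff β p) = coeff β p • monomial β (1 : K) := by
          rw [smul_monomial]; simp
        rw [this, map_smul, coeff_smul, smul_eq_mul]
        congr 1
        by_contra h
        have : coeff β (L (monomial β 1) - monomial β (c β)) ≠ 0 := by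
          simpa [sub_eq_zero] using h
        have := mem_WLe.1 (hlow β) β this
        lia
      · intro γ hγ hγβ
        have : monomial γ (coeff γ p) = coeff γ p • monomial γ (1 : K) := by
          rw [smul_monomial]; simp
        rw [this, map_smul, coeff_smul, smul_eq_mul]
        by_contra h
        have : coeff β (L (monomial γ 1) - monomial γ (c γ)) ≠ 0 := by
          simpa [coeff_monomial, hγβ] using right_ne_zero_of_mul h
        have := mem_WLe.1 (hlow γ) β this
        have := hmax γ hγ
        lia
      · intro h; exact absurd hβ h
    rw [hp, coeff_zero] at hcoef
    exact mul_ne_zero (by simpa using hβ) (hc β) hcoef.symm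
  · have key : ∀ N : ℕ, ∀ β, wt W β < N → monomial β (1 : K) ∈ LinearMap.range L := by
      intro N
      induction N with
      | zero => intro β h; have := wt_nonneg hW β; lia
      | succ N ih =>
        intro β hβ
        have h1 : WLe K W (wt W β - 1) ≤ LinearMap.range L := by
          rw [WLe, restrictSupport_eq_span, Submodule.span_le]
          rintro _ ⟨γ, hγ, rfl⟩
          exact ih γ (by have : wt W γ ≤ wt W β - 1 := hγ; push_cast at hβ; lia)
        have h2 := h1 (hlow β)
        have h3 : monomial β (c β) ∈ LinearMap.range L := by
          have := sub_mem (LinearMap.mem_range_self L (monomial β 1)) h2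
          simpa using this
        have h4 := Submodule.smul_mem _ (c β)⁻¹ h3
        rwa [smul_monomial, smul_eq_mul, inv_mul_cancel₀ (hc β)] at h4
    intro p
    have : p ∈ LinearMap.range L := by
      rw [p.as_sum]
      refine sum_mem fun β _ => ?_
      have : monomial β (coeff β p) = coeff β p • monomial β (1 : K) := by
        rw [smul_monomial]; simp
      rw [this]
      exact Submodule.smul_mem _ _ (key ((wt W β).toNat + 1) β (by
        have := wt_nonneg hW β; push_cast; lia))
    exact this

/-- The exponents not divisible by any of the exponents `μ k`. -/
def Normal {T : Type*} (μ : T → σ →₀ ℕ) : Set (σ →₀ ℕ) := {ν | ∀ k, ¬ μ k ≤ ν}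

/-- For nonzero exponents `μ k` with disjoint supports, every exponent is in a unique way the
sum of a normal one and a combination of the `μ k`. -/
lemma decomp_bijective {T : Type*} [Fintype T] (μ : T → σ →₀ ℕ) (hμ : ∀ k, μ k ≠ 0)
    (hdisj : ∀ k l, k ≠ l → Disjoint (μ k).support (μ l).support) :
    Function.Bijective fun x : (Σ _ : Normal μ, T →₀ ℕ) =>
      (x.1 : σ →₀ ℕ) + ∑ k, x.2 k • μ k := by
  classical
  have hval : ∀ (α : T →₀ ℕ) k s, s ∈ (μ k).support →
      (∑ l, α l • μ l) s = α k * μ k s := by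
    intro α k s hs
    rw [Finsupp.finsetSum_apply, Finset.sum_eq_single k]
    · simp
    · intro l _ hl
      have := Finset.disjoint_left.1 (hdisj k l hl.symm) hs
      simp [Finsupp.notMem_support_iff.1 this]
    · simp
  have hlt : ∀ (ν ν' : Normal μ) (α α' : T →₀ ℕ) k,
      (ν : σ →₀ ℕ) + ∑ k, α k • μ k = (ν' : σ →₀ ℕ) + ∑ k, α' k • μ k → α' k ≤ α k := by
    intro ν ν' α α' k h
    by_contra hk
    refine ν.2 k fun s => ?_
    by_cases hs : s ∈ (μ k).support
    · have h1 := DFunLike.congr_fun h s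
      simp only [Finsupp.add_apply, hval α k s hs, hval α' k s hs] at h1
      obtain ⟨t, ht⟩ := Nat.exists_eq_add_of_lt (not_le.1 hk)
      rw [ht] at h1
      nlinarith
    · rw [Finsupp.notMem_support_iff.1 hs]; exact Nat.zero_le _
  constructor
  · rintro ⟨ν, α⟩ ⟨ν', α'⟩ h
    have hα : α = α' := by
      ext k
      exact le_antisymm (hlt _ _ _ _ k h.symm) (hlt _ _ _ _ k h)
    subst hα
    have : ν = ν' := Subtype.ext (add_right_cancel h)
    rw [this]
  · have key : ∀ N : ℕ, ∀ β : σ →₀ ℕ, β.degree < N →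
        ∃ x : (Σ _ : Normal μ, T →₀ ℕ), (x.1 : σ →₀ ℕ) + ∑ k, x.2 k • μ k = β := by
      intro N
      induction N with
      | zero => intro β h; lia
      | succ N ih =>
        intro β hβ
        by_cases h : β ∈ Normal μ
        · exact ⟨⟨⟨β, h⟩, 0⟩, by simp⟩
        · simp only [Normal, Set.mem_ofPred_eq, not_forall, not_not] at h
          obtain ⟨k, hk⟩ := h
          obtain ⟨γ, rfl⟩ := exists_add_of_le hk
          have hpos : (μ k).degree ≠ 0 := by
            rw [Ne, Finsupp.degree_eq_zero_iff]; exact hμ k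
          rw [map_add] at hβ
          obtain ⟨⟨ν, α⟩, hx⟩ := ih γ (by lia)
          refine ⟨⟨ν, α + Finsupp.single k 1⟩, ?_⟩
          rw [← hx]
          simp only [Finsupp.add_apply, add_smul, Finset.sum_add_distrib, Finsupp.single_apply,
            ite_smul, one_smul, zero_smul, Finset.sum_ite_eq, Finset.mem_univ, if_true]
          abel
    intro β
    exact key _ β (Nat.lt_succ_self _)

/-- If the polynomials `f k` have leading monomials (for some nonnegative weight) in disjoint
sets of variables, then `K[σ]` is free over `K[T]` via `f`, with the normal monomials as a
basis; hence the comorphism given by `f` is flat. -/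
theorem flat_of_lead {T : Type*} [Fintype T] (f : T → MvPolynomial σ K) {W : σ → ℤ}
    (hW : ∀ s, 0 ≤ W s) (μ : T → σ →₀ ℕ) (hμ : ∀ k, μ k ≠ 0)
    (hdisj : ∀ k l, k ≠ l → Disjoint (μ k).support (μ l).support)
    (hf : ∀ k, Lead W (μ k) (f k)) :
    (aeval f : MvPolynomial T K →ₐ[K] MvPolynomial σ K).toRingHom.Flat := by
  classical
  let φ : MvPolynomial T K →ₐ[K] MvPolynomial σ K := aeval f
  let _ : Algebra (MvPolynomial T K) (MvPolynomial σ K) := φ.toRingHom.toAlgebra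
  have hsm : ∀ (p : MvPolynomial T K) (q : MvPolynomial σ K), p • q = φ p * q :=
    fun p q => Algebra.smul_def p q
  have _ : IsScalarTower K (MvPolynomial T K) (MvPolynomial σ K) :=
    IsScalarTower.of_algebraMap_eq fun x => (φ.commutes x).symm
  change Module.Flat (MvPolynomial T K) (MvPolynomial σ K)
  let e : (Σ _ : Normal μ, T →₀ ℕ) ≃ (σ →₀ ℕ) := Equiv.ofBijective _ (decomp_bijective μ hμ hdisj)
  let b₁ := Finsupp.basis (fun _ : Normal μ => basisMonomials T K)
  let E : MvPolynomial σ K ≃ₗ[K] (Normal μ →₀ MvPolynomial T K) :=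
    (basisMonomials σ K).equiv b₁ e.symm
  let Ψ : (Normal μ →₀ MvPolynomial T K) →ₗ[MvPolynomial T K] MvPolynomial σ K :=
    Finsupp.linearCombination _ fun ν => monomial (ν : σ →₀ ℕ) (1 : K)
  have hE : ∀ x, E (monomial (e x) 1) = Finsupp.single x.1 (monomial x.2 1) := by
    intro x
    have : monomial (e x) (1 : K) = basisMonomials σ K (e x) := by simp
    rw [this, Module.Basis.equiv_apply, Equiv.symm_apply_apply]
    simp [b₁, Finsupp.coe_basis]
  have hbij : Function.Bijective (Ψ.restrictScalars K ∘ₗ E.toLinearMap) := by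
    refine bijective_of_lead hW _ fun β => ?_
    obtain ⟨x, rfl⟩ := e.surjective β
    have h1 : (Ψ.restrictScalars K ∘ₗ E.toLinearMap) (monomial (e x) 1)
        = monomial (x.1 : σ →₀ ℕ) 1 * ∏ k, f k ^ x.2 k := by
      change Ψ (E (monomial (e x) 1)) = _
      rw [hE, Finsupp.linearCombination_single, hsm, mul_comm]
      congr 1
      change aeval f _ = _
      rw [aeval_monomial, map_one, one_mul, Finsupp.prod_fintype _ _ (by simp)]
    rw [h1]
    exact (Lead.monomial_one _).mul (Lead.prod _ fun k => (hf k).pow _)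
  have hΨ : Function.Bijective Ψ := by
    have : (Ψ : _ → _) = (Ψ.restrictScalars K ∘ₗ E.toLinearMap) ∘ E.symm := by
      ext1 x; simp
    rw [this]
    exact hbij.comp E.symm.bijective
  exact Module.Flat.of_linearEquiv (LinearEquiv.ofBijective Ψ hΨ).symm

/-- Flatness may be tested after an injective linear change of the target coordinates. -/
lemma flat_of_linear {T : Type*} [Fintype T] [DecidableEq T] (f : T → MvPolynomial σ K)
    (A : Matrix T T K) (hA : ∀ y : T → K, A.mulVec y = 0 → y = 0)
    (h : (aeval (fun k => ∑ l, A k l • f l) :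
      MvPolynomial T K →ₐ[K] MvPolynomial σ K).toRingHom.Flat) :
    (aeval f : MvPolynomial T K →ₐ[K] MvPolynomial σ K).toRingHom.Flat := by
  have hu : IsUnit A := by
    rw [← Matrix.mulVec_injective_iff_isUnit]
    intro x y hxy
    have := hA (x - y) (by rw [Matrix.mulVec_sub]; exact sub_eq_zero.2 hxy)
    exact sub_eq_zero.1 this
  obtain ⟨u, rfl⟩ := hu
  let lin : Matrix T T K → (MvPolynomial T K →ₐ[K] MvPolynomial T K) := fun B =>
    aeval fun k => ∑ l, B k l • X l
  have hmul : ∀ B B' : Matrix T T K, (lin B').comp (lin B) = lin (B * B') := by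
    intro B B'
    ext1 k
    simp only [lin, AlgHom.comp_apply, aeval_X, map_sum, map_smul, Finset.smul_sum, smul_smul,
      Matrix.mul_apply, Finset.sum_smul]
    rw [Finset.sum_comm]
  have hone : lin 1 = AlgHom.id K _ := by
    ext1 k
    simp [lin, Matrix.one_apply, ite_smul]
  have h1 : (lin (u⁻¹ : (Matrix T T K)ˣ)).comp (lin u) = AlgHom.id K _ := by
    rw [hmul, Units.mul_inv, hone]
  have h2 : (lin u).comp (lin (u⁻¹ : (Matrix T T K)ˣ)) = AlgHom.id K _ := by
    rw [hmul, Units.inv_mul, hone]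
  have hb : Function.Bijective (lin (u⁻¹ : (Matrix T T K)ˣ)) :=
    (AlgEquiv.ofAlgHom _ _ h1 h2).bijective
  have hcomp : (aeval (fun k => ∑ l, (u : Matrix T T K) k l • f l) :
      MvPolynomial T K →ₐ[K] MvPolynomial σ K) = (aeval f).comp (lin u) := by
    ext1 k
    simp [lin]
  have hcomp' : (aeval f : MvPolynomial T K →ₐ[K] MvPolynomial σ K)
      = (aeval (fun k => ∑ l, (u : Matrix T T K) k l • f l)).comp
        (lin (u⁻¹ : (Matrix T T K)ˣ)) := by
    rw [hcomp, AlgHom.comp_assoc, h2, AlgHom.comp_id]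
  rw [hcomp']
  exact RingHom.Flat.comp (RingHom.Flat.of_bijective hb) h

end Criterion

/-- Flatness of `φ` follows from that of `θ ∘ φ` when `θ` has a linear left inverse. -/
lemma flat_of_linear_retract {R S S' : Type*} [CommRing R] [CommRing S] [CommRing S']
    (φ : R →+* S) (θ : S →+* S') (ρ : S' →+ S) (h1 : ρ 1 = 1)
    (hρ : ∀ x y, ρ (θ x * y) = x * ρ y) (h : (θ.comp φ).Flat) : φ.Flat := by
  let _ := φ.toAlgebra
  let _ := (θ.comp φ).toAlgebra
  have _ : Module.Flat R S' := h
  change Module.Flat R S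
  have hs : ∀ (a : R) (x : S), a • x = φ a * x := fun a x => Algebra.smul_def a x
  have hs' : ∀ (a : R) (x : S'), a • x = θ (φ a) * x := fun a x => Algebra.smul_def a x
  let i : S →ₗ[R] S' :=
    { toFun := θ, map_add' := map_add θ, map_smul' := by intro a x; simp [hs, hs'] }
  let r : S' →ₗ[R] S :=
    { toFun := ρ, map_add' := map_add ρ, map_smul' := by intro a x; simp [hs, hs', hρ] }
  refine Module.Flat.of_retract i r ?_
  ext x
  have := hρ x 1
  rwa [h1, mul_one, mul_one] at this

lemma flat_of_retract {R S S' : Type*} [CommRing R] [CommRing S] [CommRing S']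
    (φ : R →+* S) (θ : S →+* S') (ρ : S' →+* S) (hρ : ∀ x, ρ (θ x) = x)
    (h : (θ.comp φ).Flat) : φ.Flat :=
  flat_of_linear_retract φ θ ρ.toAddMonoidHom (map_one ρ) (by intro x y; simp [hρ]) h

/-! ### Evaluation of noncommutative polynomials -/

section Eval

variable {k : Type*} [Field k] {J : Type*} {n : ℕ}

/-- The value at a family `Y` of matrices of the noncommutative polynomial with coefficients `c`,
the words being lists of letters. -/
noncomputable def ev (c : List J →₀ k) {A : Type*} [CommRing A] [Algebra k A]
    (Y : J → Matrix (Fin n) (Fin n) A) : Matrix (Fin n) (Fin n) A :=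
  c.sum fun u x => x • (u.map Y).prod

/-- The homogeneous part of degree `j`. -/
noncomputable def hom (c : List J →₀ k) (j : ℕ) : List J →₀ k :=
  c.filter fun u => u.length = j

variable {A : Type*} [CommRing A] [Algebra k A]

lemma ev_add (c c' : List J →₀ k) (Y : J → Matrix (Fin n) (Fin n) A) :
    ev (c + c') Y = ev c Y + ev c' Y := by
  classical
  exact Finsupp.sum_add_index' (by simp) (by intro a b₁ b₂; rw [add_smul])

lemma ev_single (u : List J) (x : k) (Y : J → Matrix (Fin n) (Fin n) A) :
    ev (Finsupp.single u x) Y = x • (u.map Y).prod := by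
  simp [ev]

@[simp] lemma ev_zero (Y : J → Matrix (Fin n) (Fin n) A) : ev (0 : List J →₀ k) Y = 0 := by
  simp [ev]

lemma ev_smul (a : k) (c : List J →₀ k) (Y : J → Matrix (Fin n) (Fin n) A) :
    ev (a • c) Y = a • ev c Y := by
  rw [ev, Finsupp.sum_smul_index (by simp), ev, Finsupp.smul_sum]
  simp [mul_smul]

lemma ev_finset_sum {s : Type*} (S : Finset s) (c : s → List J →₀ k)
    (Y : J → Matrix (Fin n) (Fin n) A) :
    ev (∑ x ∈ S, c x) Y = ∑ x ∈ S, ev (c x) Y := by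
  classical
  induction S using Finset.induction_on with
  | empty => simp
  | insert a S ha ih => rw [Finset.sum_insert ha, Finset.sum_insert ha, ev_add, ih]

lemma sum_hom (c : List J →₀ k) (d : ℕ) (hd : ∀ u ∈ c.support, u.length ≤ d) :
    ∑ j ∈ Finset.range (d + 1), hom c j = c := by
  classical
  ext u
  rw [Finsupp.finsetSum_apply]
  simp only [hom, Finsupp.filter_apply]
  rw [Finset.sum_ite_eq]
  split_ifs with h
  · rfl
  · by_contra h0
    exact h (Finset.mem_range.2 (Nat.lt_succ_of_le (hd u (Finsupp.mem_support_iff.2 (Ne.symm h0)))))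

lemma ev_eq_sum_hom (c : List J →₀ k) (d : ℕ) (hd : ∀ u ∈ c.support, u.length ≤ d)
    (Y : J → Matrix (Fin n) (Fin n) A) :
    ev c Y = ∑ j ∈ Finset.range (d + 1), ev (hom c j) Y := by
  rw [← ev_finset_sum, sum_hom c d hd]

lemma mem_hom_support {c : List J →₀ k} {j : ℕ} {u : List J} (h : u ∈ (hom c j).support) :
    u.length = j ∧ u ∈ c.support := by
  classical
  rw [hom, Finsupp.support_filter, Finset.mem_filter] at h
  exact ⟨h.2, h.1⟩

lemma ev_map {A' : Type*} [CommRing A'] [Algebra k A'] (f : A →ₐ[k] A') (c : List J →₀ k)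
    (Y : J → Matrix (Fin n) (Fin n) A) :
    (ev c Y).map f = ev c fun j => (Y j).map f := by
  have hl : ∀ u : List J, (u.map Y).prod.map f = (u.map fun j => (Y j).map f).prod := by
    intro u
    have := map_list_prod f.mapMatrix (u.map Y)
    simpa [Function.comp_def] using this
  have h := map_finsuppSum f.mapMatrix c fun u x => x • (u.map Y).prod
  simp only [map_smul] at h
  rw [ev, ev, ← AlgHom.mapMatrix_apply, h]
  simp only [AlgHom.mapMatrix_apply, hl]

lemma ev_conj {g g' : Matrix (Fin n) (Fin n) A} (hg : g' * g = 1) (hg' : g * g' = 1)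
    (c : List J →₀ k) (Y : J → Matrix (Fin n) (Fin n) A) :
    ev c (fun j => g * Y j * g') = g * ev c Y * g' := by
  have hl : ∀ u : List J, (u.map fun j => g * Y j * g').prod = g * (u.map Y).prod * g' := by
    intro u
    induction u with
    | nil => simp [hg']
    | cons j u ih =>
      rw [List.map_cons, List.prod_cons, ih, List.map_cons, List.prod_cons]
      calc g * Y j * g' * (g * (List.map Y u).prod * g')
          = g * Y j * (g' * g) * (List.map Y u).prod * g' := by simp only [mul_assoc]
        _ = _ := by rw [hg]; simp only [mul_assoc, one_mul]
  rw [ev, ev, Finsupp.sum, Finsupp.sum, Finset.mul_sum, Finset.sum_mul]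
  refine Finset.sum_congr rfl fun u _ => ?_
  rw [hl]; simp

lemma ev_apply (c : List J →₀ k) (Y : J → Matrix (Fin n) (Fin n) A) (a b : Fin n) :
    ev c Y a b = ∑ u ∈ c.support, c u • (u.map Y).prod a b := by
  rw [ev, Finsupp.sum, Matrix.sum_apply]
  rfl

lemma ev_hom_smul (c : List J →₀ k) (j : ℕ) (s : k) (Y : J → Matrix (Fin n) (Fin n) k) :
    ev (hom c j) (fun i => s • Y i) = s ^ j • ev (hom c j) Y := by
  have hl : ∀ u : List J, (u.map fun i => s • Y i).prod = s ^ u.length • (u.map Y).prod := by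
    intro u
    induction u with
    | nil => simp
    | cons i u ih =>
      rw [List.map_cons, List.prod_cons, ih, List.map_cons, List.prod_cons, List.length_cons,
        pow_succ, smul_mul_smul_comm, mul_comm s]
  rw [ev, ev, Finsupp.sum, Finsupp.sum, Finset.smul_sum]
  refine Finset.sum_congr rfl fun u hu => ?_
  rw [hl, (mem_hom_support hu).1, smul_comm]

end Eval

section Walks

variable {k : Type*} [Field k] {J : Type*} {n : ℕ} {σ : Type*}

/-- The sum of the weights of the steps of the walk `v 0, v 1, …` labelled by the word `u`. -/
def walkSum (w : J → Fin n → Fin n → ℤ) (u : List J) (v : ℕ → Fin n) : ℤ :=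
  ∑ t : Fin u.length, w (u.get t) (v t) (v (t + 1))

/-- The exponent of the product of the variables met by the walk `v` labelled by `u`. -/
noncomputable def walkExp (emb : J → Fin n → Fin n → σ) (u : List J) (v : ℕ → Fin n) : σ →₀ ℕ :=
  ∑ t : Fin u.length, Finsupp.single (emb (u.get t) (v t) (v (t + 1))) 1

lemma walkSum_cons (w : J → Fin n → Fin n → ℤ) (j : J) (u : List J) (v : ℕ → Fin n) :
    walkSum w (j :: u) v = w j (v 0) (v 1) + walkSum w u fun t => v (t + 1) := by
  simp only [walkSum, List.length_cons]
  rw [Fin.sum_univ_succ]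
  rfl

lemma walkExp_cons (emb : J → Fin n → Fin n → σ) (j : J) (u : List J) (v : ℕ → Fin n) :
    walkExp emb (j :: u) v
      = Finsupp.single (emb j (v 0) (v 1)) 1 + walkExp emb u fun t => v (t + 1) := by
  simp only [walkExp, List.length_cons]
  rw [Fin.sum_univ_succ]
  rfl

lemma wt_walkExp (emb : J → Fin n → Fin n → σ) (W : σ → ℤ) (u : List J) (v : ℕ → Fin n) :
    wt W (walkExp emb u v) = walkSum (fun j x y => W (emb j x y)) u v := by
  simp [walkExp, walkSum, wt, Finsupp.weight_single]

variable {W : σ → ℤ} {emb : J → Fin n → Fin n → σ}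
  {Y : J → Matrix (Fin n) (Fin n) (MvPolynomial σ k)} (hY : ∀ j x y, Y j x y = X (emb j x y))
include hY

/-- An entry of a product of matrices of variables is a sum over walks; so its weight is
bounded by a common bound for the weights of the walks. -/
lemma prod_mem_WLe (u : List J) (a b : Fin n) (N : ℤ)
    (h : ∀ v : ℕ → Fin n, v 0 = a → v u.length = b →
      walkSum (fun j x y => W (emb j x y)) u v ≤ N) :
    (u.map Y).prod a b ∈ WLe k W N := by
  classical
  induction u generalizing a N with
  | nil =>
    rw [List.map_nil, List.prod_nil, Matrix.one_apply]
    split_ifs with hab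
    · refine C_mem_WLe 1 ?_
      simpa [walkSum] using h (fun _ => a) rfl hab
    · exact zero_mem _
  | cons j u ih =>
    rw [List.map_cons, List.prod_cons, Matrix.mul_apply]
    refine sum_mem fun x _ => ?_
    have h1 : Y j a x ∈ WLe k W (W (emb j a x)) := by rw [hY]; exact X_mem_WLe le_rfl
    have h2 := ih x (N - W (emb j a x)) (by
      intro v hv0 hv
      have := h (fun t => Nat.casesOn t a v) rfl hv
      rw [walkSum_cons] at this
      change W (emb j a (v 0)) + walkSum _ u v ≤ N at this
      rw [hv0] at this
      lia)
    have := mul_mem_WLe h1 h2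
    rwa [add_sub_cancel] at this

/-- If one walk is strictly heavier than all others with the same label and the same ends, it
gives the leading term of the entry. -/
lemma prod_lead (u : List J) (p : ℕ → Fin n) (N : ℤ)
    (hp : walkSum (fun j x y => W (emb j x y)) u p = N)
    (h : ∀ v : ℕ → Fin n, v 0 = p 0 → v u.length = p u.length →
      (∀ t ≤ u.length, v t = p t) ∨ walkSum (fun j x y => W (emb j x y)) u v ≤ N - 1) :
    (u.map Y).prod (p 0) (p u.length) - monomial (walkExp emb u p) 1 ∈ WLe k W (N - 1) := by
  classical
  induction u generalizing p N with
  | nil => simp [walkExp]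
  | cons j u ih =>
    rw [walkSum_cons] at hp
    have hcons : ∀ v : ℕ → Fin n, walkSum (fun j x y => W (emb j x y)) (j :: u)
        (fun t => Nat.casesOn t (p 0) v)
        = W (emb j (p 0) (v 0)) + walkSum (fun j x y => W (emb j x y)) u v := by
      intro v; rw [walkSum_cons]; rfl
    have e : (List.map Y (j :: u)).prod (p 0) (p (j :: u).length)
        - monomial (walkExp emb (j :: u) p) 1
        = Y j (p 0) (p 1) * ((u.map Y).prod (p 1) (p (u.length + 1))
            - monomial (walkExp emb u fun t => p (t + 1)) 1)
          + ∑ x ∈ Finset.univ.erase (p 1),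
            Y j (p 0) x * (u.map Y).prod x (p (u.length + 1)) := by
      rw [List.map_cons, List.prod_cons, Matrix.mul_apply,
        ← Finset.add_sum_erase _ _ (Finset.mem_univ (p 1)), walkExp_cons, mul_sub]
      have : Y j (p 0) (p 1) * monomial (walkExp emb u fun t => p (t + 1)) 1
          = monomial (Finsupp.single (emb j (p 0) (p 1)) 1
              + walkExp emb u fun t => p (t + 1)) 1 := by
        rw [hY, X, monomial_mul, one_mul]
      rw [this, List.length_cons]
      ring
    rw [e]
    refine add_mem ?_ (sum_mem fun x hx => ?_)
    · have h1 : Y j (p 0) (p 1) ∈ WLe k W (W (emb j (p 0) (p 1))) := by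
        rw [hY]; exact X_mem_WLe le_rfl
      have h2 := ih (fun t => p (t + 1)) (N - W (emb j (p 0) (p 1))) (by lia) (by
        intro v hv0 hv
        rcases h (fun t => Nat.casesOn t (p 0) v) rfl hv with h | h
        · left
          intro t ht
          exact h (t + 1) (Nat.succ_le_succ ht)
        · right
          rw [hcons, hv0] at h
          change W (emb j (p 0) (p 1)) + _ ≤ _ at h
          lia)
      have := mul_mem_WLe h1 h2
      rwa [show W (emb j (p 0) (p 1)) + (N - W (emb j (p 0) (p 1)) - 1) = N - 1 by ring] at this
    · have h1 : Y j (p 0) x ∈ WLe k W (W (emb j (p 0) x)) := by rw [hY]; exact X_mem_WLe le_rfl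
      have h2 := prod_mem_WLe (k := k) (W := W) hY u x (p (u.length + 1))
        (N - 1 - W (emb j (p 0) x)) (by
          intro v hv0 hv
          rcases h (fun t => Nat.casesOn t (p 0) v) rfl hv with h | h
          · have := h 1 (by simp)
            change v 0 = p 1 at this
            exact absurd (hv0.symm.trans this) (Finset.ne_of_mem_erase hx)
          · rw [hcons, hv0] at h
            lia)
      have := mul_mem_WLe h1 h2
      rwa [add_sub_cancel] at this

lemma ev_mem_WLe (c : List J →₀ k) (a b : Fin n) (N : ℤ)
    (h : ∀ u ∈ c.support, ∀ v : ℕ → Fin n, v 0 = a → v u.length = b →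
      walkSum (fun j x y => W (emb j x y)) u v ≤ N) :
    ev c Y a b ∈ WLe k W N := by
  rw [ev_apply]
  exact sum_mem fun u hu => Submodule.smul_mem _ _ (prod_mem_WLe hY u a b N (h u hu))

/-- If every labelled walk from `p 0` to the end of `p` other than the one along `p` labelled by `ω`
is lighter than that one, then it gives the leading monomial of the entry. -/
lemma ev_lead (c : List J →₀ k) (ω : List J) (hω : ω ∈ c.support) (p : ℕ → Fin n)
    (h : ∀ u ∈ c.support, ∀ v : ℕ → Fin n, v 0 = p 0 → v u.length = p ω.length →
      (u = ω ∧ ∀ t ≤ ω.length, v t = p t) ∨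
        walkSum (fun j x y => W (emb j x y)) u v
          ≤ walkSum (fun j x y => W (emb j x y)) ω p - 1) :
    Lead W (walkExp emb ω p) (ev c Y (p 0) (p ω.length)) := by
  classical
  refine ⟨c ω, Finsupp.mem_support_iff.1 hω, ?_⟩
  rw [ev_apply, ← Finset.add_sum_erase _ _ hω, add_sub_right_comm, wt_walkExp]
  refine add_mem ?_ (sum_mem fun u hu => Submodule.smul_mem _ _ ?_)
  · have : monomial (walkExp emb ω p) (c ω) = c ω • monomial (walkExp emb ω p) (1 : k) := by
      rw [smul_monomial]; simp
    rw [this, ← smul_sub]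
    refine Submodule.smul_mem _ _ (prod_lead hY ω p _ rfl fun v hv0 hv => ?_)
    rcases h ω hω v hv0 hv with h | h
    · exact Or.inl h.2
    · exact Or.inr h
  · refine prod_mem_WLe hY u _ _ _ fun v hv0 hv => ?_
    rcases h u (Finset.mem_of_mem_erase hu) v hv0 hv with h | h
    · exact absurd h.1 (Finset.ne_of_mem_erase hu)
    · exact h

end Walks

/-! ### Evaluation along a line -/

section Line

variable {k : Type*} [Field k] {J : Type*} {n : ℕ} {σ : Type*}

variable {W : σ → ℤ} {s : σ} {Y : J → Matrix (Fin n) (Fin n) (MvPolynomial σ k)}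
  {v : J → Matrix (Fin n) (Fin n) k}

/-- Substituting `t v + (terms of weight `0`)` into a word of length `ℓ` gives `t ^ ℓ` times the
value at `v`, up to terms of lower degree in `t`. -/
lemma prod_line (hs : 0 ≤ W s)
    (hY : ∀ j x y, Y j x y - X s * C (v j x y) ∈ WLe k W 0) (u : List J) (a b : Fin n) :
    (u.map Y).prod a b - X s ^ u.length * C ((u.map v).prod a b)
      ∈ WLe k W (W s * (u.length - 1)) := by
  classical
  have hC : ∀ (N : ℤ) (x : k), 0 ≤ N → (C x : MvPolynomial σ k) ∈ WLe k W N :=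
    fun N x h => C_mem_WLe x h
  have hX : ∀ ℓ : ℕ, (X s ^ ℓ : MvPolynomial σ k) ∈ WLe k W (W s * ℓ) := by
    intro ℓ
    rw [X_pow_eq_monomial]
    refine monomial_mem_WLe _ ?_
    rw [wt, Finsupp.weight_single]
    simp [mul_comm]
  induction u generalizing a with
  | nil =>
    have : (List.map Y []).prod a b - X s ^ ([] : List J).length * C ((List.map v []).prod a b)
        = 0 := by
      simp only [List.map_nil, List.prod_nil, List.length_nil, pow_zero, one_mul,
        Matrix.one_apply]
      split_ifs <;> simp
    rw [this]; exact zero_mem _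
  | cons j u ih =>
    simp only [List.map_cons, List.prod_cons, Matrix.mul_apply, List.length_cons]
    rw [map_sum, Finset.mul_sum, ← Finset.sum_sub_distrib]
    refine sum_mem fun x _ => ?_
    set P := (List.map Y u).prod x b
    set q := (List.map v u).prod x b
    have e : Y j a x * P - X s ^ (u.length + 1) * C (v j a x * q)
        = Y j a x * (P - X s ^ u.length * C q)
          + (Y j a x - X s * C (v j a x)) * (X s ^ u.length * C q) := by
      rw [C_mul]; ring
    rw [e]
    have h1 : Y j a x ∈ WLe k W (W s) := by
      have h3 : X s * C (v j a x) ∈ WLe k W (W s) := by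
        have := mul_mem_WLe (X_mem_WLe (K := k) (W := W) (s := s) le_rfl)
          (hC 0 (v j a x) le_rfl)
        rwa [add_zero] at this
      have := add_mem (WLe_mono W hs (hY j a x)) h3
      rwa [sub_add_cancel] at this
    have h2 := mul_mem_WLe h1 (ih x)
    have h4 := mul_mem_WLe (hY j a x) (mul_mem_WLe (hX u.length) (hC 0 q le_rfl))
    refine add_mem (WLe_mono W (le_of_eq ?_) h2) (WLe_mono W (le_of_eq ?_) h4) <;>
      · push_cast; ring

/-- Along a line in direction `v` with parameter the variable `s`, the leading term in `s` of a
homogeneous part of degree `j` is its value at `v` times `s ^ j`. -/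
lemma ev_hom_line (hs : 0 ≤ W s)
    (hY : ∀ j x y, Y j x y - X s * C (v j x y) ∈ WLe k W 0) (c : List J →₀ k) (j : ℕ)
    (a b : Fin n) :
    ev (hom c j) Y a b - X s ^ j * C (ev (hom c j) v a b) ∈ WLe k W (W s * (j - 1)) := by
  have : ev (hom c j) Y a b - X s ^ j * C (ev (hom c j) v a b)
      = ∑ u ∈ (hom c j).support, hom c j u •
          ((u.map Y).prod a b - X s ^ u.length * C ((u.map v).prod a b)) := by
    rw [ev_apply, ev_apply, map_sum, Finset.mul_sum, ← Finset.sum_sub_distrib]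
    refine Finset.sum_congr rfl fun u hu => ?_
    rw [(mem_hom_support hu).1, smul_sub, smul_eq_mul, C_mul, MvPolynomial.smul_eq_C_mul,
      MvPolynomial.smul_eq_C_mul]
    ring
  rw [this]
  refine sum_mem fun u hu => Submodule.smul_mem _ _ ?_
  have := prod_line hs hY u a b
  rw [(mem_hom_support hu).1] at this ⊢
  exact this

/-- A linear combination, with coefficients `f`, of the entries. -/
noncomputable def lin {A : Type*} [CommRing A] [Algebra k A] (f : Matrix (Fin n) (Fin n) k) :
    Matrix (Fin n) (Fin n) A →ₗ[k] A where
  toFun M := ∑ x, ∑ y, f x y • M x y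
  map_add' M N := by simp [smul_add, Finset.sum_add_distrib]
  map_smul' a M := by simp [Finset.smul_sum, smul_comm a]

lemma lin_apply {A : Type*} [CommRing A] [Algebra k A] (f : Matrix (Fin n) (Fin n) k)
    (M : Matrix (Fin n) (Fin n) A) : lin f M = ∑ x, ∑ y, f x y • M x y := rfl

/-- If the functional `f` kills all homogeneous parts of degree `> E`, then, along a line, the
functional has leading term in degree at most `E`. -/
lemma lin_line (hs : 0 ≤ W s)
    (hY : ∀ j x y, Y j x y - X s * C (v j x y) ∈ WLe k W 0) (c : List J →₀ k) (d : ℕ)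
    (hd : ∀ u ∈ c.support, u.length ≤ d) (f : Matrix (Fin n) (Fin n) k) (E : ℕ)
    (hE : ∀ j, E < j → lin f (ev (hom c j) Y) = 0) (hEd : E ≤ d) :
    lin f (ev c Y) - X s ^ E * C (lin f (ev (hom c E) v)) ∈ WLe k W (W s * (E - 1)) := by
  classical
  have key : ∀ j : ℕ, lin f (ev (hom c j) Y) - X s ^ j * C (lin f (ev (hom c j) v))
      ∈ WLe k W (W s * (j - 1)) := by
    intro j
    have : lin f (ev (hom c j) Y) - X s ^ j * C (lin f (ev (hom c j) v))
        = ∑ x, ∑ y, f x y • (ev (hom c j) Y x y - X s ^ j * C (ev (hom c j) v x y)) := by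
      simp only [lin_apply, map_sum, Finset.mul_sum, ← Finset.sum_sub_distrib]
      refine Finset.sum_congr rfl fun x _ => Finset.sum_congr rfl fun y _ => ?_
      rw [smul_eq_mul, C_mul, smul_sub, MvPolynomial.smul_eq_C_mul, MvPolynomial.smul_eq_C_mul]
      ring
    rw [this]
    exact sum_mem fun x _ => sum_mem fun y _ => Submodule.smul_mem _ _ (ev_hom_line hs hY c j x y)
  rw [ev_eq_sum_hom c d hd, map_sum,
    ← Finset.add_sum_erase _ _ (Finset.mem_range.2 (Nat.lt_succ_of_le hEd)), add_sub_right_comm]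
  refine add_mem (key E) (sum_mem fun j hj => ?_)
  rcases lt_or_gt_of_ne (Finset.ne_of_mem_erase hj) with hlt | hlt
  · have h1 : (X s ^ j * C (lin f (ev (hom c j) v)) : MvPolynomial σ k) ∈ WLe k W (W s * j) := by
      rw [X_pow_eq_monomial, mul_comm (monomial _ _), C_mul_monomial]
      refine monomial_mem_WLe _ ?_
      rw [wt, Finsupp.weight_single]
      simp [mul_comm]
    have h2 := add_mem (WLe_mono W (by nlinarith) (key j)) h1
    rw [sub_add_cancel] at h2
    refine WLe_mono W ?_ h2
    have : (j : ℤ) ≤ E - 1 := by lia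
    exact mul_le_mul_of_nonneg_left this hs
  · rw [hE j hlt]; exact zero_mem _

end Line

/-! ### Identities between generic matrices from identities on points -/

section Generic

variable {k : Type*} [Field k] [Infinite k] {J : Type*} {n : ℕ} {σ : Type*}

/-- A functional of a noncommutative polynomial which vanishes on all matrices over the field
vanishes on matrices over any polynomial ring. -/
lemma lin_ev_eq_zero (f : Matrix (Fin n) (Fin n) k) (c : List J →₀ k)
    (h : ∀ Y : J → Matrix (Fin n) (Fin n) k, lin f (ev c Y) = 0)
    (Y : J → Matrix (Fin n) (Fin n) (MvPolynomial σ k)) : lin f (ev c Y) = 0 := by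
  refine MvPolynomial.funext fun x => ?_
  have h1 := h fun j => (Y j).map (aeval x : MvPolynomial σ k →ₐ[k] k)
  rw [← ev_map] at h1
  rw [map_zero, ← h1, lin_apply, lin_apply]
  simp [smul_eval]

end Generic

/-! ### Descent from the algebraic closure -/

section Descent

variable {K k σ T : Type*} [Field K] [Field k] [Algebra K k]

/-- Flatness descends along an extension of the ground field. -/
lemma flat_descent (φ : MvPolynomial T K →+* MvPolynomial σ K)
    (ψ : MvPolynomial T k →+* MvPolynomial σ k)
    (h : (MvPolynomial.map (algebraMap K k)).comp φ = ψ.comp (MvPolynomial.map (algebraMap K k)))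
    (hψ : ψ.Flat) : φ.Flat := by
  classical
  obtain ⟨l, hl⟩ := (Algebra.linearMap K k).exists_leftInverse_of_injective
    (LinearMap.ker_eq_bot.2 (algebraMap K k).injective)
  have hl' : ∀ x, l (algebraMap K k x) = x := fun x => LinearMap.congr_fun hl x
  let ρ : MvPolynomial σ k →+ MvPolynomial σ K :=
    ((basisMonomials σ K).repr.symm.toAddEquiv.toAddMonoidHom.comp
      (Finsupp.mapRange.addMonoidHom l.toAddMonoidHom)).comp
      (basisMonomials σ k).repr.toAddEquiv.toAddMonoidHom
  have hρ : ∀ p β, coeff β (ρ p) = l (coeff β p) := by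
    intro p β
    have h1 : (basisMonomials σ K).repr (ρ p)
        = Finsupp.mapRange.addMonoidHom l.toAddMonoidHom ((basisMonomials σ k).repr p) :=
      (basisMonomials σ K).repr.apply_symm_apply _
    calc coeff β (ρ p) = (basisMonomials σ K).repr (ρ p) β := rfl
      _ = _ := by rw [h1]; rfl
  have hflat : (MvPolynomial.map (algebraMap K k) : MvPolynomial T K →+* _).Flat := by
    let _ : Algebra (MvPolynomial T K) (MvPolynomial T k) := algebraMvPolynomial
    have : Algebra.IsPushout K (MvPolynomial T K) k (MvPolynomial T k) := inferInstance
    exact Module.Flat.isBaseChange K (MvPolynomial T K) k (MvPolynomial T k) this.out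
  refine flat_of_linear_retract φ (MvPolynomial.map (algebraMap K k)) ρ ?_ ?_ ?_
  · ext β
    rw [hρ, coeff_one, coeff_one]
    split_ifs
    · rw [← map_one (algebraMap K k), hl']
    · simp
  · intro x y
    ext β
    rw [hρ, coeff_mul, coeff_mul, map_sum]
    refine Finset.sum_congr rfl fun γ _ => ?_
    rw [coeff_map, ← Algebra.smul_def, map_smul, hρ, smul_eq_mul]
  · rw [h]
    exact hflat.comp hψ

end Descent

/-! ### Grouping the blocks -/

section Bundles

/-- If `A` is large, one can find disjoint bundles of `s` elements of `A`, one for each element of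
`R`, such that the label `ℓ` is constant on every bundle. -/
lemma exists_bundles {ι L R : Type*} [DecidableEq ι] [Fintype L] [DecidableEq L]
    [Fintype R] [DecidableEq R] (ℓ : ι → L) (A : Finset ι) (s : ℕ)
    (h : (Fintype.card R + Fintype.card L) * s ≤ A.card) :
    ∃ β : R → Fin s → ι, (∀ x y x' y', β x y = β x' y' → x = x' ∧ y = y') ∧
      (∀ x y, β x y ∈ A) ∧ ∀ x y y', ℓ (β x y) = ℓ (β x y') := by
  classical
  rcases Nat.eq_zero_or_pos s with rfl | hs
  · exact ⟨fun _ y => y.elim0, fun _ y => y.elim0, fun _ y => y.elim0, fun _ y => y.elim0⟩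
  rcases isEmpty_or_nonempty R with hR | hR
  · exact ⟨fun x => hR.elim x, fun x => hR.elim x, fun x => hR.elim x, fun x => hR.elim x⟩
  obtain ⟨a, -⟩ : A.Nonempty := by
    rw [← Finset.card_pos]
    have : 0 < Fintype.card R := Fintype.card_pos
    nlinarith
  have key : ∀ S : Finset R, ∃ β : R → Fin s → ι,
      (∀ x ∈ S, ∀ y, ∀ x' ∈ S, ∀ y', β x y = β x' y' → x = x' ∧ y = y') ∧
      (∀ x ∈ S, ∀ y, β x y ∈ A) ∧ ∀ x ∈ S, ∀ y y', ℓ (β x y) = ℓ (β x y') := by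
    intro S
    induction S using Finset.induction_on with
    | empty =>
      exact ⟨fun _ _ => a, by simp, by simp, by simp⟩
    | insert r S hr ih =>
      obtain ⟨β, h1, h2, h3⟩ := ih
      let U : Finset ι := (S ×ˢ Finset.univ).image fun p => β p.1 p.2
      have hU : U.card ≤ S.card * s := by
        refine Finset.card_image_le.trans ?_
        rw [Finset.card_product, Finset.card_univ, Fintype.card_fin]
      have hS : S.card + 1 ≤ Fintype.card R := by
        rw [← Finset.card_insert_of_notMem hr]; exact Finset.card_le_univ _
      have hAU : A.card - U.card ≤ (A \ U).card := Finset.le_card_sdiff _ _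
      have hbig : Fintype.card L * (s - 1) < (A \ U).card := by
        obtain ⟨s, rfl⟩ : ∃ s', s = s' + 1 := ⟨s - 1, by lia⟩
        obtain ⟨q, hq⟩ := Nat.exists_eq_add_of_le hS
        have : (S.card + 1 + q + Fintype.card L) * (s + 1) = S.card * (s + 1) + (s + 1)
          + q * (s + 1) + Fintype.card L * s + Fintype.card L := by ring
        rw [hq, this] at h
        rw [Nat.add_sub_cancel]
        lia
      obtain ⟨y, -, hy⟩ := Finset.exists_lt_card_fiber_of_mul_lt_card_of_maps_to
        (t := (Finset.univ : Finset L)) (f := ℓ) (fun a _ => Finset.mem_univ _)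
        (by rwa [Finset.card_univ])
      set G := (A \ U).filter fun x => ℓ x = y
      obtain ⟨g⟩ : Nonempty (Fin s ↪ G) := Function.Embedding.nonempty_of_card_le (by
        rw [Fintype.card_fin, Fintype.card_coe]; lia)
      have hg : ∀ z, (g z : ι) ∈ A ∧ (g z : ι) ∉ U ∧ ℓ (g z) = y := by
        intro z
        have := (g z).2
        rw [Finset.mem_filter, Finset.mem_sdiff] at this
        exact ⟨this.1.1, this.1.2, this.2⟩
      have hβU : ∀ x ∈ S, ∀ z, β x z ∈ U := fun x hx z =>
        Finset.mem_image.2 ⟨(x, z), by simp [hx], rfl⟩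
      have hne : ∀ x ∈ S, x ≠ r := fun x hx h => hr (h ▸ hx)
      refine ⟨Function.update β r fun z => g z, ?_, ?_, ?_⟩
      · intro x hx z x' hx' z'
        rcases Finset.mem_insert.1 hx with ex | hx <;>
          rcases Finset.mem_insert.1 hx' with ex' | hx'
        · rw [ex, ex', Function.update_self]
          intro h
          exact ⟨rfl, g.injective (Subtype.ext h)⟩
        · rw [ex, Function.update_self, Function.update_of_ne (hne _ hx')]
          intro h
          exact absurd (h ▸ hβU x' hx' z') (hg z).2.1
        · rw [ex', Function.update_self, Function.update_of_ne (hne _ hx)]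
          intro h
          exact absurd (h ▸ hβU x hx z) (hg z').2.1
        · rw [Function.update_of_ne (hne _ hx), Function.update_of_ne (hne _ hx')]
          exact h1 x hx z x' hx' z'
      · intro x hx z
        rcases Finset.mem_insert.1 hx with rfl | hx
        · rw [Function.update_self]; exact (hg z).1
        · rw [Function.update_of_ne (hne _ hx)]; exact h2 x hx z
      · intro x hx z z'
        rcases Finset.mem_insert.1 hx with rfl | hx
        · rw [Function.update_self, (hg z).2.2, (hg z').2.2]
        · rw [Function.update_of_ne (hne _ hx)]; exact h3 x hx z z'
  obtain ⟨β, h1, h2, h3⟩ := key Finset.univ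
  exact ⟨β, fun x y x' y' => h1 x (Finset.mem_univ _) y x' (Finset.mem_univ _) y',
    fun x y => h2 x (Finset.mem_univ _) y, fun x y y' => h3 x (Finset.mem_univ _) y y'⟩

end Bundles

/-! ### Degrees of the homogeneous parts -/

section Degrees

variable {k : Type*} [Field k] {J : Type*} {n : ℕ}

/-- The image of `c` is not contained in a coset of a proper subspace. -/
def Generating (n : ℕ) (c : List J →₀ k) : Prop :=
  ∀ (W : Submodule k (Matrix (Fin n) (Fin n) k)) (c₀ : Matrix (Fin n) (Fin n) k),
    (∀ Y : J → Matrix (Fin n) (Fin n) k, ev c Y - c₀ ∈ W) → W = ⊤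

/-- For a proper subspace `W` there is a largest degree `E ≥ 1` in which the homogeneous part takes
a value outside of `W`. -/
lemma exists_degree {c : List J →₀ k} (hc : Generating n c) {d : ℕ}
    (hd : ∀ u ∈ c.support, u.length ≤ d) (W : Submodule k (Matrix (Fin n) (Fin n) k))
    (hW : W ≠ ⊤) :
    ∃ E, 1 ≤ E ∧ E ≤ d ∧ (∃ Y : J → Matrix (Fin n) (Fin n) k, ev (hom c E) Y ∉ W) ∧
      ∀ j, E < j → ∀ Y : J → Matrix (Fin n) (Fin n) k, ev (hom c j) Y ∈ W := by
  classical
  have hbig : ∀ j, d < j → hom c j = 0 := by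
    intro j hj
    ext u
    rw [hom, Finsupp.filter_apply]
    split_ifs with h
    · by_contra h0
      have := hd u (Finsupp.mem_support_iff.2 h0)
      lia
    · rfl
  have hex : ∃ E, 1 ≤ E ∧ ∃ Y : J → Matrix (Fin n) (Fin n) k, ev (hom c E) Y ∉ W := by
    by_contra hcon
    push Not at hcon
    refine hW (hc W (ev (hom c 0) 0) fun Y => ?_)
    rw [ev_eq_sum_hom c d hd, Finset.sum_range_succ', add_sub_assoc]
    have h0 : ev (hom c 0) Y = ev (hom c 0) 0 := by
      rw [ev, ev]
      refine Finsupp.sum_congr fun u hu => ?_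
      rw [List.length_eq_zero_iff.1 (mem_hom_support hu).1]
      simp
    rw [h0, sub_self, add_zero]
    exact sum_mem fun j _ => hcon (j + 1) (by lia) Y
  let P : ℕ → Prop := fun E => 1 ≤ E ∧ ∃ Y : J → Matrix (Fin n) (Fin n) k, ev (hom c E) Y ∉ W
  have hPd : ∀ E, P E → E ≤ d := by
    rintro E ⟨-, Y, hY⟩
    by_contra h
    rw [hbig E (by lia), ev_zero] at hY
    exact hY (zero_mem _)
  obtain ⟨E₀, hE₀⟩ := hex
  have hspec : P (Nat.findGreatest P d) := Nat.findGreatest_spec (hPd E₀ hE₀) hE₀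
  refine ⟨Nat.findGreatest P d, hspec.1, Nat.findGreatest_le d, hspec.2, fun j hj Y => ?_⟩
  by_contra h
  have hj' : P j := ⟨by lia, Y, h⟩
  exact Nat.findGreatest_is_greatest hj (hPd j hj') hj'

/-- The largest degree in which the trace does not vanish identically. -/
lemma exists_trace_degree [CharZero k] (hn : 1 ≤ n) {c : List J →₀ k} (hc : Generating n c)
    {d : ℕ} (hd : ∀ u ∈ c.support, u.length ≤ d) :
    ∃ E, 1 ≤ E ∧ E ≤ d ∧
      (∃ Y : J → Matrix (Fin n) (Fin n) k, (ev (hom c E) Y).trace ≠ 0) ∧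
      ∀ j, E < j → ∀ Y : J → Matrix (Fin n) (Fin n) k, (ev (hom c j) Y).trace = 0 := by
  have hW : LinearMap.ker (Matrix.traceLinearMap (Fin n) k k) ≠ ⊤ := by
    intro h
    have : (1 : Matrix (Fin n) (Fin n) k) ∈ LinearMap.ker (Matrix.traceLinearMap (Fin n) k k) := by
      rw [h]; trivial
    rw [LinearMap.mem_ker, Matrix.traceLinearMap_apply, Matrix.trace_one, Fintype.card_fin] at this
    have : n = 0 := by exact_mod_cast this
    lia
  simpa [LinearMap.mem_ker] using exists_degree hc hd _ hW

lemma trace_eq_lin {A : Type*} [CommRing A] [Algebra k A] (M : Matrix (Fin n) (Fin n) A) :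
    M.trace = lin (1 : Matrix (Fin n) (Fin n) k) M := by
  classical
  rw [lin_apply, Matrix.trace]
  refine Finset.sum_congr rfl fun x _ => ?_
  simp [Matrix.one_apply]

end Degrees

/-! ### Flatness from functionals after a substitution -/

section Subst

/-- The matrix of variables belonging to the letter `j` of the block `i`. -/
noncomputable def gen (k : Type*) [Field k] {ι : Type*} (J : ι → Type*) {n : ℕ} (i : ι)
    (j : J i) :
    Matrix (Fin n) (Fin n) (MvPolynomial ((Σ i, J i) × (Fin n × Fin n)) k) :=
  Matrix.of fun x y => X (⟨i, j⟩, (x, y))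

/-- Flatness may be tested after a substitution `Z` of the generic matrices which has a left
inverse `ρ`, and by means of a complete set of linear functionals, each of which has a leading
monomial, in pairwise disjoint sets of variables. -/
lemma flat_of_functionals {k : Type*} [Field k] {n : ℕ} {ι : Type*} [Fintype ι]
    {J : ι → Type*} (c : ∀ i, List (J i) →₀ k) {σ : Type*}
    (Z : ∀ i, J i → Matrix (Fin n) (Fin n) (MvPolynomial σ k))
    (ρ : MvPolynomial σ k →ₐ[k] MvPolynomial ((Σ i, J i) × (Fin n × Fin n)) k)
    (hρ : ∀ i j, (Z i j).map ρ = gen k J i j)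
    {T : Type*} (e : T ≃ Fin n × Fin n) (f : T → Matrix (Fin n) (Fin n) k)
    (hf : ∀ M : Matrix (Fin n) (Fin n) k, (∀ t, lin (f t) M = 0) → M = 0)
    {W : σ → ℤ} (hW : ∀ s, 0 ≤ W s) (μ : T → σ →₀ ℕ) (hμ : ∀ t, μ t ≠ 0)
    (hdisj : ∀ t t', t ≠ t' → Disjoint (μ t).support (μ t').support)
    (hlead : ∀ t, Lead W (μ t) (∑ i, lin (f t) (ev (c i) (Z i)))) :
    (aeval (fun p : Fin n × Fin n => (∑ i, ev (c i) (gen k J i)) p.1 p.2) :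
      MvPolynomial (Fin n × Fin n) k →ₐ[k]
        MvPolynomial ((Σ i, J i) × (Fin n × Fin n)) k).toRingHom.Flat := by
  classical
  let θ : MvPolynomial ((Σ i, J i) × (Fin n × Fin n)) k →ₐ[k] MvPolynomial σ k :=
    aeval fun x => Z x.1.1 x.1.2 x.2.1 x.2.2
  have hρθ : ρ.comp θ = AlgHom.id k _ := by
    ext1 x
    obtain ⟨⟨i, j⟩, a, b⟩ := x
    have := congrFun (congrFun (hρ i j) a) b
    simpa [θ, gen] using this
  refine flat_of_retract _ θ.toRingHom ρ.toRingHom (fun x => DFunLike.congr_fun hρθ x) ?_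
  have hcomp : (θ.toRingHom.comp (aeval (fun p : Fin n × Fin n =>
      (∑ i, ev (c i) (gen k J i)) p.1 p.2) : MvPolynomial (Fin n × Fin n) k →ₐ[k]
        MvPolynomial ((Σ i, J i) × (Fin n × Fin n)) k).toRingHom)
      = (aeval (fun p : Fin n × Fin n => (∑ i, ev (c i) (Z i)) p.1 p.2) :
        MvPolynomial (Fin n × Fin n) k →ₐ[k] MvPolynomial σ k).toRingHom := by
    have : θ.comp (aeval (fun p : Fin n × Fin n => (∑ i, ev (c i) (gen k J i)) p.1 p.2))
        = aeval (fun p : Fin n × Fin n => (∑ i, ev (c i) (Z i)) p.1 p.2) := by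
      ext1 p
      rw [AlgHom.comp_apply, aeval_X, aeval_X, Matrix.sum_apply, Matrix.sum_apply, map_sum]
      refine Finset.sum_congr rfl fun i _ => ?_
      have := congrFun (congrFun (ev_map θ (c i) (gen k J i)) p.1) p.2
      rw [Matrix.map_apply] at this
      rw [this]
      congr 2
      ext1 j
      ext1 x y
      simp [θ, gen]
    rw [← this]; rfl
  rw [hcomp]
  refine flat_of_linear _ (Matrix.of fun p q => f (e.symm p) q.1 q.2) (fun y hy => ?_) ?_
  · have := hf (Matrix.of fun a b => y (a, b)) fun t => by
      have := congrFun hy (e t)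
      rw [lin_apply, ← Fintype.sum_prod_type']
      simpa [Matrix.mulVec, dotProduct] using this
    ext ⟨a, b⟩
    exact congrFun (congrFun this a) b
  · refine flat_of_lead _ hW (fun p => μ (e.symm p)) (fun p => hμ _)
      (fun p q hpq => hdisj _ _ fun h => hpq (e.symm.injective h)) fun p => ?_
    have : ∑ l : Fin n × Fin n, (Matrix.of fun p q : Fin n × Fin n => f (e.symm p) q.1 q.2) p l •
        (∑ i, ev (c i) (Z i)) l.1 l.2 = ∑ i, lin (f (e.symm p)) (ev (c i) (Z i)) := by
      rw [← map_sum, lin_apply, ← Fintype.sum_prod_type']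
      rfl
    rw [this]
    exact hlead _

end Subst

/-! ### Linear algebra for matrices of small size -/

section Adjoint

variable {k : Type*} [Field k] {n : ℕ}

lemma exists_perm {α : Type*} [DecidableEq α] {i j a b : α} (hij : i ≠ j) (hab : a ≠ b) :
    ∃ π : Equiv.Perm α, π i = a ∧ π j = b := by
  refine ⟨Equiv.swap (Equiv.swap i a j) b * Equiv.swap i a, ?_, ?_⟩
  · rw [Equiv.Perm.mul_apply, Equiv.swap_apply_left, Equiv.swap_apply_of_ne_of_ne _ hab]
    intro h
    have h2 : Equiv.swap i a i = Equiv.swap i a j := by rw [Equiv.swap_apply_left]; exact h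
    exact hij ((Equiv.swap i a).injective h2)
  · rw [Equiv.Perm.mul_apply, Equiv.swap_apply_left]

/-- A functional as a matrix of coefficients. -/
lemma exists_lin (φ : Matrix (Fin n) (Fin n) k →ₗ[k] k) :
    ∃ f : Matrix (Fin n) (Fin n) k, ∀ M : Matrix (Fin n) (Fin n) k, lin f M = φ M := by
  classical
  refine ⟨Matrix.of fun x y => φ (Matrix.single x y 1), fun M => ?_⟩
  conv_rhs => rw [Matrix.matrix_eq_sum_single M]
  rw [map_sum, lin_apply]
  refine Finset.sum_congr rfl fun x _ => ?_
  rw [map_sum]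
  refine Finset.sum_congr rfl fun y _ => ?_
  have : Matrix.single x y (M x y) = M x y • Matrix.single x y (1 : k) := by
    rw [Matrix.smul_single, smul_eq_mul, mul_one]
  rw [this, map_smul, Matrix.of_apply, smul_eq_mul, smul_eq_mul, mul_comm]

/-- A nonscalar matrix has a conjugate with a nonzero entry at a given off-diagonal position. -/
lemma exists_conj_entry {x : Matrix (Fin n) (Fin n) k} (hx : x ∉ Submodule.span k {1})
    {i j : Fin n} (hij : i ≠ j) :
    ∃ g g' : Matrix (Fin n) (Fin n) k, g * g' = 1 ∧ g' * g = 1 ∧ (g * x * g') i j ≠ 0 := by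
  classical
  have key : ∀ (y : Matrix (Fin n) (Fin n) k) (a b : Fin n), a ≠ b → y a b ≠ 0 →
      ∃ g g' : Matrix (Fin n) (Fin n) k, g * g' = 1 ∧ g' * g = 1 ∧ (g * y * g') i j ≠ 0 := by
    intro y a b hab hy
    obtain ⟨π, hi, hj⟩ := exists_perm hij hab
    refine ⟨(1 : Matrix (Fin n) (Fin n) k).submatrix π id,
      (1 : Matrix (Fin n) (Fin n) k).submatrix id π, ?_, ?_, ?_⟩
    · ext s t
      simp [Matrix.mul_apply, Matrix.one_apply]
    · rw [Matrix.submatrix_mul_equiv]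
      simp
    · simpa [Matrix.mul_apply, Matrix.one_apply, hi, hj] using hy
  by_cases hoff : ∃ a b, a ≠ b ∧ x a b ≠ 0
  · obtain ⟨a, b, hab, h⟩ := hoff
    exact key x a b hab h
  · push Not at hoff
    obtain ⟨a, b, hab⟩ : ∃ a b, x a a ≠ x b b := by
      by_contra hcon
      push Not at hcon
      refine hx (Submodule.mem_span_singleton.2 ⟨x i i, ?_⟩)
      ext a b
      by_cases h : a = b
      · subst h; simp [hcon i a]
      · simp [hoff a b h, h]
    have hne : a ≠ b := by rintro rfl; exact hab rfl
    have hE : Matrix.single a b (1 : k) * Matrix.single a b (1 : k) = 0 := by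
      rw [Matrix.single_mul_single_of_ne]
      exact hne.symm
    obtain ⟨g, g', h1, h2, h3⟩ := key
      ((1 + Matrix.single a b 1) * x * (1 - Matrix.single a b 1)) a b hne (by
        have e1 : ((1 + Matrix.single a b 1) * x * (1 - Matrix.single a b 1))
          = x + Matrix.single a b 1 * x - x * Matrix.single a b 1
            - Matrix.single a b 1 * x * Matrix.single a b 1 := by noncomm_ring
        rw [e1]
        simp only [Matrix.sub_apply, Matrix.add_apply]
        simp [hoff a b hne, hoff b a hne.symm]
        intro h
        exact hab (sub_eq_zero.1 h).symm)
    refine ⟨g * (1 + Matrix.single a b 1), (1 - Matrix.single a b 1) * g', ?_, ?_, ?_⟩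
    · have : (1 + Matrix.single a b (1 : k)) * (1 - Matrix.single a b 1) = 1 := by
        rw [mul_sub, mul_one, add_mul, hE, one_mul]; simp
      rw [mul_assoc, ← mul_assoc _ _ g', this, one_mul, h1]
    · have : (1 - Matrix.single a b (1 : k)) * (1 + Matrix.single a b 1) = 1 := by
        rw [mul_add, mul_one, sub_mul, hE, one_mul]; simp
      rw [mul_assoc, ← mul_assoc g', h2, one_mul, this]
    · simpa only [mul_assoc] using h3

/-- In characteristic `0` a subspace that contains the identity and all differences
`g x g⁻¹ - x`, for some nonscalar `x`, is everything. -/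
lemma eq_top_of_conj [CharZero k] {V : Submodule k (Matrix (Fin n) (Fin n) k)} (h1 : 1 ∈ V)
    {x : Matrix (Fin n) (Fin n) k} (hx : x ∉ Submodule.span k {1})
    (hV : ∀ g g' : Matrix (Fin n) (Fin n) k, g * g' = 1 → g' * g = 1 → g * x * g' - x ∈ V) :
    V = ⊤ := by
  classical
  by_contra hne
  obtain ⟨φ, hφ, hφV⟩ := Submodule.exists_le_ker_of_lt_top V (lt_top_iff_ne_top.2 hne)
  obtain ⟨f, hf⟩ := exists_lin φ
  have hker : ∀ M ∈ V, lin f M = 0 := fun M hM => by rw [hf]; exact hφV hM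
  have hexp : ∀ (i j : Fin n), i ≠ j → ∃ y : Matrix (Fin n) (Fin n) k, y j i ≠ 0 ∧
      lin f (Matrix.single i j (1 : k) * y * Matrix.single i j 1) = 0 ∧
      lin f (Matrix.single i j 1 * y - y * Matrix.single i j 1) = 0 := by
    intro i j hij
    obtain ⟨g, g', hg, hg', hy⟩ := exists_conj_entry hx hij.symm
    set y := g * x * g' with hydef
    set E := Matrix.single i j (1 : k) with hE
    have hEE : E * E = 0 := by
      rw [hE, Matrix.single_mul_single_of_ne]
      exact hij.symm
    -- conjugation by `1 ± E`
    have hconj : ∀ a : k, a • (E * y - y * E) - (a * a) • (E * y * E) ∈ V := by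
      intro a
      have e1 : (1 + a • E) * (1 - a • E) = 1 := by
        rw [mul_sub, mul_one, add_mul, smul_mul_smul_comm, hEE, one_mul]; simp
      have e2 : (1 - a • E) * (1 + a • E) = 1 := by
        rw [mul_add, mul_one, sub_mul, smul_mul_smul_comm, hEE, one_mul]; simp
      have h2 := hV ((1 + a • E) * g) (g' * (1 - a • E))
        (by rw [mul_assoc, ← mul_assoc g, hg, one_mul, e1])
        (by rw [mul_assoc, ← mul_assoc _ _ g, e2, one_mul, hg'])
      have h3 := sub_mem h2 (hV g g' hg hg')
      have e3 : (1 + a • E) * g * x * (g' * (1 - a • E)) - x - (g * x * g' - x)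
          = a • (E * y - y * E) - (a * a) • (E * y * E) := by
        have : (1 + a • E) * g * x * (g' * (1 - a • E)) = (1 + a • E) * y * (1 - a • E) := by
          rw [hydef]; simp only [mul_assoc]
        rw [this, ← hydef, sub_sub_sub_cancel_right, mul_sub, mul_one, add_mul, one_mul, add_mul,
          smul_mul_assoc, smul_mul_assoc, mul_smul_comm, mul_smul_comm, smul_smul, smul_sub]
        abel
      rwa [e3] at h3
    have hm1 := hconj 1
    have hm2 := hconj (-1)
    rw [one_smul, one_mul, one_smul] at hm1
    rw [neg_smul, one_smul, neg_mul_neg, one_mul, one_smul] at hm2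
    have a1 := hker _ hm1
    have a2 := hker _ hm2
    rw [map_sub] at a1 a2
    rw [map_neg] at a2
    have h2 : (2 : k) ≠ 0 := two_ne_zero
    have a3 : lin f (E * y * E) = 0 := by
      have : (2 : k) * lin f (E * y * E) = 0 := by linear_combination -a1 - a2
      exact (mul_eq_zero.1 this).resolve_left h2
    refine ⟨y, hy, a3, ?_⟩
    rw [a3, sub_zero] at a1
    exact a1
  have hoff : ∀ i j, i ≠ j → f i j = 0 := by
    intro i j hij
    obtain ⟨y, hy, h2, -⟩ := hexp i j hij
    rw [lin_apply, Finset.sum_eq_single i, Finset.sum_eq_single j] at h2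
    · simpa [hy] using h2
    · intro b _ hb; simp [hb]
    · simp
    · intro b _ hb
      refine Finset.sum_eq_zero fun z _ => ?_
      rw [mul_assoc, Matrix.single_mul_apply_of_ne _ _ _ _ _ hb, smul_zero]
    · simp
  have hsum : ∀ i j, i ≠ j → f i i = f j j := by
    intro i j hij
    obtain ⟨y, hy, -, h2⟩ := hexp i j hij
    have h3 : ∀ M : Matrix (Fin n) (Fin n) k, lin f M = ∑ a, f a a * M a a := by
      intro M
      rw [lin_apply]
      refine Finset.sum_congr rfl fun a _ => ?_
      rw [Finset.sum_eq_single a (fun b _ hb => by simp [hoff a b hb.symm]) (by simp), smul_eq_mul]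
    rw [map_sub, h3, h3, Finset.sum_eq_single i, Finset.sum_eq_single (f := fun a => f a a *
      (y * Matrix.single i j (1 : k)) a a) j] at h2
    · have h4 : (f i i - f j j) * y j i = 0 := by
        simp at h2
        linear_combination h2
      exact sub_eq_zero.1 ((mul_eq_zero.1 h4).resolve_right hy)
    · intro b _ hb; simp [hb]
    · simp
    · intro b _ hb; simp [hb]
    · simp
  refine hφ (LinearMap.ext fun M => ?_)
  have hf0 : f = 0 := by
    have h0 := hker 1 h1
    rw [lin_apply] at h0
    have hdiag : ∀ i, f i i = 0 := by
      intro i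
      have : ∀ x, ∑ y, f x y • (1 : Matrix (Fin n) (Fin n) k) x y = f i i := by
        intro x
        have hxi : f x x = f i i := by
          by_cases h : x = i
          · rw [h]
          · exact hsum x i h
        rw [Finset.sum_eq_single x (fun y _ hy => by simp [hy.symm]) (by simp)]
        simp [hxi]
      simp only [this, Finset.sum_const, Finset.card_univ, Fintype.card_fin, nsmul_eq_mul] at h0
      have hn : (n : k) ≠ 0 := by
        have := i.pos
        exact_mod_cast this.ne'
      exact (mul_eq_zero.1 h0).resolve_left hn
    ext i j
    by_cases h : i = j
    · subst h; exact hdiag i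
    · exact hoff i j h
  rw [← hf, hf0, lin_apply]
  simp

end Adjoint

/-! ### The case of matrices of small size -/

section Small

variable {k : Type*} [Field k] {n : ℕ}

/-- Two words with the same degrees: values whose traces cancel have a sum outside of a given
proper subspace containing the scalars. -/
lemma exists_pair [IsAlgClosed k] [CharZero k] {J J' : Type*} (c : List J →₀ k)
    (c' : List J' →₀ k) {e e' : ℕ} (he' : 1 ≤ e')
    (h1 : ∃ Y : J → Matrix (Fin n) (Fin n) k,
      ev (hom c e) Y ∉ Submodule.span k {(1 : Matrix (Fin n) (Fin n) k)})
    (h2 : ∃ Y : J' → Matrix (Fin n) (Fin n) k, (ev (hom c' e') Y).trace ≠ 0)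
    (V : Submodule k (Matrix (Fin n) (Fin n) k)) (hV : 1 ∈ V) (hne : V ≠ ⊤) :
    ∃ (v : J → Matrix (Fin n) (Fin n) k) (v' : J' → Matrix (Fin n) (Fin n) k),
      (ev (hom c e') v).trace + (ev (hom c' e') v').trace = 0 ∧
      ev (hom c e) v + ev (hom c' e) v' ∉ V := by
  by_contra hcon
  push Not at hcon
  obtain ⟨v, hv⟩ := h1
  obtain ⟨w, hw⟩ := h2
  -- rescale `w` so that the traces cancel
  obtain ⟨s, hs⟩ := IsAlgClosed.exists_pow_nat_eq
    (-(ev (hom c e') v).trace / (ev (hom c' e') w).trace) he'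
  have htr : (ev (hom c e') v).trace + (ev (hom c' e') fun j => s • w j).trace = 0 := by
    rw [ev_hom_smul, hs, Matrix.trace_smul, smul_eq_mul, div_mul_cancel₀ _ hw, add_neg_cancel]
  refine hne (eq_top_of_conj hV hv fun g g' hg hg' => ?_)
  have h3 := hcon (fun j => g * v j * g') (fun j => s • w j) (by
    rw [ev_conj hg' hg, Matrix.trace_mul_comm, ← mul_assoc, hg', one_mul, htr])
  have h4 := sub_mem h3 (hcon v _ htr)
  rwa [ev_conj hg' hg, add_sub_add_right_eq_sub] at h4

/-- A basis containing `m₀` whose other members are picked from prescribed sets, each of which is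
not contained in any proper subspace containing `m₀`. -/
lemma exists_basis {M : Type*} [AddCommGroup M] [Module k M] [FiniteDimensional k M] {R : Type*}
    [Fintype R] [DecidableEq R] (m₀ : M) (hm₀ : m₀ ≠ 0)
    (hcard : Fintype.card R + 1 = Module.finrank k M)
    (U : R → Set M) (hU : ∀ r, ∀ V : Submodule k M, m₀ ∈ V → V ≠ ⊤ → ∃ u ∈ U r, u ∉ V) :
    ∃ b : Module.Basis (Option R) k M, b none = m₀ ∧ ∀ r, b (some r) ∈ U r := by
  classical
  have key : ∀ S : Finset R, ∃ u : R → M, (∀ r ∈ S, u r ∈ U r) ∧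
      S.card + 1 ≤ Module.finrank k (Submodule.span k ({m₀} ∪ u '' S)) := by
    intro S
    induction S using Finset.induction_on with
    | empty =>
      refine ⟨fun _ => 0, by simp, ?_⟩
      rw [Finset.coe_empty, Set.image_empty, Set.union_empty, finrank_span_singleton hm₀,
        Finset.card_empty]
    | insert r S hr ih =>
      obtain ⟨u, h1, h2⟩ := ih
      set V := Submodule.span k ({m₀} ∪ u '' S) with hVdef
      have hS : S.card + 1 ≤ Fintype.card R := by
        rw [← Finset.card_insert_of_notMem hr]; exact Finset.card_le_univ _
      by_cases hV : V = ⊤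
      · -- the span of so few vectors is proper
        have h3 : Module.finrank k (Submodule.span k
            ((insert m₀ (S.image u) : Finset M) : Set M)) ≤ _ := finrank_span_finset_le_card _
        rw [Finset.coe_insert, Finset.coe_image, Set.insert_eq, ← hVdef, hV, finrank_top] at h3
        have h4 := Finset.card_insert_le m₀ (S.image u)
        have h5 : (S.image u).card ≤ S.card := Finset.card_image_le
        lia
      · obtain ⟨x, hx, hxV⟩ := hU r V (Submodule.subset_span (by simp)) hV
        have hne : ∀ y ∈ S, y ≠ r := fun y hy h => hr (h ▸ hy)
        refine ⟨Function.update u r x, ?_, ?_⟩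
        · intro y hy
          rcases Finset.mem_insert.1 hy with rfl | hy
          · rwa [Function.update_self]
          · rw [Function.update_of_ne (hne y hy)]; exact h1 y hy
        · rw [Finset.card_insert_of_notMem hr]
          have : V < Submodule.span k ({m₀} ∪ Function.update u r x '' (insert r S : Finset R)) := by
            refine lt_of_le_of_ne (Submodule.span_mono ?_) fun h => hxV ?_
            · refine Set.union_subset_union_right _ ?_
              rintro _ ⟨y, hy, rfl⟩
              exact ⟨y, by simp [Finset.mem_coe.1 hy], Function.update_of_ne (hne y hy) _ _⟩
            · rw [h]
              exact Submodule.subset_span (Or.inr ⟨r, by simp, Function.update_self ..⟩)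
          have := Submodule.finrank_lt_finrank_of_lt this
          lia
  obtain ⟨u, h1, h2⟩ := key Finset.univ
  have hrange : Set.range (fun o : Option R => o.elim m₀ u) = {m₀} ∪ u '' (Finset.univ : Finset R) := by
    ext y
    rw [Set.mem_range, Option.exists]
    simp [eq_comm]
  have htop : ⊤ ≤ Submodule.span k (Set.range fun o : Option R => o.elim m₀ u) := by
    rw [hrange]
    refine (Submodule.eq_top_of_finrank_eq (le_antisymm (Submodule.finrank_le _) ?_)).ge
    rw [← hcard]
    exact h2
  refine ⟨basisOfTopLeSpanOfCardEqFinrank _ htop (by rw [Fintype.card_option, hcard]), ?_, ?_⟩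
  · simp
  · intro r
    simpa using h1 r (Finset.mem_univ _)

end Small

section Small2

variable {k : Type*} [Field k] {n : ℕ}

/-- There is an index maximizing the ratio `e' i / e i`. -/
lemma exists_max_ratio {ι : Type*} [Fintype ι] [Nonempty ι] (e e' : ι → ℕ) (he : ∀ i, 1 ≤ e i) :
    ∃ i₀, ∀ i, e' i * e i₀ ≤ e' i₀ * e i := by
  obtain ⟨i₀, -, h⟩ := Finset.exists_max_image Finset.univ (fun i => (e' i : ℚ) / e i)
    Finset.univ_nonempty
  refine ⟨i₀, fun i => ?_⟩
  have h1 := h i (Finset.mem_univ _)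
  have p1 : (0 : ℚ) < e i := by exact_mod_cast he i
  have p2 : (0 : ℚ) < e i₀ := by exact_mod_cast he i₀
  rw [div_le_div_iff₀ p1 p2] at h1
  exact_mod_cast h1

lemma lead_C_mul {σ : Type*} {W : σ → ℤ} (s : σ) (a : ℕ) {x : k} (hx : x ≠ 0) :
    Lead W (Finsupp.single s a) (X s ^ a * C x : MvPolynomial σ k) := by
  refine ⟨x, hx, ?_⟩
  rw [X_pow_eq_monomial, mul_comm, C_mul_monomial, mul_one, sub_self]
  exact zero_mem _

lemma X_pow_mul_C_mem {σ : Type*} {W : σ → ℤ} (s : σ) (a : ℕ) (x : k) {N : ℤ} (h : W s * a ≤ N) :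
    (X s ^ a * C x : MvPolynomial σ k) ∈ WLe k W N := by
  rw [X_pow_eq_monomial, mul_comm, C_mul_monomial]
  refine monomial_mem_WLe _ ?_
  rw [wt, Finsupp.weight_single]
  simpa [mul_comm] using h

/-- Flatness when `n ≤ d`: each functional is given the parameter of a line, or two of them. -/
theorem core_small [IsAlgClosed k] [CharZero k] {d : ℕ} (hn : 1 ≤ n) (hd : 2 ≤ d) (hnd : n ≤ d)
    {ι : Type*} [Fintype ι] [DecidableEq ι] {J : ι → Type*}
    (c : ∀ i, List (J i) →₀ k) (hlen : ∀ i, ∀ u ∈ (c i).support, u.length ≤ d)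
    (hgen : ∀ i, Generating n (c i)) (hm : 1000 * d ^ 3 ≤ Fintype.card ι) :
    (aeval (fun p : Fin n × Fin n => (∑ i, ev (c i) (gen k J i)) p.1 p.2) :
      MvPolynomial (Fin n × Fin n) k →ₐ[k]
        MvPolynomial ((Σ i, J i) × (Fin n × Fin n)) k).toRingHom.Flat := by
  classical
  let Mat := Matrix (Fin n) (Fin n) k
  have h10 : (1 : Mat) ≠ 0 := by
    intro h
    have h1 : (1 : Mat) ⟨0, hn⟩ ⟨0, hn⟩ = (0 : Mat) ⟨0, hn⟩ ⟨0, hn⟩ := by rw [h]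
    rw [Matrix.one_apply_eq, Matrix.zero_apply] at h1
    exact one_ne_zero h1
  -- `e i` is the largest degree in which nonscalar values occur
  have hex : ∀ i, ∃ e, 1 ≤ e ∧ e ≤ d ∧
      (2 ≤ n → ∃ Y : J i → Mat, ev (hom (c i) e) Y ∉ Submodule.span k {(1 : Mat)}) ∧
      ∀ j, e < j → ∀ Y : J i → Mat, ev (hom (c i) j) Y ∈ Submodule.span k {(1 : Mat)} := by
    intro i
    have hfin := finrank_span_singleton (K := k) h10
    by_cases hn2 : 2 ≤ n
    · obtain ⟨e, h1, h2, h3, h4⟩ := exists_degree (hgen i) (hlen i) (Submodule.span k {(1 : Mat)})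
        (by
          intro h
          rw [h, finrank_top, Module.finrank_matrix] at hfin
          simp at hfin
          lia)
      exact ⟨e, h1, h2, fun _ => h3, h4⟩
    · refine ⟨1, le_rfl, by lia, fun h => absurd h hn2, fun j _ Y => ?_⟩
      have : Submodule.span k {(1 : Mat)} = ⊤ := by
        refine Submodule.eq_top_of_finrank_eq ?_
        rw [hfin, Module.finrank_matrix]
        have : n = 1 := by lia
        simp [this]
      rw [this]; trivial
  choose e he1 hed hout hin using hex
  choose e' he1' hed' hout' hin' using fun i => exists_trace_degree hn (hgen i) (hlen i)
  have hd3 : 1000 * d ^ 2 ≤ 1000 * d ^ 3 :=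
    Nat.mul_le_mul_left _ (Nat.pow_le_pow_right (by lia) (by lia))
  have hcpos : 0 < Fintype.card ι := by nlinarith
  have _ : Nonempty ι := Fintype.card_pos_iff.1 hcpos
  obtain ⟨i₀, hi₀⟩ := exists_max_ratio e e' he1
  let p₀ : Fin n × Fin n := (⟨0, hn⟩, ⟨0, hn⟩)
  let R := {p : Fin n × Fin n // p ≠ p₀}
  have hcardR : Fintype.card R + 1 = n * n := by
    have := Fintype.card_congr (Equiv.optionSubtypeNe p₀)
    rw [Fintype.card_option, Fintype.card_prod, Fintype.card_fin] at this
    exact this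
  -- pairs of words with equal degrees
  obtain ⟨β, hβ1, hβ2, hβ3⟩ := exists_bundles (R := R)
    (fun i => ((⟨e i, Nat.lt_succ_of_le (hed i)⟩, ⟨e' i, Nat.lt_succ_of_le (hed' i)⟩) :
      Fin (d + 1) × Fin (d + 1))) (Finset.univ.erase i₀) 2 (by
        rw [Finset.card_erase_of_mem (Finset.mem_univ _), Finset.card_univ, Fintype.card_prod,
          Fintype.card_fin]
        have h1 : n * n ≤ d * d := Nat.mul_le_mul hnd hnd
        have h2 : 4 ≤ d * d := Nat.mul_le_mul hd hd
        have h3 : 2 * d ≤ d * d := Nat.mul_le_mul_right _ hd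
        have h4 : d ^ 2 = d * d := by ring
        have h5 : (d + 1) * (d + 1) = d * d + 2 * d + 1 := by ring
        rw [h4] at hd3
        rw [h5]
        lia)
  have hβe : ∀ r y y', e (β r y) = e (β r y') := fun r y y' => by
    have := congrArg (fun p => (p.1 : ℕ)) (hβ3 r y y')
    exact this
  have hβe' : ∀ r y y', e' (β r y) = e' (β r y') := fun r y y' => by
    have := congrArg (fun p => (p.2 : ℕ)) (hβ3 r y y')
    exact this
  have hβ0 : ∀ r y, β r y ≠ i₀ := fun r y => Finset.ne_of_mem_erase (hβ2 r y)
  -- a basis consisting of `1` and of sums of two values whose traces cancel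
  obtain ⟨b, hb0, hb⟩ := exists_basis (k := k) (R := R) (1 : Mat) h10
    (by rw [hcardR, Module.finrank_matrix]; simp)
    (fun r => {u | ∃ v : ∀ i, J i → Mat,
      (ev (hom (c (β r 0)) (e' (β r 0))) (v (β r 0))).trace +
        (ev (hom (c (β r 1)) (e' (β r 1))) (v (β r 1))).trace = 0 ∧
      ev (hom (c (β r 0)) (e (β r 0))) (v (β r 0)) +
        ev (hom (c (β r 1)) (e (β r 1))) (v (β r 1)) = u})
    (fun r V h1 hV => by
      have hn2 : 2 ≤ n := by
        have : 0 < Fintype.card R := Fintype.card_pos_iff.2 ⟨r⟩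
        by_contra h
        have : n = 1 := by lia
        subst this
        lia
      obtain ⟨v, v', h2, h3⟩ := exists_pair (c (β r 0)) (c (β r 1)) (he1' (β r 0))
        (hout (β r 0) hn2) (by rw [hβe' r 0 1]; exact hout' (β r 1)) V h1 hV
      have hne : β r 0 ≠ β r 1 := fun h => by simpa using (hβ1 _ _ _ _ h).2
      refine ⟨_, ⟨Function.update (Function.update (fun i _ => 0) (β r 0) v) (β r 1) v',
        ?_, rfl⟩, ?_⟩
      · rw [Function.update_self, Function.update_of_ne hne, Function.update_self, ← hβe' r 0 1]
        exact h2
      · rw [Function.update_self, Function.update_of_ne hne, Function.update_self, ← hβe r 0 1]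
        exact h3)
  choose V hV1 hV2 using hb
  choose V₀ hV₀ using hout'
  choose f hf using fun r => exists_lin (b.coord (some r))
  -- the roles of the blocks
  let F : Option (R × Fin 2) → ι := fun o => o.elim i₀ fun x => β x.1 x.2
  have hF : Function.Injective F := by
    rintro (_ | ⟨r, y⟩) (_ | ⟨r', y'⟩) h
    · rfl
    · exact absurd h.symm (hβ0 _ _)
    · exact absurd h (hβ0 _ _)
    · obtain ⟨h1, h2⟩ := hβ1 _ _ _ _ h
      exact congrArg some (Prod.ext h1 h2)
  let role : ι → Option (Option (R × Fin 2)) := Function.partialInv F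
  have hrole : ∀ x, role (F x) = some x := fun x =>
    (hF.isPartialInv x (F x)).2 rfl
  have hrole' : ∀ i x, role i = some x → F x = i := fun i x h =>
    (hF.isPartialInv x i).1 h
  let S : ι → Option (Option R) := fun i => (role i).map (Option.map Prod.fst)
  let v : ∀ i, J i → Mat := fun i =>
    (role i).elim (fun _ => 0) fun o => o.elim (V₀ i) fun x => V x.1 i
  have hroleβ : ∀ r y, role (β r y) = some (some (r, y)) := fun r y => hrole (some (r, y))
  have hrole0 : role i₀ = some none := hrole none
  have hSβ : ∀ r y, S (β r y) = some (some r) := fun r y => by simp only [S, hroleβ]; rfl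
  have hS0 : S i₀ = some none := by simp only [S, hrole0]; rfl
  have hvβ : ∀ r y, v (β r y) = V r (β r y) := fun r y => by simp only [v, hroleβ]; rfl
  have hv0 : v i₀ = V₀ i₀ := by simp only [v, hrole0]; rfl
  have hvn : ∀ i, i ∉ Set.range F → ∀ j, v i j = 0 := by
    intro i hi j
    have : role i = none := by
      rcases h : role i with _ | x
      · rfl
      · exact absurd ⟨x, hrole' i x h⟩ hi
    simp only [v, this]; rfl
  have hcases : ∀ i, S i = none ∨ i = i₀ ∨ ∃ r y, i = β r y := by
    intro i
    rcases h : role i with _ | (_ | ⟨r, y⟩)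
    · exact Or.inl (by simp only [S, h]; rfl)
    · exact Or.inr (Or.inl (hrole' i _ h).symm)
    · exact Or.inr (Or.inr ⟨r, y, (hrole' i _ h).symm⟩)
  -- the weights
  let L : ℕ := d.factorial * (2 * d)
  have hdvd : ∀ i, ∃ q : ℕ, L = e i * q ∧ 2 * d ≤ q := by
    intro i
    obtain ⟨q, hq⟩ := Nat.dvd_factorial (he1 i) (hed i)
    refine ⟨q * (2 * d), by simp only [L]; rw [hq, mul_assoc], ?_⟩
    have : 0 < q := by
      rcases Nat.eq_zero_or_pos q with h | h
      · rw [h, mul_zero] at hq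
        exact absurd hq (Nat.factorial_ne_zero d)
      · exact h
    nlinarith
  choose q hq hqd using hdvd
  let W : ((Σ i, J i) × (Fin n × Fin n)) ⊕ Option (Option R) → ℤ :=
    Sum.elim (fun _ => 0) fun o => o.elim 0 fun o => o.elim ((q i₀ : ℤ) - 1) fun r => q (β r 0)
  have hqβ : ∀ r y, q (β r y) = q (β r 0) := fun r y => by
    have h1 := hq (β r y)
    rw [hβe r y 0, hq (β r 0)] at h1
    exact (Nat.eq_of_mul_eq_mul_left (he1 _) h1).symm
  have hW0 : W (Sum.inr (S i₀)) = q i₀ - 1 := by rw [hS0]; rfl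
  have hWβ : ∀ r y, W (Sum.inr (S (β r y))) = q (β r y) := fun r y => by rw [hSβ, hqβ]; rfl
  have hWn : ∀ i, S i = none → W (Sum.inr (S i)) = 0 := fun i h => by rw [h]; rfl
  have hW : ∀ s, 0 ≤ W s := by
    rintro (x | (_ | (_ | r)))
    · exact le_rfl
    · exact le_rfl
    · have := hqd i₀
      change (0 : ℤ) ≤ q i₀ - 1
      lia
    · exact Int.natCast_nonneg _
  let Z : ∀ i, J i → Matrix (Fin n) (Fin n)
      (MvPolynomial (((Σ i, J i) × (Fin n × Fin n)) ⊕ Option (Option R)) k) := fun i j =>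
    Matrix.of fun x y => X (Sum.inl (⟨i, j⟩, (x, y))) + X (Sum.inr (S i)) * C (v i j x y)
  have hZ : ∀ i j x y, Z i j x y - X (Sum.inr (S i)) * C (v i j x y) ∈ WLe k W 0 := by
    intro i j x y
    simp only [Z, Matrix.of_apply, add_sub_cancel_right]
    exact X_mem_WLe le_rfl
  have hL1 : 1 ≤ L := by rw [hq i₀]; have := hqd i₀; have := he1 i₀; nlinarith
  -- sums of the leading terms over all blocks
  have hsum : ∀ (E : ι → ℕ) (hE : ∀ i, 1 ≤ E i) (hEβ : ∀ r, E (β r 1) = E (β r 0)) (g : Mat),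
      (∑ i, (X (Sum.inr (S i)) ^ E i * C (lin g (ev (hom (c i) (E i)) (v i))) :
        MvPolynomial (((Σ i, J i) × (Fin n × Fin n)) ⊕ Option (Option R)) k))
      = X (Sum.inr (some none)) ^ E i₀ * C (lin g (ev (hom (c i₀) (E i₀)) (V₀ i₀))) +
        ∑ r, X (Sum.inr (some (some r))) ^ E (β r 0) * C (lin g
          (ev (hom (c (β r 0)) (E (β r 0))) (V r (β r 0)) +
            ev (hom (c (β r 1)) (E (β r 1))) (V r (β r 1)))) := by
    intro E hE hEβ g
    rw [← Fintype.sum_of_injective F hF (fun x => X (Sum.inr (S (F x))) ^ E (F x) *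
      C (lin g (ev (hom (c (F x)) (E (F x))) (v (F x))))) _ (fun i hi => ?_) fun x => rfl]
    · rw [Fintype.sum_option]
      congr 1
      · change X (Sum.inr (S i₀)) ^ E i₀ * C (lin g (ev (hom (c i₀) (E i₀)) (v i₀))) = _
        rw [hS0, hv0]
      · rw [Fintype.sum_prod_type]
        refine Finset.sum_congr rfl fun r _ => ?_
        rw [Fin.sum_univ_two]
        change X (Sum.inr (S (β r 0))) ^ E (β r 0) * C (lin g (ev (hom (c (β r 0)) (E (β r 0)))
            (v (β r 0)))) +
          X (Sum.inr (S (β r 1))) ^ E (β r 1) * C (lin g (ev (hom (c (β r 1)) (E (β r 1)))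
            (v (β r 1)))) = _
        rw [hSβ, hSβ, hvβ, hvβ, hEβ, map_add, C_add, mul_add]
    · have : ev (hom (c i) (E i)) (v i) = 0 := by
        have h := ev_hom_smul (c i) (E i) (0 : k) (v i)
        rw [zero_pow (by have := hE i; lia), zero_smul] at h
        rw [← h]
        congr 1
        ext1 j
        rw [hvn i hi j, smul_zero]
      rw [this, map_zero, C_0, mul_zero]
  have hsplit : ∀ (E : ι → ℕ) (g : Mat), ∑ i, lin g (ev (c i) (Z i))
      = ∑ i, X (Sum.inr (S i)) ^ E i * C (lin g (ev (hom (c i) (E i)) (v i))) +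
        ∑ i, (lin g (ev (c i) (Z i)) -
          X (Sum.inr (S i)) ^ E i * C (lin g (ev (hom (c i) (E i)) (v i)))) := by
    intro E g
    rw [← Finset.sum_add_distrib]
    exact Finset.sum_congr rfl fun i _ => by ring
  refine flat_of_functionals c Z (aeval (Sum.elim X fun _ => 0)) ?_ (Equiv.optionSubtypeNe p₀)
    (fun o => o.elim 1 f) ?_ hW
    (fun o => o.elim (Finsupp.single (Sum.inr (some none)) (e' i₀)) fun r =>
      Finsupp.single (Sum.inr (some (some r))) (e (β r 0))) ?_ ?_ ?_
  · intro i j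
    ext1 x y
    simp [Z, gen]
  · intro M hM
    have h1 : ∀ r, b.repr M (some r) = 0 := fun r => by
      rw [← b.coord_apply, ← hf]; exact hM (some r)
    have h2 : M = b.repr M none • (1 : Mat) := by
      conv_lhs => rw [← b.sum_repr M]
      rw [Fintype.sum_option, hb0]
      simp [h1]
    have h3 := hM none
    change lin 1 M = 0 at h3
    rw [← trace_eq_lin, h2, Matrix.trace_smul, Matrix.trace_one, Fintype.card_fin,
      smul_eq_mul] at h3
    have hn0 : (n : k) ≠ 0 := by exact_mod_cast (by lia : n ≠ 0)
    rw [h2, (mul_eq_zero.1 h3).resolve_right hn0, zero_smul]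
  · rintro (_ | r)
    · simpa using (by have := he1' i₀; lia : e' i₀ ≠ 0)
    · simpa using (by have := he1 (β r 0); lia : e (β r 0) ≠ 0)
  · intro t t' htt'
    have hne : (Sum.inr (some t) : ((Σ i, J i) × (Fin n × Fin n)) ⊕ Option (Option R))
      ≠ Sum.inr (some t') := by simpa using htt'
    refine Disjoint.mono ?_ ?_ (Finset.disjoint_singleton.2 hne)
    · rcases t with _ | r <;> exact Finsupp.support_single_subset
    · rcases t' with _ | r <;> exact Finsupp.support_single_subset
  · rintro (_ | r)
    · -- the trace
      change Lead W (Finsupp.single (Sum.inr (some none)) (e' i₀))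
        (∑ i, lin (1 : Mat) (ev (c i) (Z i)))
      have hwt : wt W (Finsupp.single (Sum.inr (some none)) (e' i₀)) = e' i₀ * (q i₀ - 1) := by
        rw [wt, Finsupp.weight_single]; simp [W]
      have h0 : (1 : ℤ) ≤ e' i₀ := by exact_mod_cast he1' i₀
      have hd' : (e' i₀ : ℤ) ≤ d := by exact_mod_cast hed' i₀
      have hq0 : (2 * d : ℤ) ≤ q i₀ := by exact_mod_cast hqd i₀
      rw [hsplit e', hsum e' he1' (fun r => hβe' r 1 0), Finset.sum_eq_zero fun r _ => ?_, add_zero]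
      · refine (lead_C_mul _ _ (by rw [← trace_eq_lin]; exact hV₀ i₀)).add (sum_mem fun i _ => ?_)
        refine WLe_mono W ?_ (lin_line (hW _) (hZ i) (c i) d (hlen i) 1 (e' i) (fun j hj => ?_)
          (hed' i))
        · rw [hwt]
          rcases hcases i with h | rfl | ⟨r, y, rfl⟩
          · rw [hWn i h]; nlinarith
          · rw [hW0]; nlinarith
          · -- here the maximality of the ratio `e' i₀ / e i₀` enters
            rw [hWβ]
            set i := β r y
            have h1 : e' i * q i ≤ e' i₀ * q i₀ := by
              refine le_of_mul_le_mul_right (a := e i * e i₀) ?_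
                (Nat.mul_pos (he1 i) (he1 i₀))
              calc e' i * q i * (e i * e i₀) = e' i * e i₀ * (e i * q i) := by ring
                _ ≤ e' i₀ * e i * (e i * q i) := Nat.mul_le_mul_right _ (hi₀ i)
                _ = e' i₀ * e i * (e i₀ * q i₀) := by rw [← hq i, ← hq i₀]
                _ = e' i₀ * q i₀ * (e i * e i₀) := by ring
            have h2 : (e' i * q i : ℤ) ≤ e' i₀ * q i₀ := by exact_mod_cast h1
            have h3 : (2 * d : ℤ) ≤ q i := by exact_mod_cast hqd i
            linarith [show (2 : ℤ) ≤ d by exact_mod_cast hd]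
        · exact lin_ev_eq_zero 1 _ (fun Y => by rw [← trace_eq_lin]; exact hin' i j hj Y) _
      · rw [← trace_eq_lin, Matrix.trace_add, hV1, C_0, mul_zero]
    · -- the functional dual to the sum of values of a pair
      change Lead W (Finsupp.single (Sum.inr (some (some r))) (e (β r 0)))
        (∑ i, lin (f r) (ev (c i) (Z i)))
      have hwt : wt W (Finsupp.single (Sum.inr (some (some r))) (e (β r 0))) = L := by
        rw [wt, Finsupp.weight_single, hq (β r 0)]; simp [W]
      have hL1' : (1 : ℤ) ≤ L := by exact_mod_cast hL1
      have hLe : ∀ i, (L : ℤ) = e i * q i := fun i => by exact_mod_cast hq i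
      have he1'' : ∀ i, (1 : ℤ) ≤ e i := fun i => by exact_mod_cast he1 i
      have hq1 : ∀ i, (4 : ℤ) ≤ q i := fun i => by
        have := hqd i
        exact_mod_cast (by lia : 4 ≤ q i)
      rw [hsplit e, hsum e he1 (fun r => hβe r 1 0), Finset.sum_eq_single r]
      · rw [add_comm (X _ ^ _ * C _), add_assoc]
        refine (lead_C_mul _ _ ?_).add (add_mem ?_ (sum_mem fun i _ => ?_))
        · rw [hV2, hf, b.coord_apply, b.repr_self]
          simp
        · refine X_pow_mul_C_mem _ _ _ ?_
          rw [hwt, hLe i₀]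
          change ((q i₀ : ℤ) - 1) * e i₀ ≤ _
          have := he1'' i₀
          linarith
        · refine WLe_mono W ?_ (lin_line (hW _) (hZ i) (c i) d (hlen i) (f r) (e i) (fun j hj => ?_)
            (hed i))
          · rw [hwt, hLe i]
            have h1 := he1'' i
            have h2 := hq1 i
            rcases hcases i with h | rfl | ⟨r, y, rfl⟩
            · rw [hWn i h]; nlinarith
            · rw [hW0]; nlinarith
            · rw [hWβ]; nlinarith
          · refine lin_ev_eq_zero (f r) _ (fun Y => ?_) _
            obtain ⟨a, ha⟩ := Submodule.mem_span_singleton.1 (hin i j hj Y)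
            rw [← ha, hf, map_smul, ← hb0, b.coord_apply, b.repr_self]
            simp
      · intro r' _ hr'
        rw [hV2, hf, b.coord_apply, b.repr_self]
        simp [hr']
      · simp

end Small2

/-! ### Weights concentrated on chosen edges -/

section Chosen

variable {J : Type*} {n : ℕ}

open Classical in
/-- The weight of an edge, which is about `B` on the chosen edges and `0` on the others. -/
noncomputable def edgeWt (Ch : J → Fin n → Fin n → Prop) (δ : Fin n → Fin n → ℤ) (B : ℤ)
    (j : J) (x y : Fin n) : ℤ := if Ch j x y then B + δ x y else 0

variable {Ch : J → Fin n → Fin n → Prop} {δ : Fin n → Fin n → ℤ} {B m : ℤ}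

lemma edgeWt_nonneg (hδ : ∀ x y, |δ x y| ≤ m) (hB : m ≤ B) (j : J) (x y : Fin n) :
    0 ≤ edgeWt Ch δ B j x y := by
  rw [edgeWt]
  split_ifs
  · have := (abs_le.1 (hδ x y)).1
    lia
  · exact le_rfl

/-- A walk that is not completely chosen is light. -/
lemma walkSum_edgeWt {d : ℕ} (hδ : ∀ x y, |δ x y| ≤ m) (hm : 0 ≤ m) (hB : d * m ≤ B) (u : List J)
    (hu : u.length ≤ d) (v : ℕ → Fin n) :
    walkSum (edgeWt Ch δ B) u v ≤ u.length * B ∨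
      (1 ≤ u.length ∧ (∀ t : Fin u.length, Ch (u.get t) (v t) (v (t + 1))) ∧
        walkSum (edgeWt Ch δ B) u v = u.length * B + ∑ t : Fin u.length, δ (v t) (v (t + 1))) := by
  classical
  by_cases hu0 : u.length = 0
  · left
    have : u = [] := List.length_eq_zero_iff.1 hu0
    subst this
    simp [walkSum]
  by_cases hall : ∀ t : Fin u.length, Ch (u.get t) (v t) (v (t + 1))
  · right
    refine ⟨by lia, hall, ?_⟩
    have h1 : ∀ t : Fin u.length, edgeWt Ch δ B (u.get t) (v t) (v (t + 1))
        = B + δ (v t) (v (t + 1)) := fun t => if_pos (hall t)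
    simp only [walkSum, h1, Finset.sum_add_distrib]
    simp
  · left
    push Not at hall
    obtain ⟨t₀, ht₀⟩ := hall
    have hB0 : 0 ≤ B := le_trans (by positivity) hB
    rw [walkSum, ← Finset.add_sum_erase _ _ (Finset.mem_univ t₀), edgeWt, if_neg ht₀, zero_add]
    have h1 : ∀ t ∈ Finset.univ.erase t₀,
        edgeWt Ch δ B (u.get t) (v t) (v (t + 1)) ≤ B + m := by
      intro t _
      rw [edgeWt]
      split_ifs
      · have := (abs_le.1 (hδ (v t) (v (t + 1)))).2
        lia
      · lia
    have h2 := Finset.sum_le_card_nsmul _ _ _ h1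
    rw [Finset.card_erase_of_mem (Finset.mem_univ _), Finset.card_univ, Fintype.card_fin,
      nsmul_eq_mul, Nat.cast_sub (by lia), Nat.cast_one] at h2
    refine h2.trans ?_
    have h3 : (u.length : ℤ) ≤ d := by exact_mod_cast hu
    nlinarith

end Chosen

/-! ### Blocks which move the entries between two parts of the index set -/

section Tile

variable {J : Type*} {n : ℕ}

/-- The potential, which is affine on the end parts of the chosen walks. -/
def tilePot (Q : ℕ) (lay : ℕ → ℕ) (h : ℤ) (x : Fin n) : ℤ :=
  if lay (x / Q) = 0 then h * (x : ℕ) else 0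

/-- The position of a vertex; it increases at constant speed along the heaviest walks. -/
def tilePos (Q e ρ : ℕ) (lay : ℕ → ℕ) (x : Fin n) : ℤ :=
  e * ((x % Q : ℕ) : ℤ) + ((lay (x / Q) * ρ % e : ℕ) : ℤ)

/-- The correction to the weight of a chosen edge. -/
def tileCorr (Q e ρ : ℕ) (lay : ℕ → ℕ) (h : ℤ) (x y : Fin n) : ℤ :=
  tilePot Q lay h y - tilePot Q lay h x - (tilePos Q e ρ lay y - tilePos Q e ρ lay x) ^ 2

/-- The edges of the walks labelled by `ω` through the parts `π 0, …, π e`. -/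
def TileEdge (Q e : ℕ) (π : ℕ → ℕ) (ω : List J) (j : J) (x y : Fin n) : Prop :=
  ∃ t, t < e ∧ x / Q = π t ∧ y / Q = π (t + 1) ∧ ω[t]? = some j

variable {Q e ρ : ℕ} {lay π : ℕ → ℕ} {h : ℤ} {ω : List J}

/-- The layers of a chosen walk increase by one in each step, modulo the length `e`. -/
lemma tile_layers (hlay : ∀ t ≤ e, lay (π t) = t % e) {u : List J} {v : ℕ → Fin n}
    (hall : ∀ t : Fin u.length, TileEdge Q e π ω (u.get t) (v t) (v (t + 1))) (hu : 1 ≤ u.length) :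
    ∃ t₀ < e, v 0 / Q = π t₀ ∧ (∀ t (ht : t < u.length), v t / Q = π ((t₀ + t) % e) ∧
      v (t + 1) / Q = π ((t₀ + t) % e + 1) ∧ ω[(t₀ + t) % e]? = some u[t]) := by
  choose κ hκ h1 h2 h3 using hall
  have he : 0 < e := (Nat.zero_le _).trans_lt (hκ ⟨0, hu⟩)
  have key : ∀ t (ht : t < u.length), κ ⟨t, ht⟩ = (κ ⟨0, hu⟩ + t) % e := by
    intro t
    induction t with
    | zero => intro _; rw [add_zero, Nat.mod_eq_of_lt (hκ _)]
    | succ t ih =>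
      intro ht
      have ih := ih (by lia)
      have h4 := h2 ⟨t, by lia⟩
      have h5 := h1 ⟨t + 1, ht⟩
      have h6 : lay (π (κ ⟨t, by lia⟩ + 1)) = lay (π (κ ⟨t + 1, ht⟩)) := by
        rw [← h4, ← h5]
      rw [hlay _ (hκ _), hlay _ (hκ _).le, Nat.mod_eq_of_lt (hκ ⟨t + 1, ht⟩), ih,
        Nat.succ_eq_add_one, Nat.mod_add_mod] at h6
      rw [← h6, add_assoc]
  refine ⟨κ ⟨0, hu⟩, hκ _, h1 ⟨0, hu⟩, fun t ht => ?_⟩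
  rw [← key t ht]
  exact ⟨h1 ⟨t, ht⟩, h2 ⟨t, ht⟩, h3 ⟨t, ht⟩⟩

/-- The corrections telescope up to the squares. -/
lemma tileCorr_sum (u : List J) (v : ℕ → Fin n) :
    ∑ t : Fin u.length, tileCorr Q e ρ lay h (v t) (v (t + 1))
      = tilePot Q lay h (v u.length) - tilePot Q lay h (v 0)
        - ∑ t ∈ Finset.range u.length,
          (tilePos Q e ρ lay (v (t + 1)) - tilePos Q e ρ lay (v t)) ^ 2 := by
  rw [Fin.sum_univ_eq_sum_range fun t => tileCorr Q e ρ lay h (v t) (v (t + 1))]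
  simp only [tileCorr]
  rw [Finset.sum_sub_distrib, Finset.sum_range_sub (fun t => tilePot Q lay h (v t))]

/-- Closed walks. -/
lemma tile_closed {B m : ℤ} {d : ℕ}
    (hδ : ∀ x y : Fin n, |tileCorr Q e ρ lay h x y| ≤ m) (hm : 0 ≤ m) (hB : d * m ≤ B)
    {u : List J} (hu : u.length ≤ d) {v : ℕ → Fin n} (hv : v 0 = v u.length) :
    walkSum (edgeWt (TileEdge Q e π ω) (tileCorr Q e ρ lay h) B) u v ≤ u.length * B := by
  rcases walkSum_edgeWt (Ch := TileEdge Q e π ω) hδ hm hB u hu v with h1 | ⟨h1, h2, h3⟩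
  · exact h1
  · rw [h3, tileCorr_sum, ← hv, sub_self, zero_sub]
    have : 0 ≤ ∑ t ∈ Finset.range u.length,
        (tilePos Q e ρ lay (v (t + 1)) - tilePos Q e ρ lay (v t)) ^ 2 :=
      Finset.sum_nonneg fun t _ => sq_nonneg _
    lia

end Tile

section Tile2

variable {J : Type*} {n : ℕ} {Q e ρ : ℕ} {lay π : ℕ → ℕ} {h : ℤ} {ω : List J}

/-- Variance formula for the increments of a sequence with average increment `Δ`. -/
lemma sum_increments_sq (z : ℕ → ℤ) (ℓ : ℕ) (Δ : ℤ) (hz : z ℓ - z 0 = ℓ * Δ) :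
    ∑ t ∈ Finset.range ℓ, (z (t + 1) - z t) ^ 2
      = ℓ * Δ ^ 2 + ∑ t ∈ Finset.range ℓ, (z (t + 1) - z t - Δ) ^ 2 := by
  have h1 : ∑ t ∈ Finset.range ℓ, (z (t + 1) - z t - Δ) ^ 2
      = ∑ t ∈ Finset.range ℓ, (z (t + 1) - z t) ^ 2
        - 2 * Δ * ∑ t ∈ Finset.range ℓ, (z (t + 1) - z t) + ℓ * Δ ^ 2 := by
    rw [Finset.mul_sum, ← Finset.sum_sub_distrib]
    have : (ℓ : ℤ) * Δ ^ 2 = ∑ t ∈ Finset.range ℓ, Δ ^ 2 := by simp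
    rw [this, ← Finset.sum_add_distrib]
    exact Finset.sum_congr rfl fun t _ => by ring
  rw [h1, Finset.sum_range_sub, hz]
  ring

/-- The walks in a tile which are heavier than `e * B` pass through the parts
`π 0, …, π e` and spell `ω`; their excess is largest if the position increases uniformly. -/
lemma tile_walk (hlay : ∀ t ≤ e, lay (π t) = t % e) (hω : ω.length = e) {B m : ℤ} {d : ℕ}
    (hδ : ∀ x y : Fin n, |tileCorr Q e ρ lay h x y| ≤ m) (hm : 0 ≤ m) (hB : d * m ≤ B)
    (hed : e ≤ d) {u : List J} (hu : u.length ≤ e) (v : ℕ → Fin n) {a b : Fin n}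
    (ha : v 0 = a) (hb : v u.length = b) {Δ : ℤ}
    (hΔ : Δ = ((b % Q : ℕ) : ℤ) - ((a % Q : ℕ) : ℤ)) :
    walkSum (edgeWt (TileEdge Q e π ω) (tileCorr Q e ρ lay h) B) u v ≤ e * B ∨
    (u = ω ∧ (∀ t ≤ e, v t / Q = π t) ∧
      walkSum (edgeWt (TileEdge Q e π ω) (tileCorr Q e ρ lay h) B) u v
        = e * B + h * ((b : ℤ) - a) - e * Δ ^ 2 - ∑ t ∈ Finset.range e,
          (tilePos Q e ρ lay (v (t + 1)) - tilePos Q e ρ lay (v t) - Δ) ^ 2) := by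
  have hB0 : 0 ≤ B := le_trans (by positivity) hB
  have hu' : (u.length : ℤ) ≤ e := by exact_mod_cast hu
  rcases walkSum_edgeWt (Ch := TileEdge Q e π ω) hδ hm hB u (hu.trans hed) v with h1 | ⟨h1, h2, h3⟩
  · left
    exact h1.trans (mul_le_mul_of_nonneg_right hu' hB0)
  rcases hu.lt_or_eq with hlt | hue
  · left
    have h4 : ∑ t : Fin u.length, tileCorr Q e ρ lay h (v t) (v (t + 1)) ≤ u.length * m := by
      have := Finset.sum_le_card_nsmul (Finset.univ : Finset (Fin u.length))
        (fun t => tileCorr Q e ρ lay h (v t) (v (t + 1))) m fun t _ => (abs_le.1 (hδ _ _)).2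
      simpa using this
    have h5 : (u.length : ℤ) + 1 ≤ e := by exact_mod_cast hlt
    have h6 : (e : ℤ) ≤ d := by exact_mod_cast hed
    rw [h3]
    nlinarith
  obtain ⟨t₀, ht₀, h4, h5⟩ := tile_layers hlay h2 h1
  have hlast := (h5 (u.length - 1) (by lia)).2.1
  rw [show u.length - 1 + 1 = u.length by lia, hue] at hlast
  by_cases h0 : t₀ = 0
  · right
    subst h0
    simp only [zero_add] at h5
    have hmod : ∀ t, t < e → t % e = t := fun t ht => Nat.mod_eq_of_lt ht
    have hpart : ∀ t ≤ e, v t / Q = π t := by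
      intro t ht
      rcases ht.lt_or_eq with ht | rfl
      · have := (h5 t (by lia)).1
        rwa [hmod t ht] at this
      · rw [hlast, zero_add, hmod _ (by lia)]
        congr 1
        lia
    have hmodpot : ∀ t ≤ e, t % e = 0 → tilePot Q lay h (v t) = h * (v t : ℕ) := by
      intro t ht h6
      rw [tilePot, hpart t ht, hlay t ht, if_pos h6]
    have hmodpos : ∀ t ≤ e, t % e = 0 → tilePos Q e ρ lay (v t) = e * ((v t % Q : ℕ) : ℤ) := by
      intro t ht h6
      rw [tilePos, hpart t ht, hlay t ht, h6, zero_mul, Nat.zero_mod]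
      simp
    rw [hue] at hb
    refine ⟨?_, hpart, ?_⟩
    · refine List.ext_getElem (by lia) fun t ht ht' => ?_
      have := (h5 t ht).2.2
      rw [hmod t (by lia), List.getElem?_eq_getElem ht'] at this
      exact (Option.some.inj this).symm
    · rw [h3, tileCorr_sum, hue, sum_increments_sq (fun t => tilePos Q e ρ lay (v t)) e Δ,
        hmodpot e le_rfl (Nat.mod_self e), hmodpot 0 (Nat.zero_le _) (Nat.zero_mod e), ha, hb]
      · ring
      · rw [hmodpos e le_rfl (Nat.mod_self e), hmodpos 0 (Nat.zero_le _) (Nat.zero_mod e), ha, hb,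
          hΔ]
        ring
  · left
    -- a walk of full length which starts in an inner layer returns to that layer
    have h6 : (t₀ + (e - 1)) % e = t₀ - 1 := by
      rw [show t₀ + (e - 1) = (t₀ - 1) + e by lia, Nat.add_mod_right]
      exact Nat.mod_eq_of_lt (by lia)
    rw [h6, show t₀ - 1 + 1 = t₀ by lia] at hlast
    have h7 : lay (π t₀) ≠ 0 := by
      rw [hlay t₀ ht₀.le, Nat.mod_eq_of_lt ht₀]; exact h0
    rw [h3, tileCorr_sum, hue, tilePot, hlast, if_neg h7, tilePot, h4, if_neg h7]
    have : 0 ≤ ∑ t ∈ Finset.range e,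
        (tilePos Q e ρ lay (v (t + 1)) - tilePos Q e ρ lay (v t)) ^ 2 :=
      Finset.sum_nonneg fun t _ => sq_nonneg _
    lia

/-- Two vertices in the same part and with the same position agree. -/
lemma tilePos_inj (he : 1 ≤ e) {x y : Fin n} (h1 : (x : ℕ) / Q = y / Q)
    (h2 : tilePos Q e ρ lay x = tilePos Q e ρ lay y) : x = y := by
  rw [tilePos, tilePos, h1] at h2
  have h3 : (e : ℤ) * ((x % Q : ℕ) : ℤ) = e * ((y % Q : ℕ) : ℤ) := by lia
  have h4 : (x : ℕ) % Q = y % Q := by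
    have := mul_left_cancel₀ (by lia : (e : ℤ) ≠ 0) h3
    exact_mod_cast this
  apply Fin.ext
  rw [← Nat.div_add_mod (x : ℕ) Q, ← Nat.div_add_mod (y : ℕ) Q, h1, h4]

/-- The walk from `a` to `b` whose position increases uniformly. -/
lemma tile_path {D : ℕ} (hlay : ∀ t ≤ e, lay (π t) = t % e) (he : 1 ≤ e) (hQ : 1 ≤ Q)
    (hQD : Q * D ≤ n) (hπ : ∀ t, 0 < t → t < e → π t < D) {a b : Fin n} (ha : (a : ℕ) / Q = π 0)
    (hb : (b : ℕ) / Q = π e) {Δ : ℤ} (hΔ : Δ = ((b % Q : ℕ) : ℤ) - ((a % Q : ℕ) : ℤ))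
    (hρ : (ρ : ℤ) = Δ % e) :
    ∃ p : ℕ → Fin n, p 0 = a ∧ p e = b ∧ ∀ t ≤ e, p t / Q = π t ∧
      tilePos Q e ρ lay (p t) = e * ((a % Q : ℕ) : ℤ) + t * Δ := by
  have haQ : (a : ℕ) % Q < Q := Nat.mod_lt _ hQ
  have hbQ : (b : ℕ) % Q < Q := Nat.mod_lt _ hQ
  have haQ' : ((a % Q : ℕ) : ℤ) < Q := Int.ofNat_lt.2 haQ
  have hbQ' : ((b % Q : ℕ) : ℤ) < Q := Int.ofNat_lt.2 hbQ
  have ha0 : 0 ≤ ((a % Q : ℕ) : ℤ) := Int.natCast_nonneg _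
  have hb0 : 0 ≤ ((b % Q : ℕ) : ℤ) := Int.natCast_nonneg _
  have he0 : (0 : ℤ) < e := by exact_mod_cast he
  have hoff : ∀ t ≤ e, ∃ r : ℕ, r < Q ∧ (r : ℤ) = ((a % Q : ℕ) : ℤ) + t * Δ / e := by
    intro t ht
    have ht' : (t : ℤ) ≤ e := by exact_mod_cast ht
    have ht0 : (0 : ℤ) ≤ t := Int.natCast_nonneg t
    have h1 : 0 ≤ ((a % Q : ℕ) : ℤ) + t * Δ / e ∧ ((a % Q : ℕ) : ℤ) + t * Δ / e < Q := by
      rcases le_total 0 Δ with h0 | h0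
      · have h2 : t * Δ / e ≤ Δ := by
          refine (Int.ediv_le_ediv he0 (mul_le_mul_of_nonneg_right ht' h0)).trans ?_
          rw [Int.mul_ediv_cancel_left _ he0.ne']
        have h3 : 0 ≤ t * Δ / e := Int.ediv_nonneg (mul_nonneg ht0 h0) he0.le
        constructor <;> linarith
      · have h2 : Δ ≤ t * Δ / e := by
          refine le_trans ?_ (Int.ediv_le_ediv he0 (mul_le_mul_of_nonpos_right ht' h0))
          rw [Int.mul_ediv_cancel_left _ he0.ne']
        have h3 : t * Δ / e ≤ 0 := by
          have := Int.ediv_le_ediv he0 (mul_nonpos_of_nonneg_of_nonpos ht0 h0)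
          rwa [Int.zero_ediv] at this
        constructor <;> linarith
    exact ⟨(((a % Q : ℕ) : ℤ) + t * Δ / e).toNat, by lia, by lia⟩
  have hdm : ∀ x y r : ℕ, x = Q * y + r → r < Q → x / Q = y ∧ x % Q = r := by
    rintro x y r rfl hr
    rw [Nat.mul_add_div hQ, Nat.mul_add_mod, Nat.mod_eq_of_lt hr, Nat.div_eq_of_lt hr]
    simp
  have hvert : ∀ t ≤ e, ∃ x : Fin n, (x : ℕ) / Q = π t ∧
      (((x : ℕ) % Q : ℕ) : ℤ) = ((a % Q : ℕ) : ℤ) + t * Δ / e := by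
    intro t ht
    rcases Nat.eq_zero_or_pos t with rfl | ht0
    · exact ⟨a, ha, by simp⟩
    rcases ht.lt_or_eq with hlt | rfl
    · obtain ⟨r, hr, hr'⟩ := hoff t ht
      have h1 : Q * π t + r < n := by
        have := Nat.mul_le_mul_left Q (Nat.succ_le_of_lt (hπ t ht0 hlt))
        rw [Nat.succ_eq_add_one, Nat.mul_add, Nat.mul_one] at this
        lia
      obtain ⟨h2, h3⟩ := hdm _ _ r rfl hr
      exact ⟨⟨Q * π t + r, h1⟩, h2, by simp only; rw [h3, hr']⟩
    · refine ⟨b, hb, ?_⟩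
      rw [Int.mul_ediv_cancel_left _ he0.ne', hΔ]
      ring
  choose p hp1 hp2 using hvert
  have hends : ∀ (x y : Fin n), (x : ℕ) / Q = y / Q → (((x : ℕ) % Q : ℕ) : ℤ) = ((y % Q : ℕ) : ℤ) →
      x = y := by
    intro x y h1 h2
    apply Fin.ext
    rw [← Nat.div_add_mod (x : ℕ) Q, ← Nat.div_add_mod (y : ℕ) Q, h1,
      (by exact_mod_cast h2 : (x : ℕ) % Q = y % Q)]
  refine ⟨fun t => if ht : t ≤ e then p t ht else a, ?_, ?_, fun t ht => ?_⟩
  · simp only [Nat.zero_le, dite_true]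
    refine hends _ _ (by rw [hp1, ha]) (by rw [hp2]; simp)
  · simp only [le_refl, dite_true]
    refine hends _ _ (by rw [hp1, hb]) ?_
    rw [hp2, Int.mul_ediv_cancel_left _ he0.ne', hΔ]
    ring
  · simp only [ht, dite_true]
    refine ⟨hp1 t ht, ?_⟩
    have h1 : ((t % e * ρ % e : ℕ) : ℤ) = t * Δ % e := by
      push_cast
      rw [hρ, ← Int.mul_emod]
    rw [tilePos, hp1, hlay t ht, hp2, h1]
    have := Int.emod_add_mul_ediv (t * Δ) e
    linarith

end Tile2

section Tile3

variable {J : Type*} {n : ℕ} {Q e ρ : ℕ} {lay π : ℕ → ℕ} {h : ℤ} {ω : List J}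

/-- If the position increases uniformly along a walk, then the residue `ρ` is determined. -/
lemma tile_rigid (hlay : ∀ t ≤ e, lay (π t) = t % e) (hρ : ρ < e) {v : ℕ → Fin n} {Δ : ℤ}
    (hv : ∀ t ≤ e, (v t : ℕ) / Q = π t) (hS : ∑ t ∈ Finset.range e,
      (tilePos Q e ρ lay (v (t + 1)) - tilePos Q e ρ lay (v t) - Δ) ^ 2 < 1) :
    (ρ : ℤ) = Δ % e ∧ ∀ t ≤ e, tilePos Q e ρ lay (v t) = e * ((v 0 % Q : ℕ) : ℤ) + t * Δ := by
  have hnn : ∀ t ∈ Finset.range e,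
      0 ≤ (tilePos Q e ρ lay (v (t + 1)) - tilePos Q e ρ lay (v t) - Δ) ^ 2 :=
    fun t _ => sq_nonneg _
  have h0 := (Finset.sum_eq_zero_iff_of_nonneg hnn).1
    (le_antisymm (by lia) (Finset.sum_nonneg hnn))
  have hpos : ∀ t ≤ e, tilePos Q e ρ lay (v t) = e * ((v 0 % Q : ℕ) : ℤ) + t * Δ := by
    intro t
    induction t with
    | zero =>
      intro _
      rw [tilePos, hv 0 (Nat.zero_le _), hlay 0 (Nat.zero_le _), Nat.zero_mod, zero_mul,
        Nat.zero_mod]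
      simp
    | succ t ih =>
      intro ht
      have h1 := pow_eq_zero_iff two_ne_zero |>.1 (h0 t (Finset.mem_range.2 ht))
      have h2 := ih (by lia)
      rw [Nat.cast_succ]
      linarith
  refine ⟨?_, hpos⟩
  by_cases he : e = 1
  · subst he
    have : ρ = 0 := by lia
    subst this
    simp
  · have h1 := hpos 1 (by lia)
    rw [tilePos, hv 1 (by lia), hlay 1 (by lia), Nat.mod_eq_of_lt (by lia : 1 < e), one_mul,
      Nat.mod_eq_of_lt hρ] at h1
    have h2 : Δ = ρ + e * (((v 1 % Q : ℕ) : ℤ) - ((v 0 % Q : ℕ) : ℤ)) := by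
      push_cast at h1 ⊢
      linarith
    rw [h2, Int.add_mul_emod_self_left]
    exact (Int.emod_eq_of_lt (Int.natCast_nonneg _) (by exact_mod_cast hρ)).symm

/-- Walks with uniformly increasing position which share an edge have the same ends. -/
lemma tile_disj (hlay : ∀ t ≤ e, lay (π t) = t % e) {p p' : ℕ → Fin n} {α α' Δ Δ' : ℤ}
    (hp : ∀ t ≤ e, (p t : ℕ) / Q = π t ∧ tilePos Q e ρ lay (p t) = e * α + t * Δ)
    (hp' : ∀ t ≤ e, (p' t : ℕ) / Q = π t ∧ tilePos Q e ρ lay (p' t) = e * α' + t * Δ')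
    {t t' : ℕ} (ht : t < e) (ht' : t' < e) (h1 : p t = p' t') (h2 : p (t + 1) = p' (t' + 1)) :
    p 0 = p' 0 ∧ p e = p' e := by
  have htt' : t = t' := by
    have := congrArg (fun x : Fin n => lay ((x : ℕ) / Q)) h1
    rwa [(hp t ht.le).1, (hp' t' ht'.le).1, hlay t ht.le, hlay t' ht'.le, Nat.mod_eq_of_lt ht,
      Nat.mod_eq_of_lt ht'] at this
  subst htt'
  have h3 := (hp t ht.le).2
  have h4 := (hp (t + 1) ht).2
  rw [h1, (hp' t ht.le).2] at h3
  rw [h2, (hp' (t + 1) ht).2] at h4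
  have hΔ : Δ = Δ' := by push_cast at h4; linarith
  subst hΔ
  have hall : ∀ s ≤ e, p s = p' s := by
    intro s hs
    refine tilePos_inj (lay := lay) (ρ := ρ) (by lia : 1 ≤ e) ((hp s hs).1.trans (hp' s hs).1.symm) ?_
    rw [(hp s hs).2, (hp' s hs).2]
    linarith
  exact ⟨hall 0 (Nat.zero_le _), hall e le_rfl⟩

lemma abs_tileCorr_le {d : ℕ} (he : 1 ≤ e) (hed : e ≤ d) (hQ : 1 ≤ Q) (hQn : Q ≤ n) (x y : Fin n) :
    |tileCorr Q e ρ lay h x y| ≤ |h| * n + (d * n) ^ 2 := by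
  have h1 : ∀ x : Fin n, 0 ≤ tilePos Q e ρ lay x ∧ tilePos Q e ρ lay x ≤ d * n := by
    intro x
    refine ⟨by rw [tilePos]; positivity, ?_⟩
    have h2 := Nat.mod_lt (x : ℕ) hQ
    have h3 := Nat.mod_lt (lay (x / Q) * ρ) he
    have h4 : e * ((x : ℕ) % Q) + lay (x / Q) * ρ % e ≤ d * n := by
      calc e * ((x : ℕ) % Q) + lay (x / Q) * ρ % e ≤ e * ((x : ℕ) % Q) + e := by lia
        _ = e * ((x : ℕ) % Q + 1) := by ring
        _ ≤ d * n := Nat.mul_le_mul hed (by lia)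
    rw [tilePos]
    exact_mod_cast h4
  have h2 : ∀ x : Fin n, ∃ z : ℤ, tilePot Q lay h x = h * z ∧ 0 ≤ z ∧ z ≤ n := by
    intro x
    rw [tilePot]
    split_ifs
    · exact ⟨(x : ℕ), rfl, by positivity, by exact_mod_cast x.2.le⟩
    · exact ⟨0, by simp, le_rfl, by positivity⟩
  obtain ⟨z, hz, hz0, hzn⟩ := h2 x
  obtain ⟨z', hz', hz0', hzn'⟩ := h2 y
  obtain ⟨h3, h4⟩ := h1 x
  obtain ⟨h5, h6⟩ := h1 y
  rw [tileCorr, hz, hz', ← mul_sub]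
  refine (abs_sub _ _).trans (add_le_add ?_ ?_)
  · rw [abs_mul]
    exact mul_le_mul_of_nonneg_left (abs_le.2 ⟨by lia, by lia⟩) (abs_nonneg _)
  · rw [abs_of_nonneg (sq_nonneg _)]
    exact sq_le_sq' (by linarith) (by linarith)

/-- A sequence of parts from `I` to `J` whose inner members are small and distinct. -/
lemma exists_layers (d e I J : ℕ) (he : 1 ≤ e) (hed : e ≤ d) : ∃ π lay : ℕ → ℕ,
    π 0 = I ∧ π e = J ∧ (∀ t, 0 < t → t < e → π t < d + 1) ∧ ∀ t ≤ e, lay (π t) = t % e := by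
  classical
  let p : ℕ → Prop := fun x => x ≠ I ∧ x ≠ J
  have hinf : (Set.ofPred p).Infinite := by
    have : Set.ofPred p = ({I, J} : Set ℕ)ᶜ := by
      ext x
      change (x ≠ I ∧ x ≠ J) ↔ _
      simp
    rw [this]
    exact Set.Finite.infinite_compl (by simp)
  have hcount : d - 1 ≤ Nat.count p (d + 1) := by
    rw [Nat.count_eq_card_filter_range]
    have : (Finset.range (d + 1)) \ {I, J} ⊆ (Finset.range (d + 1)).filter p := by
      intro x hx
      simpa [p] using hx
    refine le_trans ?_ (Finset.card_le_card this)
    have h1 := Finset.le_card_sdiff {I, J} (Finset.range (d + 1))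
    have h2 : ({I, J} : Finset ℕ).card ≤ 2 := Finset.card_le_two
    rw [Finset.card_range] at h1
    lia
  refine ⟨fun t => if t = 0 then I else if t < e then Nat.nth p (t - 1) else J,
    fun x => if x = I ∨ x = J then 0 else Nat.count p x + 1, by simp, ?_, ?_, ?_⟩
  · simp only [lt_irrefl, if_false]
    rw [if_neg (by lia)]
  · intro t h1 h2
    simp only [h2, if_true]
    rw [if_neg (by lia)]
    exact Nat.nth_lt_of_lt_count (by lia)
  · intro t ht
    by_cases h0 : t = 0
    · simp [h0]
    rcases ht.lt_or_eq with h1 | rfl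
    · have h2 : p (Nat.nth p (t - 1)) := Nat.nth_mem_of_infinite hinf _
      simp only [h0, h1, if_true, if_false]
      rw [if_neg (not_or.2 h2), Nat.count_nth_of_infinite hinf, Nat.mod_eq_of_lt h1]
      lia
    · simp [h0]

end Tile3

/-! ### Blocks which move the diagonal entries -/

section Diag

variable {J : Type*} {n e d : ℕ} {S : Set (Fin n)} {c : Fin n → ℕ → Fin n} {ω : List J}

/-- The edges of the walks `c a`, where `a ∈ S`, which are labelled by `ω`. -/
def DiagEdge (e : ℕ) (S : Set (Fin n)) (c : Fin n → ℕ → Fin n) (ω : List J) (j : J)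
    (x y : Fin n) : Prop :=
  ∃ a ∈ S, ∃ t, t < e ∧ x = c a t ∧ y = c a (t + 1) ∧ ω[t]? = some j

/-- A walk which is heavier than `B` per step runs along a segment of one of the walks `c a`, and its
label is the corresponding segment of `ω`. -/
lemma diag_walk (hc : ∀ a ∈ S, ∀ a' ∈ S, ∀ t ≤ e, ∀ t' ≤ e, c a t = c a' t' → a = a' ∧ t = t')
    {B : ℤ} (hB : d * (d + 1) ≤ B) (hed : e ≤ d) {u : List J} (hu : u.length ≤ e)
    (v : ℕ → Fin n) :
    walkSum (edgeWt (DiagEdge e S c ω) (fun _ _ => d + 1) B) u v ≤ u.length * B ∨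
    (1 ≤ u.length ∧
      walkSum (edgeWt (DiagEdge e S c ω) (fun _ _ => d + 1) B) u v
        = u.length * B + u.length * (d + 1) ∧
      ∃ a ∈ S, ∃ t₀, t₀ + u.length ≤ e ∧ (∀ t ≤ u.length, v t = c a (t₀ + t)) ∧
        ∀ t (ht : t < u.length), ω[t₀ + t]? = some u[t]) := by
  rcases walkSum_edgeWt (Ch := DiagEdge e S c ω) (δ := fun _ _ => (d : ℤ) + 1) (m := d + 1)
    (fun _ _ => (abs_of_nonneg (by positivity)).le) (by positivity) hB u (hu.trans hed) v with
    h1 | ⟨h1, h2, h3⟩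
  · exact Or.inl h1
  right
  refine ⟨h1, by rw [h3]; simp, ?_⟩
  choose a ha κ hκ h4 h5 h6 using h2
  have key : ∀ t (ht : t < u.length), a ⟨t, ht⟩ = a ⟨0, h1⟩ ∧ κ ⟨t, ht⟩ = κ ⟨0, h1⟩ + t := by
    intro t
    induction t with
    | zero => intro _; exact ⟨rfl, rfl⟩
    | succ t ih =>
      intro ht
      obtain ⟨i1, i2⟩ := ih (by lia)
      have h7 := (h5 ⟨t, by lia⟩).symm.trans (h4 ⟨t + 1, ht⟩)
      obtain ⟨h8, h9⟩ := hc _ (ha _) _ (ha _) _ (hκ ⟨t, by lia⟩) _ (hκ ⟨t + 1, ht⟩).le h7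
      exact ⟨h8.symm.trans i1, by rw [← h9, i2]; lia⟩
  refine ⟨a ⟨0, h1⟩, ha _, κ ⟨0, h1⟩, ?_, fun t ht => ?_, fun t ht => ?_⟩
  · have h7 := (key (u.length - 1) (by lia)).2
    have h8 := hκ ⟨u.length - 1, by lia⟩
    lia
  · rcases ht.lt_or_eq with ht | rfl
    · obtain ⟨i1, i2⟩ := key t ht
      have h7 := h4 ⟨t, ht⟩
      rwa [i1, i2] at h7
    · obtain ⟨i1, i2⟩ := key (u.length - 1) (by lia)
      have h7 := h5 ⟨u.length - 1, by lia⟩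
      rw [i1, i2] at h7
      simp only at h7
      rwa [show u.length - 1 + 1 = u.length by lia, add_assoc,
        show u.length - 1 + 1 = u.length by lia] at h7
  · have h7 := h6 ⟨t, ht⟩
    rwa [(key t ht).2] at h7

lemma diag_closed (hc : ∀ a ∈ S, ∀ a' ∈ S, ∀ t ≤ e, ∀ t' ≤ e, c a t = c a' t' → a = a' ∧ t = t')
    {B : ℤ} (hB : d * (d + 1) ≤ B) (hed : e ≤ d) {u : List J} (hu : u.length ≤ e)
    {v : ℕ → Fin n} (hv : v 0 = v u.length) :
    walkSum (edgeWt (DiagEdge e S c ω) (fun _ _ => d + 1) B) u v ≤ u.length * B := by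
  rcases diag_walk (ω := ω) hc hB hed hu v with h1 | ⟨h1, -, a, ha, t₀, h3, h4, -⟩
  · exact h1
  · rw [h4 0 (Nat.zero_le _), h4 _ le_rfl] at hv
    have := (hc a ha a ha _ (by lia) _ h3 hv).2
    lia

/-- The walk `c a` is heavier than all other walks with the same ends. -/
lemma diag_lead (hc : ∀ a ∈ S, ∀ a' ∈ S, ∀ t ≤ e, ∀ t' ≤ e, c a t = c a' t' → a = a' ∧ t = t')
    {B : ℤ} (hB : d * (d + 1) ≤ B) (he : 1 ≤ e) (hed : e ≤ d) (hω : ω.length = e) {a : Fin n}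
    (ha : a ∈ S) {u : List J} (hu : u.length ≤ e) {v : ℕ → Fin n} (hv0 : v 0 = c a 0)
    (hv : v u.length = c a e) :
    (u = ω ∧ ∀ t ≤ e, v t = c a t) ∨
      walkSum (edgeWt (DiagEdge e S c ω) (fun _ _ => d + 1) B) u v ≤ e * (B + (d + 1)) - 1 := by
  have hB0 : 0 ≤ B := le_trans (by positivity) hB
  have he' : (1 : ℤ) ≤ e := by exact_mod_cast he
  have hd' : (0 : ℤ) ≤ d := by positivity
  have hu' : (u.length : ℤ) ≤ e := by exact_mod_cast hu
  rcases diag_walk (ω := ω) hc hB hed hu v with h1 | ⟨h1, -, a', ha', t₀, h3, h4, h5⟩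
  · right
    nlinarith
  · left
    rw [h4 0 (Nat.zero_le _)] at hv0
    obtain ⟨rfl, h6⟩ := hc a' ha' a ha _ (by lia) _ (Nat.zero_le _) hv0
    have h7 : t₀ = 0 := by lia
    subst h7
    rw [h4 _ le_rfl, zero_add] at hv
    have h8 := (hc a' ha' a' ha' _ hu _ le_rfl hv).2
    refine ⟨List.ext_getElem (by lia) fun t ht ht' => ?_, fun t ht => ?_⟩
    · have := h5 t ht
      rw [zero_add, List.getElem?_eq_getElem ht'] at this
      exact (Option.some.inj this).symm
    · rw [h4 t (by lia), zero_add]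

lemma diag_path_sum {B : ℤ} (hω : ω.length = e) {a : Fin n} (ha : a ∈ S) :
    walkSum (edgeWt (DiagEdge e S c ω) (fun _ _ => d + 1) B) ω (c a) = e * (B + (d + 1)) := by
  have : ∀ t : Fin ω.length, edgeWt (DiagEdge e S c ω) (fun _ _ => (d : ℤ) + 1) B (ω.get t)
      (c a t) (c a (t + 1)) = B + (d + 1) := fun t =>
    if_pos ⟨a, ha, t, by have := t.2; lia, rfl, rfl, by simp⟩
  simp only [walkSum, this]
  simp [hω]

/-- The class of an index; the walks which belong to one class are disjoint. -/
def diagClass (n d x : ℕ) : ℕ := if x + d < n then x % (d + 1) else d + 1 + x % (d + 1)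

/-- The indices in the class `q` which have a successor. -/
def diagSet (n d q : ℕ) : Set (Fin n) := {a | (a : ℕ) + 1 < n ∧ diagClass n d a = q}

/-- A walk with `e` steps from `a` to `a + 1`, which passes through the following indices. -/
def diagPath (n e : ℕ) (a : Fin n) (t : ℕ) : Fin n :=
  ⟨(a + if t = 0 then 0 else if t < e then t + 1 else 1) % n, Nat.mod_lt _ a.pos⟩

lemma diagClass_lt (n d x : ℕ) : diagClass n d x < 2 * (d + 1) := by
  have := Nat.mod_lt x (Nat.succ_pos d)
  rw [diagClass]
  split_ifs <;> lia

lemma diagPath_zero (a : Fin n) : diagPath n e a 0 = a := by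
  apply Fin.ext
  simp [diagPath, Nat.mod_eq_of_lt a.2]

lemma diagPath_last (he : 1 ≤ e) {a : Fin n} (ha : (a : ℕ) + 1 < n) :
    diagPath n e a e = ⟨a + 1, ha⟩ := by
  apply Fin.ext
  simp only [diagPath, lt_irrefl, if_false]
  rw [if_neg (by lia), Nat.mod_eq_of_lt ha]

/-- The walks attached to one class of diagonal indices have no vertex in common, and none of them
repeats a vertex. -/
lemma diagPath_inj (hed : e ≤ d) (hnd : d + 1 ≤ n) {q : ℕ} :
    ∀ a ∈ diagSet n d q, ∀ a' ∈ diagSet n d q, ∀ t ≤ e, ∀ t' ≤ e,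
      diagPath n e a t = diagPath n e a' t' → a = a' ∧ t = t' := by
  rintro a ⟨ha, rfl⟩ a' ⟨ha', hq⟩ t ht t' ht' h
  have h1 := congrArg Fin.val h
  simp only [diagPath] at h1
  have hmod : ∀ x o : ℕ, x < n → o ≤ d → (x + o) % n = x + o ∨ (x + o) % n + n = x + o := by
    intro x o hx ho
    by_cases h2 : x + o < n
    · exact Or.inl (Nat.mod_eq_of_lt h2)
    · right
      rw [Nat.mod_eq_sub_mod (by lia), Nat.mod_eq_of_lt (by lia)]
      lia
  obtain ⟨o, ho⟩ : ∃ o, o = if t = 0 then 0 else if t < e then t + 1 else 1 := ⟨_, rfl⟩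
  obtain ⟨o', ho'⟩ : ∃ o, o = if t' = 0 then 0 else if t' < e then t' + 1 else 1 := ⟨_, rfl⟩
  rw [← ho, ← ho'] at h1
  have hod : o ≤ d := by rw [ho]; split_ifs <;> lia
  have hod' : o' ≤ d := by rw [ho']; split_ifs <;> lia
  have hoo : o = o' → t = t' := by
    rw [ho, ho']; split_ifs <;> lia
  have hdvd : ((d + 1 : ℕ) : ℤ) ∣ (a : ℕ) - (a' : ℕ) → |((a : ℕ) : ℤ) - (a' : ℕ)| < (d + 1 : ℕ) →
      (a : ℕ) = a' := by
    intro h2 h3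
    have := Int.eq_zero_of_abs_lt_dvd h2 h3
    lia
  have hm := Nat.mod_lt (a : ℕ) (Nat.succ_pos d)
  have hm' := Nat.mod_lt (a' : ℕ) (Nat.succ_pos d)
  have hcl : (a : ℕ) % (d + 1) = a' % (d + 1) ∧ ((a : ℕ) + d < n ↔ (a' : ℕ) + d < n) := by
    rw [diagClass, diagClass] at hq
    split_ifs at hq <;> constructor <;> lia
  have hd1 : ((d + 1 : ℕ) : ℤ) ∣ (a : ℕ) - (a' : ℕ) := by
    refine Int.dvd_of_emod_eq_zero (Int.emod_eq_emod_iff_emod_sub_eq_zero.1 ?_)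
    exact_mod_cast hcl.1
  have haa : (a : ℕ) = a' := by
    apply hdvd hd1
    rw [abs_lt]
    have ha2 := a.2
    have ha2' := a'.2
    rcases hmod a o a.2 hod with h2 | h2 <;> rcases hmod a' o' a'.2 hod' with h3 | h3 <;>
      constructor <;> push_cast <;> lia
  refine ⟨Fin.ext haa, hoo ?_⟩
  rcases hmod a o a.2 hod with h2 | h2 <;> rcases hmod a' o' a'.2 hod' with h3 | h3 <;> lia

/-- A class has no two consecutive indices, so that the conjugation for one index does not affect
the entries used for another. -/
lemma diagSet_succ (hd : 1 ≤ d) {q : ℕ} {a b : Fin n} (ha : a ∈ diagSet n d q)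
    (hb : b ∈ diagSet n d q) : (b : ℕ) ≠ a + 1 := by
  intro h
  obtain ⟨h1, h2⟩ := ha
  obtain ⟨h3, h4⟩ := hb
  rw [h] at h3 h4
  rw [← h2, diagClass, diagClass] at h4
  have hm := Nat.mod_lt (a : ℕ) (Nat.succ_pos d)
  have hm' := Nat.mod_lt ((a : ℕ) + 1) (Nat.succ_pos d)
  have h5 : ((a : ℕ) + 1) % (d + 1) = a % (d + 1) := by
    split_ifs at h4 <;> lia
  have h6 : 1 % (d + 1) = 0 := by
    have : (a : ℕ) + 1 ≡ a + 0 [MOD d + 1] := h5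
    exact (Nat.ModEq.add_left_cancel' _ this)
  rw [Nat.mod_eq_of_lt (by lia)] at h6
  lia

end Diag

/-- The blocks can be distributed among the tiles `T`, with one block for each residue modulo
the length `e` of the block, and the classes `S`. -/
lemma exists_kinds {ι : Type*} [Fintype ι] [DecidableEq ι] {d : ℕ} (hd : 1 ≤ d) (e : ι → ℕ)
    (he1 : ∀ i, 1 ≤ e i) (hed : ∀ i, e i ≤ d) (i₀ : ι) (T S : Type) [Fintype T] [Fintype S]
    (hcard : (Fintype.card T + Fintype.card S + (d + 1)) * d + 1 ≤ Fintype.card ι) :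
    ∃ kind : ι → Option (T × ℕ ⊕ S), kind i₀ = none ∧
      (∀ t, ∃ E, 1 ≤ E ∧ (∀ i ρ, kind i = some (Sum.inl (t, ρ)) → e i = E ∧ ρ < E) ∧
        ∀ ρ < E, ∃ i, kind i = some (Sum.inl (t, ρ))) ∧
      (∀ s, ∃ i, kind i = some (Sum.inr s)) ∧
      ∀ i i' x, kind i = some x → kind i' = some x → i = i' := by
  classical
  obtain ⟨β, hβ1, hβ2, hβ3⟩ := exists_bundles (R := T ⊕ S)
    (fun i => (⟨e i, Nat.lt_succ_of_le (hed i)⟩ : Fin (d + 1))) (Finset.univ.erase i₀) d (by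
      rw [Finset.card_erase_of_mem (Finset.mem_univ _), Finset.card_univ, Fintype.card_sum,
        Fintype.card_fin]
      lia)
  have hβe : ∀ r y y', e (β r y) = e (β r y') := fun r y y' => congrArg Fin.val (hβ3 r y y')
  let F : (T ⊕ S) × Fin d → ι := fun x => β x.1 x.2
  have hF : Function.Injective F := by
    rintro ⟨r, y⟩ ⟨r', y'⟩ h
    obtain ⟨h1, h2⟩ := hβ1 _ _ _ _ h
    exact Prod.ext h1 h2
  let role : ι → Option ((T ⊕ S) × Fin d) := Function.partialInv F
  have hrole : ∀ r y, role (β r y) = some (r, y) := fun r y => (hF.isPartialInv (r, y) _).2 rfl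
  have hrole' : ∀ i x, role i = some x → F x = i := fun i x h => (hF.isPartialInv x i).1 h
  let G : ι → (T ⊕ S) × Fin d → Option (T × ℕ ⊕ S) := fun i x =>
    match x with
    | (Sum.inl t, y) => if (y : ℕ) < e i then some (Sum.inl (t, (y : ℕ))) else none
    | (Sum.inr s, y) => if (y : ℕ) = 0 then some (Sum.inr s) else none
  have hG1 : ∀ i t ρ, (role i).bind (G i) = some (Sum.inl (t, ρ)) →
      ∃ hρ : ρ < d, i = β (Sum.inl t) ⟨ρ, hρ⟩ ∧ ρ < e i := by
    intro i t ρ h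
    rcases hr : role i with _ | ⟨t' | s, y⟩
    · rw [hr] at h; simp at h
    · rw [hr] at h
      simp only [Option.bind_some, G] at h
      split_ifs at h with h1
      simp only [Option.some.injEq, Sum.inl.injEq, Prod.mk.injEq] at h
      obtain ⟨rfl, rfl⟩ := h
      exact ⟨y.2, (hrole' _ _ hr).symm, h1⟩
    · rw [hr] at h
      simp only [Option.bind_some, G] at h
      split_ifs at h with h1
      simp at h
  have hG2 : ∀ i s, (role i).bind (G i) = some (Sum.inr s) → i = β (Sum.inr s) ⟨0, hd⟩ := by
    intro i s h
    rcases hr : role i with _ | ⟨t' | s', y⟩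
    · rw [hr] at h; simp at h
    · rw [hr] at h
      simp only [Option.bind_some, G] at h
      split_ifs at h with h1
      simp at h
    · rw [hr] at h
      simp only [Option.bind_some, G] at h
      split_ifs at h with h1
      simp only [Option.some.injEq, Sum.inr.injEq] at h
      subst h
      have : y = ⟨0, hd⟩ := Fin.ext h1
      rw [← this]
      exact (hrole' _ _ hr).symm
  refine ⟨fun i => (role i).bind (G i), ?_, fun t => ⟨e (β (Sum.inl t) ⟨0, hd⟩), he1 _, ?_, ?_⟩,
    fun s => ⟨β (Sum.inr s) ⟨0, hd⟩, ?_⟩, ?_⟩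
  · rcases hr : role i₀ with _ | ⟨r, y⟩
    · simp [hr]
    · exact absurd (hrole' _ _ hr) (Finset.ne_of_mem_erase (hβ2 r y))
  · intro i ρ h
    obtain ⟨h1, rfl, h2⟩ := hG1 i t ρ h
    rw [hβe _ ⟨0, hd⟩ ⟨ρ, h1⟩]
    exact ⟨rfl, h2⟩
  · intro ρ hρ
    refine ⟨β (Sum.inl t) ⟨ρ, hρ.trans_le (hed _)⟩, ?_⟩
    simp only [hrole, Option.bind_some, G]
    rw [if_pos (by rwa [hβe _ _ ⟨0, hd⟩])]
  · simp only [hrole, Option.bind_some, G]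
    rw [if_pos trivial]
  · rintro i i' (⟨t, ρ⟩ | s) h h'
    · obtain ⟨h1, h2, -⟩ := hG1 i t ρ h
      obtain ⟨h3, h4, -⟩ := hG1 i' t ρ h'
      rw [h2, h4]
    · rw [hG2 i s h, hG2 i' s h']

/-! ### Conjugation by unipotent matrices -/

section Shift

variable {k : Type*} [Field k] {n : ℕ}

open Classical in
/-- The matrix which sends the basis vector `a ∈ S` to `a + 1` and kills the others. -/
noncomputable def shift (k : Type*) [Field k] (S : Set (Fin n)) : Matrix (Fin n) (Fin n) k :=
  Matrix.of fun x y => if y ∈ S ∧ (x : ℕ) = y + 1 then 1 else 0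

/-- The projection to the span of the first basis vectors, up to the index `a`. -/
def proj (k : Type*) [Field k] (a : Fin n) : Matrix (Fin n) (Fin n) k :=
  Matrix.diagonal fun x => if x ≤ a then 1 else 0

lemma shift_sq {S : Set (Fin n)} (hS : ∀ a ∈ S, ∀ b ∈ S, (b : ℕ) ≠ a + 1) :
    shift k S * shift k S = 0 := by
  ext x y
  rw [Matrix.mul_apply, Matrix.zero_apply]
  refine Finset.sum_eq_zero fun z _ => ?_
  simp only [shift, Matrix.of_apply]
  split_ifs with h1 h2 <;> try simp
  exact hS y h2.1 z h1.1 h2.2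

lemma shift_inv {S : Set (Fin n)} (hS : ∀ a ∈ S, ∀ b ∈ S, (b : ℕ) ≠ a + 1) :
    (1 - shift k S) * (1 + shift k S) = 1 ∧ (1 + shift k S) * (1 - shift k S) = 1 := by
  have h := shift_sq (k := k) hS
  constructor
  · rw [sub_mul, mul_add, mul_add, h]; simp
  · rw [add_mul, mul_sub, mul_sub, h]; simp

lemma lin_conj {A : Type*} [CommRing A] [Algebra k A] (f G G' : Matrix (Fin n) (Fin n) k)
    (M : Matrix (Fin n) (Fin n) A) :
    lin f (G.map (algebraMap k A) * M * G'.map (algebraMap k A))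
      = lin (G.transpose * f * G'.transpose) M := by
  have h1 : ∀ (f : Matrix (Fin n) (Fin n) k) (M : Matrix (Fin n) (Fin n) A),
      lin f M = (f.transpose.map (algebraMap k A) * M).trace := by
    intro f M
    rw [lin_apply, Matrix.trace, Finset.sum_comm]
    refine Finset.sum_congr rfl fun x _ => ?_
    rw [Matrix.diag_apply, Matrix.mul_apply]
    refine Finset.sum_congr rfl fun y _ => ?_
    rw [Matrix.map_apply, Matrix.transpose_apply, Algebra.smul_def]
  rw [h1, h1, Matrix.transpose_mul, Matrix.transpose_mul, Matrix.transpose_transpose,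
    Matrix.transpose_transpose, Matrix.map_mul, Matrix.map_mul, ← Matrix.mul_assoc,
    Matrix.trace_mul_comm]
  simp only [Matrix.mul_assoc]

lemma lin_sub_left {A : Type*} [CommRing A] [Algebra k A] (f g : Matrix (Fin n) (Fin n) k)
    (M : Matrix (Fin n) (Fin n) A) : lin (f - g) M = lin f M - lin g M := by
  simp only [lin_apply, Matrix.sub_apply, sub_smul, Finset.sum_sub_distrib]

lemma lin_single {A : Type*} [CommRing A] [Algebra k A] (a b : Fin n)
    (M : Matrix (Fin n) (Fin n) A) : lin (Matrix.single a b (1 : k)) M = M a b := by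
  rw [lin_apply, Finset.sum_eq_single a, Finset.sum_eq_single b]
  · simp
  · intro y _ hy; simp [hy.symm]
  · simp
  · intro x _ hx; simp [hx.symm]
  · simp

lemma lin_mem {σ : Type*} {W : σ → ℤ} {N : ℤ} (f : Matrix (Fin n) (Fin n) k)
    (M : Matrix (Fin n) (Fin n) (MvPolynomial σ k))
    (h : ∀ x y, f x y ≠ 0 → M x y ∈ WLe k W N) : lin f M ∈ WLe k W N := by
  rw [lin_apply]
  refine sum_mem fun x _ => sum_mem fun y _ => ?_
  by_cases h0 : f x y = 0
  · rw [h0, zero_smul]; exact zero_mem _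
  · exact Submodule.smul_mem _ _ (h x y h0)

open Classical in
lemma conj_proj_apply {S : Set (Fin n)} (hS : ∀ a ∈ S, ∀ b ∈ S, (b : ℕ) ≠ a + 1) (a x y : Fin n) :
    ((1 + shift k S).transpose * proj k a * (1 - shift k S).transpose) x y
      = proj k a x y - if x = a ∧ x ∈ S ∧ (y : ℕ) = x + 1 then 1 else 0 := by
  have h1 : (shift k S).transpose * proj k a * (shift k S).transpose = 0 := by
    ext x y
    rw [Matrix.mul_apply, Matrix.zero_apply]
    refine Finset.sum_eq_zero fun z _ => ?_
    rw [proj, Matrix.mul_diagonal]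
    simp only [shift, Matrix.transpose_apply, Matrix.of_apply]
    by_cases h2 : x ∈ S ∧ (z : ℕ) = x + 1
    · rw [if_neg (c := z ∈ S ∧ _) fun h3 => hS x h2.1 z h3.1 h2.2, mul_zero]
    · rw [if_neg h2, zero_mul, zero_mul]
  have h2 : (1 + shift k S).transpose * proj k a * (1 - shift k S).transpose
      = proj k a + ((shift k S).transpose * proj k a - proj k a * (shift k S).transpose) := by
    rw [Matrix.transpose_add, Matrix.transpose_sub, Matrix.transpose_one]
    have : (1 + (shift k S).transpose) * proj k a * (1 - (shift k S).transpose)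
        = proj k a + ((shift k S).transpose * proj k a - proj k a * (shift k S).transpose)
          - (shift k S).transpose * proj k a * (shift k S).transpose := by noncomm_ring
    rw [this, h1, sub_zero]
  rw [h2, Matrix.add_apply, sub_eq_add_neg (proj k a x y), Matrix.sub_apply, proj,
    Matrix.diagonal_mul, Matrix.mul_diagonal]
  congr 1
  simp only [shift, Matrix.transpose_apply, Matrix.of_apply]
  by_cases h3 : x ∈ S ∧ (y : ℕ) = x + 1
  · rw [if_pos h3, mul_one, one_mul]
    by_cases h5 : x = a
    · subst h5
      rw [if_neg (by rw [Fin.le_def]; lia), if_pos le_rfl, if_pos ⟨rfl, h3⟩]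
      ring
    · have h6 : y ≤ a ↔ x ≤ a := by
        rw [Fin.le_def, Fin.le_def]
        have := Fin.val_ne_of_ne h5
        lia
      simp only [h6, sub_self]
      rw [if_neg fun h => h5 h.1, neg_zero]
  · rw [if_neg h3, if_neg (c := x = a ∧ _) fun h => h3 h.2]
    simp

end Shift

/-! ### Flatness from a system of weights -/

section Weights

variable {k : Type*} [Field k] {n : ℕ}

lemma lead_sum {σ : Type*} {W : σ → ℤ} {ι : Type*} [Fintype ι] {μ : σ →₀ ℕ}
    {F : ι → MvPolynomial σ k} (i : ι) (h : Lead W μ (F i))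
    (h' : ∀ i', i' ≠ i → F i' ∈ WLe k W (wt W μ - 1)) : Lead W μ (∑ i, F i) := by
  classical
  rw [← Finset.add_sum_erase _ _ (Finset.mem_univ i)]
  exact h.add (sum_mem fun i' hi' => h' i' (Finset.ne_of_mem_erase hi'))

lemma support_walkExp {J σ : Type*} {emb : J → Fin n → Fin n → σ} {u : List J} {v : ℕ → Fin n}
    {s : σ} (hs : s ∈ (walkExp emb u v).support) :
    ∃ t : Fin u.length, s = emb (u.get t) (v t) (v (t + 1)) := by
  classical
  rw [walkExp] at hs
  obtain ⟨t, -, ht⟩ := Finset.mem_biUnion.1 (Finsupp.support_finsetSum hs)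
  exact ⟨t, Finset.mem_singleton.1 (Finsupp.support_single_subset ht)⟩

lemma lead_neg {σ : Type*} {W : σ → ℤ} {μ : σ →₀ ℕ} {F : MvPolynomial σ k} (h : Lead W μ F) :
    Lead W μ (-F) := by
  obtain ⟨c, hc, h⟩ := h
  refine ⟨-c, neg_ne_zero.2 hc, ?_⟩
  have : -F - monomial μ (-c) = -(F - monomial μ c) := by
    rw [map_neg]; ring
  rw [this]
  exact neg_mem h

/-- Flatness follows from weights on the edges such that each entry off the diagonal, and each
partial sum of diagonal entries other than the trace, has its own heaviest walk. The trace is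
taken care of by the block `i₀`, which is shifted by a generic multiple of a point at which the
trace does not vanish; here the maximality of `e' i₀ / e i₀` is used. The blocks `i` for which
`S i` is not empty are conjugated by the unipotent matrix which adds `a` to `a + 1`, for
`a ∈ S i`; this moves an entry next to the diagonal into a partial sum of diagonal entries. -/
theorem flat_of_weights [Infinite k] {d : ℕ} (hn : 1 ≤ n)
    {ι : Type*} [Fintype ι] [DecidableEq ι] {J : ι → Type*}
    (c : ∀ i, List (J i) →₀ k) (e e' : ι → ℕ) (he1 : ∀ i, 1 ≤ e i) (hed : ∀ i, e i ≤ d)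
    (hlen : ∀ i, ∀ u ∈ (c i).support, u.length ≤ e i)
    (he1' : ∀ i, 1 ≤ e' i) (hee' : ∀ i, e' i ≤ e i)
    (htr : ∀ i j, e' i < j → ∀ Y : J i → Matrix (Fin n) (Fin n) k,
      (ev (hom (c i) j) Y).trace = 0)
    (i₀ : ι) (V₀ : ∀ i, J i → Matrix (Fin n) (Fin n) k)
    (hV₀ : (ev (hom (c i₀) (e' i₀)) (V₀ i₀)).trace ≠ 0)
    (hmax : ∀ i, e' i * e i₀ ≤ e' i₀ * e i)
    (q : ι → ℕ) (L : ℕ) (hq : ∀ i, L = e i * q i)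
    (w : ∀ i, J i → Fin n → Fin n → ℤ) (hw : ∀ i j x y, 0 ≤ w i j x y)
    (hw₀ : ∀ j x y, w i₀ j x y = 0)
    (S : ι → Set (Fin n)) (hS₀ : S i₀ = ∅)
    (hS : ∀ i, ∀ a ∈ S i, ∀ b ∈ S i, (b : ℕ) ≠ a + 1) (hSn : ∀ i, ∀ a ∈ S i, (a : ℕ) + 1 < n)
    (hclosed : ∀ i, ∀ u ∈ (c i).support, ∀ v : ℕ → Fin n, v 0 = v u.length →
      walkSum (w i) u v ≤ u.length * q i)
    (hbig : ∀ i, (S i).Nonempty → ∀ u ∈ (c i).support, ∀ v : ℕ → Fin n,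
      walkSum (w i) u v ≤ L + d * (d + 1))
    (ω : ∀ i, List (J i)) (hω : ∀ i, ω i ∈ (c i).support) (hωe : ∀ i, (ω i).length = e i)
    (I : Fin n → Fin n → ι) (p : Fin n → Fin n → ℕ → Fin n)
    (hoff : ∀ a b, a ≠ b → I a b ≠ i₀ ∧ S (I a b) = ∅ ∧ p a b 0 = a ∧ p a b (e (I a b)) = b ∧
      ∃ N : ℤ, (L : ℤ) + d * (d + 1) + 1 ≤ N ∧ walkSum (w (I a b)) (ω (I a b)) (p a b) = N ∧
        (∀ u ∈ (c (I a b)).support, ∀ v : ℕ → Fin n, v 0 = a → v u.length = b →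
          (u = ω (I a b) ∧ ∀ t ≤ e (I a b), v t = p a b t) ∨ walkSum (w (I a b)) u v ≤ N - 1) ∧
        ∀ i, i ≠ I a b → S i = ∅ → ∀ u ∈ (c i).support, ∀ v : ℕ → Fin n, v 0 = a →
          v u.length = b → walkSum (w i) u v ≤ N - 1)
    (hdiag : ∀ (a : Fin n) (ha : (a : ℕ) + 1 < n), a ∈ S (I a a) ∧ (∀ i, a ∈ S i → i = I a a) ∧
      p a a 0 = a ∧ p a a (e (I a a)) = ⟨a + 1, ha⟩ ∧
      ∃ N : ℤ, (L : ℤ) + d + 1 ≤ N ∧ walkSum (w (I a a)) (ω (I a a)) (p a a) = N ∧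
        ∀ u ∈ (c (I a a)).support, ∀ v : ℕ → Fin n, v 0 = a → v u.length = ⟨a + 1, ha⟩ →
          (u = ω (I a a) ∧ ∀ t ≤ e (I a a), v t = p a a t) ∨ walkSum (w (I a a)) u v ≤ N - 1)
    (hdisj : ∀ a b a' b' : Fin n, (a = b → (a : ℕ) + 1 < n) → (a' = b' → (a' : ℕ) + 1 < n) →
      I a b = I a' b' → ∀ t t', t < e (I a b) → t' < e (I a b) → p a b t = p a' b' t' →
      p a b (t + 1) = p a' b' (t' + 1) → a = a' ∧ b = b') :
    (aeval (fun p : Fin n × Fin n => (∑ i, ev (c i) (gen k J i)) p.1 p.2) :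
      MvPolynomial (Fin n × Fin n) k →ₐ[k]
        MvPolynomial ((Σ i, J i) × (Fin n × Fin n)) k).toRingHom.Flat := by
  classical
  let σ := ((Σ i, J i) × (Fin n × Fin n)) ⊕ Unit
  let emb : ∀ i, J i → Fin n → Fin n → σ := fun i j x y => Sum.inl (⟨i, j⟩, (x, y))
  let τ : σ := Sum.inr ()
  let W : σ → ℤ := Sum.elim (fun s => w s.1.1 s.1.2 s.2.1 s.2.2) fun _ => q i₀ + 1
  have hWτ : W τ = q i₀ + 1 := rfl
  have hW : ∀ s, 0 ≤ W s := by
    rintro (s | s)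
    · exact hw _ _ _ _
    · change (0 : ℤ) ≤ q i₀ + 1
      positivity
  let last : Fin n := ⟨n - 1, by lia⟩
  let Y : ∀ i, J i → Matrix (Fin n) (Fin n) (MvPolynomial σ k) := fun i j =>
    Matrix.of fun x y => X (emb i j x y)
  let V : ∀ i, J i → Matrix (Fin n) (Fin n) k := fun i j => if i = i₀ then V₀ i j else 0
  let Y' : ∀ i, J i → Matrix (Fin n) (Fin n) (MvPolynomial σ k) := fun i j =>
    Matrix.of fun x y => X (emb i j x y) + X τ * C (V i j x y)
  have hY' : ∀ i, i ≠ i₀ → Y' i = Y i := by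
    intro i hi
    ext1 j
    ext1 x y
    simp [Y', Y, V, hi]
  let φ := algebraMap k (MvPolynomial σ k)
  let G : ∀ i, Matrix (Fin n) (Fin n) k := fun i => 1 + shift k (S i)
  let G' : ∀ i, Matrix (Fin n) (Fin n) k := fun i => 1 - shift k (S i)
  have hG : ∀ i, G' i * G i = 1 ∧ G i * G' i = 1 := fun i => shift_inv (hS i)
  have hmap1 : ∀ {A : Type _} [CommRing A] [Algebra k A] (M N : Matrix (Fin n) (Fin n) k),
      M * N = 1 → M.map (algebraMap k A) * N.map (algebraMap k A) = 1 := by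
    intro A _ _ M N h
    rw [← Matrix.map_mul, h, Matrix.map_one _ (map_zero _) (map_one _)]
  let Z : ∀ i, J i → Matrix (Fin n) (Fin n) (MvPolynomial σ k) := fun i j =>
    (G i).map φ * Y' i j * (G' i).map φ
  have hZ : ∀ i (f : Matrix (Fin n) (Fin n) k), lin f (ev (c i) (Z i))
      = lin ((G i).transpose * f * (G' i).transpose) (ev (c i) (Y' i)) := by
    intro i f
    rw [← lin_conj, ← ev_conj (hmap1 (A := MvPolynomial σ k) _ _ (hG i).1) (hmap1 _ _ (hG i).2)]
  have hZ0 : ∀ i (f : Matrix (Fin n) (Fin n) k), S i = ∅ → lin f (ev (c i) (Z i)) = lin f (ev (c i) (Y' i)) := by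
    intro i f hi
    have h1 : shift k (S i) = 0 := by
      ext x y
      simp [shift, hi]
    rw [hZ]
    simp only [G, G', h1]
    simp
  have hZn : ∀ i a, a ∉ S i → lin (proj k a) (ev (c i) (Z i)) = lin (proj k a) (ev (c i) (Y' i)) := by
    intro i a ha
    rw [hZ]
    congr 2
    ext x y
    rw [conj_proj_apply (hS i), if_neg, sub_zero]
    rintro ⟨rfl, h, -⟩
    exact ha h
  have hZs : ∀ i a (ha : a ∈ S i), lin (proj k a) (ev (c i) (Z i))
      = lin (proj k a) (ev (c i) (Y' i)) - ev (c i) (Y' i) a ⟨a + 1, hSn i a ha⟩ := by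
    intro i a ha
    rw [hZ, ← lin_single (k := k) a _ (ev (c i) (Y' i)), ← lin_sub_left]
    congr 2
    ext x y
    rw [conj_proj_apply (hS i), Matrix.sub_apply, Matrix.single_apply]
    congr 1
    refine if_congr ⟨?_, ?_⟩ rfl rfl
    · rintro ⟨rfl, -, h⟩
      exact ⟨rfl, Fin.ext h.symm⟩
    · rintro ⟨rfl, rfl⟩
      exact ⟨rfl, ha, rfl⟩
  have hq' : ∀ i, (L : ℤ) = e i * q i := fun i => by exact_mod_cast hq i
  have he1z : ∀ i, (1 : ℤ) ≤ e i := fun i => by exact_mod_cast he1 i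
  have hedz : ∀ i, (e i : ℤ) ≤ d := fun i => by exact_mod_cast hed i
  have hYX : ∀ i j x y, Y i j x y = X (emb i j x y) := fun i j x y => rfl
  have hY'W : ∀ j x y, Y' i₀ j x y - X τ * C (V i₀ j x y) ∈ WLe k W 0 := by
    intro j x y
    simp only [Y', Matrix.of_apply, add_sub_cancel_right]
    exact X_mem_WLe (hw₀ j x y).le
  -- the contributions of the block `i₀`
  have h₀ : ∀ f : Matrix (Fin n) (Fin n) k, lin f (ev (c i₀) (Z i₀)) ∈ WLe k W (L + d) := by
    intro f
    rw [hZ0 _ _ hS₀]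
    have h1 := lin_line (hW τ) hY'W (c i₀) (e i₀) (hlen i₀) f (e i₀) (fun j hj => ?_) le_rfl
    · rw [← sub_add_cancel (lin f (ev (c i₀) (Y' i₀)))
        (X τ ^ e i₀ * C (lin f (ev (hom (c i₀) (e i₀)) (V i₀))))]
      have h2 := hq' i₀
      have h3 := he1z i₀
      have h4 := hedz i₀
      refine add_mem (WLe_mono W ?_ h1) (X_pow_mul_C_mem _ _ _ ?_)
      · rw [hWτ]; nlinarith
      · rw [hWτ]; nlinarith
    · have : hom (c i₀) j = 0 := by
        rw [← Finsupp.support_eq_empty, Finset.eq_empty_iff_forall_notMem]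
        intro u hu
        obtain ⟨h2, h3⟩ := mem_hom_support hu
        have := hlen i₀ u h3
        lia
      rw [this, ev_zero, map_zero]
  -- the diagonal entries
  have hcl : ∀ i a, lin (proj k a) (ev (c i) (Y i)) ∈ WLe k W L := by
    intro i a
    refine lin_mem _ _ fun x y hxy => ?_
    have : x = y := by
      by_contra h
      exact hxy (Matrix.diagonal_apply_ne _ h)
    subst this
    refine ev_mem_WLe (hYX i) _ _ _ _ fun u hu v hv0 hv => ?_
    have h1 := hclosed i u hu v (hv0.trans hv.symm)
    have h2 : (u.length : ℤ) ≤ e i := by exact_mod_cast hlen i u hu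
    rw [hq' i]
    exact h1.trans (mul_le_mul_of_nonneg_right h2 (by positivity))
  let T := Fin n × Fin n
  let μ : T → σ →₀ ℕ := fun t => if t = (last, last) then Finsupp.single τ (e' i₀)
    else walkExp (emb (I t.1 t.2)) (ω (I t.1 t.2)) (p t.1 t.2)
  have hT : ∀ t : T, t ≠ (last, last) → t.1 = t.2 → (t.1 : ℕ) + 1 < n := by
    rintro ⟨a, b⟩ h1 (rfl : a = b)
    have h2 : a ≠ last := fun h => h1 (by rw [h])
    have h3 : (a : ℕ) ≠ n - 1 := fun h => h2 (Fin.ext h)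
    have := a.2
    change (a : ℕ) + 1 < n
    lia
  refine flat_of_functionals c Z (aeval (Sum.elim (fun s =>
      (((G' s.1.1).map (algebraMap k _) * gen k J s.1.1 s.1.2 * (G s.1.1).map (algebraMap k _) :
        Matrix (Fin n) (Fin n) (MvPolynomial ((Σ i, J i) × (Fin n × Fin n)) k))) s.2.1 s.2.2)
      fun _ => 0)) ?_ (Equiv.refl _)
    (fun t => if t.1 = t.2 then proj k t.1 else Matrix.single t.1 t.2 1) ?_ hW μ ?_ ?_ ?_
  · intro i j
    have h1 : (Y' i j).map (aeval (Sum.elim (fun s =>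
        (((G' s.1.1).map (algebraMap k _) * gen k J s.1.1 s.1.2 * (G s.1.1).map (algebraMap k _) :
          Matrix (Fin n) (Fin n) (MvPolynomial ((Σ i, J i) × (Fin n × Fin n)) k))) s.2.1 s.2.2)
        fun _ => 0)) = (G' i).map (algebraMap k _) * gen k J i j * (G i).map (algebraMap k _) := by
      ext1 x y
      simp [Y', emb, τ]
    have h2 : ∀ (ρ : MvPolynomial σ k →ₐ[k] MvPolynomial ((Σ i, J i) × (Fin n × Fin n)) k)
        (M : Matrix (Fin n) (Fin n) k), (M.map φ).map ρ = M.map (algebraMap k _) := by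
      intro ρ M
      ext1 x y
      simp [φ]
    have h3 : (G i).map (algebraMap k (MvPolynomial ((Σ i, J i) × (Fin n × Fin n)) k)) *
      (G' i).map (algebraMap k _) = 1 := hmap1 _ _ (hG i).2
    simp only [Z]
    rw [Matrix.map_mul, Matrix.map_mul, h1, h2, h2]
    calc _ = ((G i).map (algebraMap k _) * (G' i).map (algebraMap k _)) * gen k J i j *
          ((G i).map (algebraMap k _) * (G' i).map (algebraMap k _)) := by
          simp only [Matrix.mul_assoc]
      _ = gen k J i j := by rw [h3, one_mul, mul_one]
  · intro M hM
    have h1 : ∀ a b, a ≠ b → M a b = 0 := by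
      intro a b hab
      have := hM (a, b)
      rwa [if_neg hab, lin_single] at this
    have h2 : ∀ a, ∑ x with x ≤ a, M x x = 0 := by
      intro a
      have := hM (a, a)
      rw [if_pos rfl, lin_apply] at this
      rw [← this, Finset.sum_filter]
      refine Finset.sum_congr rfl fun x _ => ?_
      rw [Finset.sum_eq_single x]
      · simp [proj]
      · intro y _ hy
        simp [proj, Matrix.diagonal_apply_ne _ hy.symm]
      · simp
    have h3 : ∀ (m : ℕ) (hm : m < n), M ⟨m, hm⟩ ⟨m, hm⟩ = 0 := by
      intro m
      induction m using Nat.strong_induction_on with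
      | _ m ih =>
        intro hm
        have h4 := h2 ⟨m, hm⟩
        rwa [Finset.sum_eq_single ⟨m, hm⟩] at h4
        · intro x hx hne
          have h5 := (Finset.mem_filter.1 hx).2
          exact ih x (lt_of_le_of_ne h5 fun h => hne (Fin.ext h)) x.2
        · simp
    ext a b
    by_cases hab : a = b
    · subst hab
      exact h3 a a.2
    · exact h1 a b hab
  · intro t ht
    simp only [μ] at ht
    split_ifs at ht with h
    · rw [Finsupp.single_eq_zero] at ht
      have := he1' i₀
      lia
    · have h1 := congrArg (fun m => m.degree) ht
      simp only [walkExp, map_sum, Finsupp.degree_single, map_zero] at h1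
      rw [Finset.sum_const, Finset.card_univ, Fintype.card_fin, hωe] at h1
      have := he1 (I t.1 t.2)
      simp at h1
      lia
  · have hτ : ∀ t : T, t ≠ (last, last) → τ ∉ (μ t).support := by
      intro t ht h
      simp only [μ, if_neg ht] at h
      obtain ⟨_, h⟩ := support_walkExp h
      exact absurd h (by simp [τ, emb])
    have hτ' : (μ (last, last)).support ⊆ {τ} := by
      simp only [μ, if_true]
      exact Finsupp.support_single_subset
    intro t t' htt'
    by_cases h : t = (last, last)
    · subst h
      exact Disjoint.mono_left hτ' (Finset.disjoint_singleton_left.2 (hτ t' htt'.symm))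
    by_cases h' : t' = (last, last)
    · subst h'
      exact Disjoint.mono_right hτ' (Finset.disjoint_singleton_right.2 (hτ t htt'))
    refine Finset.disjoint_left.2 fun s hs hs' => htt' ?_
    have h2 := hT t h
    have h2' := hT t' h'
    simp only [μ, if_neg h] at hs
    simp only [μ, if_neg h'] at hs'
    obtain ⟨x, hx⟩ := support_walkExp hs
    obtain ⟨x', hx'⟩ := support_walkExp hs'
    have h3 := Sum.inl_injective (hx.symm.trans hx')
    obtain ⟨h4, h5⟩ := Prod.ext_iff.1 h3
    obtain ⟨h6, h7⟩ := Prod.ext_iff.1 h5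
    have h8 : I t.1 t.2 = I t'.1 t'.2 := (Sigma.ext_iff.1 h4).1
    obtain ⟨h9, h10⟩ := hdisj t.1 t.2 t'.1 t'.2 h2 h2' h8 x x' (by rw [← hωe]; exact x.2)
      (by rw [h8, ← hωe]; exact x'.2) h6 h7
    exact Prod.ext h9 h10
  · rintro ⟨a, b⟩
    by_cases hl : (a, b) = (last, last)
    · -- the trace
      obtain ⟨rfl, rfl⟩ := Prod.ext_iff.1 hl
      have hproj : proj k last = 1 := by
        rw [proj, ← Matrix.diagonal_one]
        congr 1
        ext1 x
        rw [if_pos]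
        have := x.2
        exact Fin.le_def.2 (by change (x : ℕ) ≤ n - 1; lia)
      simp only [if_true, μ]
      have hwt : wt W (Finsupp.single τ (e' i₀)) = (q i₀ + 1) * e' i₀ := by
        rw [wt, Finsupp.weight_single, hWτ, nsmul_eq_mul, mul_comm]
      have h1 : (1 : ℤ) ≤ e' i₀ := by exact_mod_cast he1' i₀
      refine lead_sum i₀ ?_ fun i hi => ?_
      · rw [hproj, hZ0 _ _ hS₀]
        have h2 := lin_line (hW τ) hY'W (c i₀) (e i₀) (hlen i₀) 1 (e' i₀) (fun j hj =>
          lin_ev_eq_zero 1 _ (fun Y => by rw [← trace_eq_lin]; exact htr i₀ j hj Y) _) (hee' i₀)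
        rw [← sub_add_cancel (lin (1 : Matrix (Fin n) (Fin n) k) (ev (c i₀) (Y' i₀)))
          (X τ ^ e' i₀ * C (lin (1 : Matrix (Fin n) (Fin n) k) (ev (hom (c i₀) (e' i₀)) (V i₀)))), add_comm]
        refine (lead_C_mul τ _ ?_).add (WLe_mono W ?_ h2)
        · have : V i₀ = V₀ i₀ := by
            ext1 j
            simp [V]
          rw [← trace_eq_lin, this]
          exact hV₀
        · rw [hwt, hWτ]
          have : (0 : ℤ) ≤ q i₀ := by positivity
          linarith
      · rw [hZn _ _ fun h => by
          have := hSn i _ h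
          change n - 1 + 1 < n at this
          lia, hY' i hi, hproj, ev_eq_sum_hom (c i) (e i) (hlen i), map_sum]
        refine sum_mem fun j _ => ?_
        rcases lt_or_ge (e' i) j with hj | hj
        · rw [lin_ev_eq_zero 1 _ (fun Y => by rw [← trace_eq_lin]; exact htr i j hj Y) _]
          exact zero_mem _
        · refine lin_mem _ _ fun x y hxy => ?_
          have : x = y := by
            by_contra h
            exact hxy (Matrix.one_apply_ne h)
          subst this
          refine ev_mem_WLe (hYX i) _ _ _ _ fun u hu v hv0 hv => ?_
          obtain ⟨h2, h3⟩ := mem_hom_support hu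
          have h4 := hclosed i u h3 v (hv0.trans hv.symm)
          -- here the maximality of the ratio `e' i₀ / e i₀` enters
          have h5 : e' i * q i ≤ e' i₀ * q i₀ := by
            refine le_of_mul_le_mul_right (a := e i * e i₀) ?_ (Nat.mul_pos (he1 i) (he1 i₀))
            calc e' i * q i * (e i * e i₀) = e' i * e i₀ * (e i * q i) := by ring
              _ ≤ e' i₀ * e i * (e i * q i) := Nat.mul_le_mul_right _ (hmax i)
              _ = e' i₀ * e i * (e i₀ * q i₀) := by rw [← hq i, ← hq i₀]
              _ = e' i₀ * q i₀ * (e i * e i₀) := by ring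
          have h6 : u.length * q i ≤ e' i₀ * q i₀ :=
            (Nat.mul_le_mul_right _ (h2.trans_le hj)).trans h5
          have h7 : (u.length * q i : ℤ) ≤ e' i₀ * q i₀ := by exact_mod_cast h6
          rw [hwt]
          refine h4.trans ?_
          linarith
    have hμ' : μ (a, b) = walkExp (emb (I a b)) (ω (I a b)) (p a b) := if_neg hl
    have hwt : wt W (μ (a, b)) = walkSum (w (I a b)) (ω (I a b)) (p a b) := by
      rw [hμ', wt_walkExp]
      rfl
    by_cases hab : a = b
    · -- a partial sum of the diagonal entries
      subst hab
      have ha := hT (a, a) hl rfl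
      obtain ⟨haS, huniq, hp0, hpe, N, hN, hpN, hN'⟩ := hdiag a ha
      have hI₀ : I a a ≠ i₀ := fun h => by
        rw [h, hS₀] at haS
        exact haS
      simp only [if_true]
      refine lead_sum (I a a) ?_ fun i hi => ?_
      · rw [hZs _ _ haS, hY' _ hI₀, sub_eq_add_neg, add_comm]
        refine Lead.add (lead_neg ?_) (WLe_mono W ?_ (hcl _ a))
        · have h1 := ev_lead (W := W) (hYX (I a a)) (c (I a a)) (ω (I a a)) (hω _) (p a a)
            fun u hu v hv0 hv => by
              rw [hωe, hpe] at hv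
              rw [hp0] at hv0
              have := hN' u hu v hv0 hv
              rw [← hpN] at this
              rw [hωe]
              exact this
          rw [hωe, hp0, hpe] at h1
          rw [hμ']
          exact h1
        · rw [hwt, hpN]
          linarith [Int.natCast_nonneg d]
      · rw [hwt, hpN]
        by_cases hi₀ : i = i₀
        · subst hi₀
          exact WLe_mono W (by linarith) (h₀ _)
        · rw [hZn _ _ fun h => hi (huniq i h), hY' i hi₀]
          exact WLe_mono W (by linarith [Int.natCast_nonneg d]) (hcl i a)
    · -- an entry off the diagonal
      obtain ⟨hI₀, hSI, hp0, hpe, N, hN, hpN, hN', hother⟩ := hoff a b hab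
      have hd0 := Int.natCast_nonneg d
      simp only [if_neg hab]
      refine lead_sum (I a b) ?_ fun i hi => ?_
      · rw [hZ0 _ _ hSI, hY' _ hI₀, lin_single]
        have h1 := ev_lead (W := W) (hYX (I a b)) (c (I a b)) (ω (I a b)) (hω _) (p a b)
          fun u hu v hv0 hv => by
            rw [hωe, hpe] at hv
            rw [hp0] at hv0
            have := hN' u hu v hv0 hv
            rw [← hpN] at this
            rw [hωe]
            exact this
        rw [hωe, hp0, hpe] at h1
        rw [hμ']
        exact h1
      · rw [hwt, hpN]
        by_cases hi₀ : i = i₀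
        · subst hi₀
          exact WLe_mono W (by nlinarith) (h₀ _)
        rcases (S i).eq_empty_or_nonempty with hSi | hSi
        · rw [hZ0 _ _ hSi, hY' i hi₀, lin_single]
          exact ev_mem_WLe (hYX i) _ _ _ _ fun u hu v hv0 hv => hother i hi hSi u hu v hv0 hv
        · rw [hZ, hY' i hi₀]
          refine lin_mem _ _ fun x y _ => ev_mem_WLe (hYX i) _ _ _ _ fun u hu v _ _ => ?_
          have := hbig i hSi u hu v
          refine this.trans ?_
          linarith

end Weights

/-! ### Matrices of large size -/

section Large

variable {k : Type*} [Field k] {n : ℕ}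

/-- The weight of the walk along which the position grows linearly. -/
lemma tile_walk_eq {J : Type*} {Q e ρ : ℕ} {lay π : ℕ → ℕ} {h B : ℤ} {ω : List J}
    (hlay : ∀ t ≤ e, lay (π t) = t % e) (hω : ω.length = e) {p : ℕ → Fin n} {α Δ : ℤ}
    (hp : ∀ t ≤ e, (p t : ℕ) / Q = π t ∧ tilePos Q e ρ lay (p t) = e * α + t * Δ) :
    walkSum (edgeWt (TileEdge Q e π ω) (tileCorr Q e ρ lay h) B) ω p
      = e * B + h * ((p e : ℤ) - p 0) - e * Δ ^ 2 := by
  subst hω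
  have hmodpot : ∀ t ≤ ω.length, t % ω.length = 0 →
      tilePot Q lay h (p t) = h * (p t : ℕ) := by
    intro t ht h6
    rw [tilePot, (hp t ht).1, hlay t ht, if_pos h6]
  have h1 : ∀ t : Fin ω.length,
      edgeWt (TileEdge Q ω.length π ω) (tileCorr Q ω.length ρ lay h) B (ω.get t) (p t) (p (t + 1))
        = B + tileCorr Q ω.length ρ lay h (p t) (p (t + 1)) := fun t =>
    if_pos ⟨t, t.2, (hp t t.2.le).1, (hp (t + 1) t.2).1, by simp⟩
  have h2 : ∑ t ∈ Finset.range ω.length,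
      (tilePos Q ω.length ρ lay (p (t + 1)) - tilePos Q ω.length ρ lay (p t)) ^ 2
        = ∑ t ∈ Finset.range ω.length, Δ ^ 2 := by
    refine Finset.sum_congr rfl fun t ht => ?_
    have ht := Finset.mem_range.1 ht
    rw [(hp t ht.le).2, (hp (t + 1) ht).2]
    push_cast
    ring
  simp only [walkSum, h1, Finset.sum_add_distrib]
  rw [tileCorr_sum, h2, hmodpot _ le_rfl (Nat.mod_self _),
    hmodpot 0 (Nat.zero_le _) (Nat.zero_mod _)]
  simp
  ring

set_option maxHeartbeats 2000000 in
/-- Flatness for matrices whose size exceeds the degree of the words: the weights, the walks of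
largest weight and the sets of indices demanded by `flat_of_weights` are supplied by the tile
blocks for the entries off the diagonal and by the diagonal blocks for the entries on it. -/
theorem core_large [IsAlgClosed k] [CharZero k] {d : ℕ} (hd : 2 ≤ d) (hnd : d + 1 ≤ n)
    {ι : Type*} [Fintype ι] [DecidableEq ι] {J : ι → Type*}
    (c : ∀ i, List (J i) →₀ k) (hlen : ∀ i, ∀ u ∈ (c i).support, u.length ≤ d)
    (hgen : ∀ i, Generating n (c i)) (hm : 1000 * d ^ 3 ≤ Fintype.card ι) :
    (aeval (fun p : Fin n × Fin n => (∑ i, ev (c i) (gen k J i)) p.1 p.2) :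
      MvPolynomial (Fin n × Fin n) k →ₐ[k]
        MvPolynomial ((Σ i, J i) × (Fin n × Fin n)) k).toRingHom.Flat := by
  classical
  have hn : 1 ≤ n := by lia
  have hinf : Infinite k := IsAlgClosed.instInfinite
  choose e' he1' hed' hout' hin' using fun i => exists_trace_degree hn (hgen i) (hlen i)
  -- the largest length of a word
  have hex : ∀ i, ∃ ω ∈ (c i).support, ∀ u ∈ (c i).support, u.length ≤ ω.length := by
    intro i
    refine Finset.exists_max_image _ _ (Finset.nonempty_iff_ne_empty.2 fun h => ?_)
    obtain ⟨Y, hY⟩ := hout' i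
    have : hom (c i) (e' i) = 0 := by
      rw [← Finsupp.support_eq_empty, Finset.eq_empty_iff_forall_notMem]
      intro u hu
      have := (mem_hom_support hu).2
      rw [h] at this
      exact absurd this (Finset.notMem_empty _)
    rw [this, ev_zero, Matrix.trace_zero] at hY
    exact hY rfl
  choose ω hω hωmax using hex
  obtain ⟨e, he⟩ : ∃ e : ι → ℕ, ∀ i, (ω i).length = e i := ⟨_, fun i => rfl⟩
  have hlen' : ∀ i, ∀ u ∈ (c i).support, u.length ≤ e i := fun i u hu => by
    rw [← he]; exact hωmax i u hu
  have hed : ∀ i, e i ≤ d := fun i => by rw [← he]; exact hlen i _ (hω i)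
  have hee' : ∀ i, e' i ≤ e i := by
    intro i
    obtain ⟨Y, hY⟩ := hout' i
    have : (hom (c i) (e' i)).support.Nonempty := by
      rw [Finset.nonempty_iff_ne_empty, Ne, Finsupp.support_eq_empty]
      intro h
      rw [h, ev_zero, Matrix.trace_zero] at hY
      exact hY rfl
    obtain ⟨u, hu⟩ := this
    obtain ⟨h1, h2⟩ := mem_hom_support hu
    rw [← h1]
    exact hlen' i u h2
  have he1 : ∀ i, 1 ≤ e i := fun i => (he1' i).trans (hee' i)
  have hd3 : d ^ 3 = d * d * d := by ring
  have hcpos : 0 < Fintype.card ι := by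
    have : 0 < d ^ 3 := by positivity
    lia
  have _ : Nonempty ι := Fintype.card_pos_iff.1 hcpos
  obtain ⟨i₀, hi₀⟩ := exists_max_ratio e e' he1
  choose V₀ hV₀ using hout'
  -- the intervals of length `Q`, of which there are between `d + 1` and `2 (d + 1)`
  obtain ⟨Q, hQ, hQD, hQn⟩ : ∃ Q, 1 ≤ Q ∧ Q * (d + 1) ≤ n ∧ n < Q * (2 * (d + 1)) := by
    have h1 : 1 ≤ n / (d + 1) := (Nat.one_le_div_iff (by lia)).2 hnd
    have h2 := Nat.lt_div_mul_add (a := n) (b := d + 1) (by lia)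
    refine ⟨n / (d + 1), h1, Nat.div_mul_le_self _ _, ?_⟩
    nlinarith
  have hQn' : Q ≤ n := by nlinarith
  have hdiv : ∀ a : Fin n, (a : ℕ) / Q < 2 * (d + 1) := fun a => by
    rw [Nat.div_lt_iff_lt_mul (by lia)]
    have := a.2
    lia
  -- the constants entering the weights
  obtain ⟨h, hh⟩ : ∃ h : ℤ, h = d * n ^ 2 + 4 * d ^ 2 := ⟨_, rfl⟩
  have hh0 : 0 ≤ h := by rw [hh]; positivity
  obtain ⟨m, hm'⟩ : ∃ m : ℤ, m = h * n + (d * n) ^ 2 + (d + 1) := ⟨_, rfl⟩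
  have hm0 : 0 ≤ m := by rw [hm']; positivity
  have hmd : (d : ℤ) + 1 ≤ m := by
    rw [hm']
    have : 0 ≤ h * n + (d * n : ℤ) ^ 2 := by positivity
    linarith
  have hdvd : ∃ L : ℕ, ∀ i, ∃ q : ℕ, L = e i * q ∧ d * m ≤ q := by
    refine ⟨d.factorial * (d * m.toNat), fun i => ?_⟩
    obtain ⟨q, hq⟩ := Nat.dvd_factorial (he1 i) (hed i)
    refine ⟨q * (d * m.toNat), by rw [hq, mul_assoc], ?_⟩
    have h1 : 1 ≤ q := by
      rcases Nat.eq_zero_or_pos q with h | h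
      · rw [h, mul_zero] at hq
        exact absurd hq (Nat.factorial_ne_zero d)
      · exact h
    have h2 : d * m.toNat ≤ q * (d * m.toNat) := Nat.le_mul_of_pos_left _ h1
    have h3 : ((d * m.toNat : ℕ) : ℤ) = d * m := by
      push_cast
      rw [Int.toNat_of_nonneg hm0]
    rw [← h3]
    exact_mod_cast h2
  obtain ⟨L, hdvd⟩ := hdvd
  choose q hq hqm using hdvd
  have hdz : (2 : ℤ) ≤ d := by exact_mod_cast hd
  have hqm' : ∀ i, m ≤ q i := fun i => by
    have := hqm i
    nlinarith
  have hqd : ∀ i, (d * (d + 1) : ℤ) ≤ q i := fun i => by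
    have := hqm i
    nlinarith
  have hqz : ∀ i, (e i * q i : ℤ) = L := fun i => by exact_mod_cast (hq i).symm
  have hedz : ∀ i, (e i : ℤ) ≤ d := fun i => by exact_mod_cast hed i
  have he1z : ∀ i, (1 : ℤ) ≤ e i := fun i => by exact_mod_cast he1 i
  have hlenz : ∀ i, ∀ u ∈ (c i).support, (u.length * q i : ℤ) ≤ L := fun i u hu => by
    rw [← hqz i]
    exact mul_le_mul_of_nonneg_right (by exact_mod_cast hlen' i u hu) (by positivity)
  -- the roles of the blocks
  let T := (Fin (2 * (d + 1)) × Fin (2 * (d + 1))) × Bool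
  obtain ⟨kind, hk0, hk1, hk2, hk3⟩ := exists_kinds (by lia) e he1 hed i₀ T (Fin (2 * (d + 1))) (by
    simp only [T, Fintype.card_prod, Fintype.card_fin, Fintype.card_bool]
    refine le_trans ?_ hm
    rw [hd3]
    nlinarith [Nat.mul_le_mul hd hd, Nat.mul_le_mul_right d (Nat.mul_le_mul hd hd),
      Nat.mul_le_mul_right d (Nat.mul_le_mul_right d hd)])
  choose π lay hπ0 hπe hπd hlay using
    fun i (I J : ℕ) => exists_layers d (e i) I J (he1 i) (hed i)
  let sg : Bool → ℤ := fun s => if s then h else -h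
  have hsg : ∀ s, |sg s| = h := by
    rintro (_ | _)
    · simp [sg, abs_of_nonneg hh0]
    · simp [sg, abs_of_nonneg hh0]
  let wT : ∀ i, T × ℕ → J i → Fin n → Fin n → ℤ := fun i x =>
    edgeWt (TileEdge Q (e i) (π i x.1.1.1 x.1.1.2) (ω i))
      (tileCorr Q (e i) x.2 (lay i x.1.1.1 x.1.1.2) (sg x.1.2)) (q i)
  let wS : ∀ i, Fin (2 * (d + 1)) → J i → Fin n → Fin n → ℤ := fun i s =>
    edgeWt (DiagEdge (e i) (diagSet n d s) (diagPath n (e i)) (ω i)) (fun _ _ => d + 1) (q i)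
  let w : ∀ i, J i → Fin n → Fin n → ℤ := fun i =>
    (kind i).elim (fun _ _ _ => 0) (Sum.elim (wT i) (wS i))
  let S : ι → Set (Fin n) := fun i =>
    (kind i).elim ∅ (Sum.elim (fun _ => ∅) fun s => diagSet n d s)
  have hcases : ∀ i, (kind i = none ∧ w i = (fun _ _ _ => 0) ∧ S i = ∅) ∨
      (∃ x, kind i = some (Sum.inl x) ∧ w i = wT i x ∧ S i = ∅) ∨
      ∃ s, kind i = some (Sum.inr s) ∧ w i = wS i s ∧ S i = diagSet n d s := by
    intro i
    rcases hki : kind i with _ | (x | s)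
    · exact Or.inl ⟨rfl, by simp only [w, hki]; rfl, by simp only [S, hki]; rfl⟩
    · exact Or.inr (Or.inl ⟨x, rfl, by simp only [w, hki]; rfl, by simp only [S, hki]; rfl⟩)
    · exact Or.inr (Or.inr ⟨s, rfl, by simp only [w, hki]; rfl, by simp only [S, hki]; rfl⟩)
  have hwT : ∀ i x, kind i = some (Sum.inl x) → w i = wT i x ∧ S i = ∅ := fun i x hx =>
    ⟨by simp only [w, hx]; rfl, by simp only [S, hx]; rfl⟩
  have hwS : ∀ i s, kind i = some (Sum.inr s) → w i = wS i s ∧ S i = diagSet n d s := fun i s hx =>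
    ⟨by simp only [w, hx]; rfl, by simp only [S, hx]; rfl⟩
  have hcorr : ∀ i (x : T × ℕ) (a b : Fin n),
      |tileCorr Q (e i) x.2 (lay i x.1.1.1 x.1.1.2) (sg x.1.2) a b| ≤ m := by
    intro i x a b
    refine (abs_tileCorr_le (he1 i) (hed i) hQ hQn' a b).trans ?_
    rw [hsg, hm']
    linarith [Int.natCast_nonneg d]
  have hinj : ∀ i s, ∀ a ∈ diagSet n d s, ∀ a' ∈ diagSet n d s, ∀ t ≤ e i, ∀ t' ≤ e i,
      diagPath n (e i) a t = diagPath n (e i) a' t' → a = a' ∧ t = t' := fun i s =>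
    diagPath_inj (hed i) hnd
  -- the tiles
  let Δ : Fin n → Fin n → ℤ := fun a b => ((b % Q : ℕ) : ℤ) - ((a % Q : ℕ) : ℤ)
  let tt : Fin n → Fin n → T := fun a b => ((⟨a / Q, hdiv a⟩, ⟨b / Q, hdiv b⟩), decide (a < b))
  have htile : ∀ a b : Fin n, ∃ i ρ, ∃ p : ℕ → Fin n, kind i = some (Sum.inl (tt a b, ρ)) ∧
      ρ < e i ∧ (ρ : ℤ) = Δ a b % e i ∧ p 0 = a ∧ p (e i) = b ∧ ∀ t ≤ e i,
        p t / Q = π i (tt a b).1.1 (tt a b).1.2 t ∧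
        tilePos Q (e i) ρ (lay i (tt a b).1.1 (tt a b).1.2) (p t)
          = e i * ((a % Q : ℕ) : ℤ) + t * Δ a b := by
    intro a b
    obtain ⟨E, hE1, hE2, hE3⟩ := hk1 (tt a b)
    have hE0 : (0 : ℤ) < E := by exact_mod_cast hE1
    have h1 := Int.emod_nonneg (Δ a b) hE0.ne'
    have h2 := Int.emod_lt_of_pos (Δ a b) hE0
    obtain ⟨i, hi⟩ := hE3 (Δ a b % E).toNat (by lia)
    obtain ⟨h3, h4⟩ := hE2 i _ hi
    have h5 : (((Δ a b % E).toNat : ℕ) : ℤ) = Δ a b % e i := by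
      rw [h3, Int.toNat_of_nonneg h1]
    obtain ⟨p, hp0, hpe, hp⟩ := tile_path (D := d + 1) (hlay i (tt a b).1.1 (tt a b).1.2) (he1 i) hQ
      hQD (hπd i (tt a b).1.1 (tt a b).1.2) (a := a) (b := b) (hπ0 i _ _).symm (hπe i _ _).symm
      (Δ := Δ a b) rfl h5
    exact ⟨i, _, p, hi, by rw [h3]; exact h4, h5, hp0, hpe, hp⟩
  choose It ρt pt hIt hρlt hρt hpt0 hpte hpt using htile
  choose Id hId using hk2
  let cl : Fin n → Fin (2 * (d + 1)) := fun a => ⟨diagClass n d a, diagClass_lt n d a⟩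
  let I : Fin n → Fin n → ι := fun a b => if a = b then Id (cl a) else It a b
  let p : Fin n → Fin n → ℕ → Fin n := fun a b =>
    if a = b then diagPath n (e (Id (cl a))) a else pt a b
  have hIa : ∀ a, I a a = Id (cl a) := fun a => if_pos rfl
  have hpa : ∀ a, p a a = diagPath n (e (Id (cl a))) a := fun a => if_pos rfl
  have hIab : ∀ a b, a ≠ b → I a b = It a b := fun a b h => if_neg h
  have hpab : ∀ a b, a ≠ b → p a b = pt a b := fun a b h => if_neg h
  have hcl : ∀ a : Fin n, (a : ℕ) + 1 < n → a ∈ diagSet n d (cl a) := fun a ha => ⟨ha, rfl⟩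
  refine flat_of_weights hn c e e' he1 hed hlen' he1' hee' hin' i₀ (fun i => V₀ i) (hV₀ i₀) hi₀
    q L hq w ?_ ?_ S ?_ ?_ ?_ ?_ ?_ ω hω he I p ?_ ?_ ?_
  · intro i j x y
    rcases hcases i with ⟨-, hw, -⟩ | ⟨s, -, hw, -⟩ | ⟨s, -, hw, -⟩
    · rw [hw]
    · rw [hw]
      exact edgeWt_nonneg (hcorr i s) (hqm' i) j x y
    · rw [hw]
      refine edgeWt_nonneg (m := m) (fun x y => ?_) (hqm' i) j x y
      rw [abs_of_nonneg (by positivity)]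
      exact hmd
  · intro j x y
    simp only [w, hk0]
    rfl
  · simp only [S, hk0]
    rfl
  · intro i
    rcases hcases i with ⟨-, -, hS⟩ | ⟨s, -, -, hS⟩ | ⟨s, -, -, hS⟩ <;> rw [hS]
    · simp
    · simp
    · exact fun a ha b hb => diagSet_succ (by lia) ha hb
  · intro i
    rcases hcases i with ⟨-, -, hS⟩ | ⟨s, -, -, hS⟩ | ⟨s, -, -, hS⟩ <;> rw [hS]
    · simp
    · simp
    · exact fun a ha => ha.1
  · intro i u hu v hv
    rcases hcases i with ⟨-, hw, -⟩ | ⟨s, -, hw, -⟩ | ⟨s, -, hw, -⟩ <;> rw [hw]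
    · simp only [walkSum, Finset.sum_const_zero]
      positivity
    · exact tile_closed (hcorr i s) hm0 (hqm i) (hlen i u hu) hv
    · exact diag_closed (hinj i s) (hqd i) (hed i) (hlen' i u hu) hv
  · intro i hSi u hu v
    have h1 := hlenz i u hu
    have h2 : (u.length : ℤ) ≤ d := by exact_mod_cast hlen i u hu
    rcases hcases i with ⟨-, hw, hS⟩ | ⟨s, -, hw, hS⟩ | ⟨s, -, hw, hS⟩
    · rw [hS] at hSi
      exact absurd hSi Set.not_nonempty_empty
    · rw [hS] at hSi
      exact absurd hSi Set.not_nonempty_empty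
    · rw [hw]
      rcases diag_walk (hinj i s) (hqd i) (hed i) (hlen' i u hu) v (ω := ω i) with h | ⟨-, h, -⟩
      · refine h.trans (h1.trans ?_)
        have : (0 : ℤ) ≤ d * (d + 1) := by positivity
        linarith
      · simp only [wS]
        rw [h]
        nlinarith
  · intro a b hab
    rw [hIab a b hab, hpab a b hab]
    obtain ⟨i, hi⟩ : ∃ i, i = It a b := ⟨_, rfl⟩
    obtain ⟨ρ, hρ⟩ : ∃ ρ, ρ = ρt a b := ⟨_, rfl⟩
    have g1 := hIt a b
    have g2 := hρlt a b
    have g3 := hρt a b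
    have g4 := hpte a b
    have g5 := hpt a b
    rw [← hi, ← hρ] at g1 g2 g3 g5
    rw [← hi] at g4
    rw [← hi]
    obtain ⟨hwi, hSi⟩ := hwT i _ g1
    have hne : i ≠ i₀ := fun h => by
      rw [h, hk0] at g1
      exact absurd g1 (by simp)
    have hab' : (a : ℕ) ≠ b := fun h => hab (Fin.ext h)
    have hsab : 1 ≤ |(b : ℤ) - a| := Int.one_le_abs (by lia)
    have hsg1 : sg (tt a b).2 * ((b : ℤ) - a) = h * |(b : ℤ) - a| := by
      by_cases hlt : a < b
      · have h1 : (a : ℕ) < b := hlt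
        simp only [sg, tt, hlt, decide_true, if_true]
        rw [abs_of_pos (by lia)]
      · have h1 : (b : ℕ) < a := by
          have : ¬ (a : ℕ) < b := hlt
          lia
        simp only [sg, tt, hlt, decide_false, Bool.false_eq_true, if_false]
        rw [abs_of_neg (by lia)]
        ring
    have hsg2 : ∀ s, s ≠ (tt a b).2 → sg s * ((b : ℤ) - a) ≤ 0 := by
      intro s hs
      have : sg s = - sg (tt a b).2 := by
        revert hs
        generalize (tt a b).2 = s'
        rcases s with _ | _ <;> rcases s' with _ | _ <;> simp [sg]
      rw [this, neg_mul, hsg1]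
      have := mul_nonneg hh0 (abs_nonneg ((b : ℤ) - a))
      linarith
    have hh1 := mul_le_mul_of_nonneg_left hsab hh0
    have hΔ2 : (Δ a b) ^ 2 ≤ (n : ℤ) ^ 2 := by
      have h1 := Nat.mod_lt (a : ℕ) hQ
      have h2 := Nat.mod_lt (b : ℕ) hQ
      simp only [Δ]
      generalize (a : ℕ) % Q = x at h1 ⊢
      generalize (b : ℕ) % Q = y at h2 ⊢
      refine sq_le_sq' ?_ ?_ <;> lia
    have hΔe : e i * (Δ a b) ^ 2 ≤ d * (n : ℤ) ^ 2 :=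
      mul_le_mul (hedz i) hΔ2 (sq_nonneg _) (by positivity)
    have hd4 : (d : ℤ) * (d + 1) + 1 ≤ 4 * d ^ 2 := by nlinarith
    have hdd : (0 : ℤ) ≤ d * (d + 1) := by positivity
    have hD : (0 : ℤ) ≤ e i * (Δ a b) ^ 2 := by positivity
    have hLN : (L : ℤ) + d * (d + 1) + 1 ≤ L + h * |(b : ℤ) - a| - e i * (Δ a b) ^ 2 := by
      linarith
    refine ⟨hne, hSi, hpt0 a b, g4, L + h * |(b : ℤ) - a| - e i * (Δ a b) ^ 2, hLN, ?_, ?_, ?_⟩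
    · -- the weight of the chosen walk
      rw [hwi]
      have := tile_walk_eq (h := sg (tt a b).2) (B := q i) (ω := ω i)
        (hlay i (tt a b).1.1 (tt a b).1.2) (he i) g5
      simp only [wT]
      rw [this, hpt0, g4, ← hsg1, hqz]
    · intro u hu v hv0 hv
      rw [hwi]
      rcases tile_walk (hlay i _ _) (he i) (hcorr i (tt a b, ρ)) hm0 (hqm i) (hed i) (hlen' i u hu)
        v hv0 hv (Δ := Δ a b) rfl (ω := ω i) with h1 | ⟨h1, h2, h3⟩
      · right
        refine h1.trans ?_
        rw [hqz]
        linarith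
      · rw [hqz, hsg1] at h3
        by_cases hsum : ∑ t ∈ Finset.range (e i), (tilePos Q (e i) ρ
            (lay i (tt a b).1.1 (tt a b).1.2) (v (t + 1)) -
            tilePos Q (e i) ρ (lay i (tt a b).1.1 (tt a b).1.2) (v t) - Δ a b) ^ 2 < 1
        · left
          refine ⟨h1, fun t ht => tilePos_inj (Q := Q) (ρ := ρ)
            (lay := lay i (tt a b).1.1 (tt a b).1.2) (he1 i)
            ((h2 t ht).trans (g5 t ht).1.symm) ?_⟩
          rw [(tile_rigid (hlay i _ _) g2 h2 hsum).2 t ht, (g5 t ht).2, hv0]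
        · right
          simp only [wT]
          rw [h3]
          linarith
    · intro i' hi' hSi' u hu v hv0 hv
      have h1 := hlenz i' u hu
      rcases hcases i' with ⟨-, hw', -⟩ | ⟨⟨t', ρ'⟩, hk', hw', -⟩ | ⟨s, -, hw', hS'⟩ <;> rw [hw']
      · simp only [walkSum, Finset.sum_const_zero]
        have : (0 : ℤ) ≤ L := by positivity
        linarith
      · rcases tile_walk (hlay i' _ _) (he i') (hcorr i' (t', ρ')) hm0 (hqm i') (hed i')
          (hlen' i' u hu) v hv0 hv (Δ := Δ a b) rfl (ω := ω i') with h2 | ⟨h2, h3, h4⟩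
        · refine h2.trans ?_
          rw [hqz]
          linarith
        · rw [hqz] at h4
          simp only [wT]
          rw [h4]
          have hnn : 0 ≤ ∑ t ∈ Finset.range (e i'), (tilePos Q (e i') ρ'
              (lay i' t'.1.1 t'.1.2) (v (t + 1)) -
              tilePos Q (e i') ρ' (lay i' t'.1.1 t'.1.2) (v t) - Δ a b) ^ 2 :=
            Finset.sum_nonneg fun t _ => sq_nonneg _
          have hD' : (0 : ℤ) ≤ e i' * (Δ a b) ^ 2 := by positivity
          by_cases hs : t'.2 = (tt a b).2
          · have hparts : t' = tt a b := by
              have k1 := h3 0 (Nat.zero_le _)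
              have k2 := h3 (e i') le_rfl
              rw [hv0, hπ0] at k1
              rw [h2, he] at hv
              rw [hv, hπe] at k2
              exact Prod.ext (Prod.ext (Fin.ext k1.symm) (Fin.ext k2.symm)) hs
            subst hparts
            obtain ⟨E, -, hE2, -⟩ := hk1 (tt a b)
            obtain ⟨k1, -⟩ := hE2 i ρ g1
            obtain ⟨k2, k3⟩ := hE2 i' ρ' hk'
            have k4 : e i' = e i := k2.trans k1.symm
            have hge : 1 ≤ ∑ t ∈ Finset.range (e i'), (tilePos Q (e i') ρ'
                (lay i' (tt a b).1.1 (tt a b).1.2) (v (t + 1)) -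
                tilePos Q (e i') ρ' (lay i' (tt a b).1.1 (tt a b).1.2) (v t) - Δ a b) ^ 2 := by
              by_contra hlt
              have k5 := (tile_rigid (hlay i' _ _) (by rw [k2]; exact k3) h3 (not_le.1 hlt)).1
              rw [k4, ← g3] at k5
              have k6 : ρ' = ρ := by exact_mod_cast k5
              rw [k6] at hk'
              exact hi' (hk3 _ _ _ hk' g1)
            rw [hsg1, k4]
            rw [k4] at hge
            linarith
          · have := hsg2 _ hs
            linarith
      · rcases diag_walk (hinj i' s) (hqd i') (hed i') (hlen' i' u hu) v (ω := ω i') with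
          h | ⟨-, -, x, hx, -⟩
        · refine h.trans (h1.trans ?_)
          linarith
        · rw [← hS', hSi'] at hx
          exact absurd hx (Set.notMem_empty _)
  · intro a ha
    rw [hIa, hpa]
    have g1 := hId (cl a)
    obtain ⟨hwi, hSi⟩ := hwS _ _ g1
    refine ⟨by rw [hSi]; exact hcl a ha, fun i hi => ?_, diagPath_zero a,
      diagPath_last (he1 _) ha, L + e (Id (cl a)) * (d + 1), ?_, ?_, ?_⟩
    · rcases hcases i with ⟨-, -, hS⟩ | ⟨s, -, -, hS⟩ | ⟨s, hs, -, hS⟩ <;> rw [hS] at hi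
      · exact absurd hi (Set.notMem_empty _)
      · exact absurd hi (Set.notMem_empty _)
      · have h1 : cl a = s := Fin.ext hi.2
        rw [← h1] at hs
        exact hk3 _ _ _ hs g1
    · have := he1z (Id (cl a))
      nlinarith
    · rw [hwi, ← hqz (Id (cl a)), ← mul_add]
      exact diag_path_sum (he _) (hcl a ha)
    · intro u hu v hv0 hv
      rw [hwi, ← hqz (Id (cl a)), ← mul_add]
      exact diag_lead (hinj _ _) (hqd _) (he1 _) (hed _) (he _) (hcl a ha) (hlen' _ u hu)
        (hv0.trans (diagPath_zero a).symm) (hv.trans (diagPath_last (he1 _) ha).symm)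
  · intro a b a' b' ha ha' hI t t' ht ht' h1 h2
    by_cases hab : a = b
    · subst hab
      by_cases hab' : a' = b'
      · subst hab'
        rw [hIa] at hI ht ht'
        rw [hIa] at hI
        have g1 := hId (cl a)
        rw [hI, hId (cl a')] at g1
        have g2 : cl a' = cl a := Sum.inr_injective (Option.some_injective _ g1)
        rw [hpa, hpa, g2] at h1
        have := (hinj _ _ a (hcl a (ha rfl)) a' (by rw [← g2]; exact hcl a' (ha' rfl)) t ht.le
          t' ht'.le h1).1
        exact ⟨this, this⟩
      · exfalso
        rw [hIa, hIab _ _ hab'] at hI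
        have g1 := hId (cl a)
        rw [hI, hIt] at g1
        simp at g1
    · by_cases hab' : a' = b'
      · exfalso
        subst hab'
        rw [hIa, hIab _ _ hab] at hI
        have g1 := hId (cl a')
        rw [← hI, hIt] at g1
        simp at g1
      · rw [hIab _ _ hab] at hI ht ht'
        rw [hIab _ _ hab'] at hI
        rw [hpab _ _ hab, hpab _ _ hab'] at h1 h2
        have g1 := hIt a b
        rw [hI, hIt a' b'] at g1
        obtain ⟨g2, g3⟩ := Prod.ext_iff.1 (Sum.inl_injective (Option.some_injective _ g1))
        have g4 := hpt a' b'
        rw [← hI] at g4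
        simp only at g2 g3
        rw [g2, g3] at g4
        have g5 := tile_disj (hlay _ _ _) (hpt a b) g4 ht ht' h1 h2
        rw [hpt0, hpt0, hpte, hI, hpte] at g5
        exact g5

end Large

/-! ### The free algebra and the descent to the ground field -/

/-- Flatness over an algebraically closed field, with words given by their coefficients. -/
theorem core {k : Type*} [Field k] [IsAlgClosed k] [CharZero k] {n d : ℕ} (hn : 1 ≤ n)
    (hd : 2 ≤ d) {ι : Type*} [Fintype ι] [DecidableEq ι] {J : ι → Type*}
    (c : ∀ i, List (J i) →₀ k) (hlen : ∀ i, ∀ u ∈ (c i).support, u.length ≤ d)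
    (hgen : ∀ i, Generating n (c i)) (hm : 1000 * d ^ 3 ≤ Fintype.card ι) :
    (aeval (fun p : Fin n × Fin n => (∑ i, ev (c i) (gen k J i)) p.1 p.2) :
      MvPolynomial (Fin n × Fin n) k →ₐ[k]
        MvPolynomial ((Σ i, J i) × (Fin n × Fin n)) k).toRingHom.Flat := by
  rcases Nat.lt_or_ge d n with hnd | hnd
  · exact core_large hd hnd c hlen hgen hm
  · exact core_small hn hd hnd c hlen hgen hm

lemma exists_word {K : Type} [CommRing K] {r ℓ : ℕ} {x : FreeAlgebra K (Fin r)}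
    (hx : IsAlgMonomialOfLength K x ℓ) :
    ∃ u : List (Fin r), u.length = ℓ ∧ ∀ (n : ℕ) (A : Type) [CommRing A] [Algebra K A]
      (Y : Fin r → Matrix (Fin n) (Fin n) A), FreeAlgebra.lift K Y x = (u.map Y).prod := by
  induction hx with
  | one => exact ⟨[], rfl, fun n A _ _ Y => by simp⟩
  | of i => exact ⟨[i], rfl, fun n A _ _ Y => by simp⟩
  | mul _ _ ihx ihy =>
    obtain ⟨u, hu, hu'⟩ := ihx
    obtain ⟨v, hv, hv'⟩ := ihy
    exact ⟨u ++ v, by simp [hu, hv], fun n A _ _ Y => by simp [hu', hv']⟩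

/-- An algebra word of degree at most `d` is evaluated through coefficients supported on lists of
generators of length at most `d`. -/
lemma exists_coeffs {K : Type} [Field K] {r d : ℕ} {w : FreeAlgebra K (Fin r)}
    (hw : AlgWordDegLE K d w) :
    ∃ c : List (Fin r) →₀ K, (∀ u ∈ c.support, u.length ≤ d) ∧
      ∀ (n : ℕ) (A : Type) [CommRing A] [Algebra K A]
      (Y : Fin r → Matrix (Fin n) (Fin n) A), matrixWordMap w Y = ev c Y := by
  classical
  induction hw using Submodule.span_induction with
  | mem x hx =>
    obtain ⟨ℓ, hℓ, hx⟩ := hx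
    obtain ⟨u, hu, hu'⟩ := exists_word hx
    refine ⟨Finsupp.single u 1, fun v hv => ?_, fun n A _ _ Y => ?_⟩
    · have := Finsupp.support_single_subset hv
      rw [Finset.mem_singleton] at this
      rw [this, hu]; exact hℓ
    · rw [ev_single, one_smul, ← hu']; rfl
  | zero => exact ⟨0, by simp, fun n A _ _ Y => by simp [matrixWordMap]⟩
  | add x y _ _ hx hy =>
    obtain ⟨c, hc, hc'⟩ := hx
    obtain ⟨c₂, hc₂, hc₂'⟩ := hy
    refine ⟨c + c₂, fun u hu => ?_, fun n A _ _ Y => ?_⟩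
    · rcases Finset.mem_union.1 (Finsupp.support_add hu) with h | h
      exacts [hc u h, hc₂ u h]
    · rw [ev_add, ← hc', ← hc₂']
      simp [matrixWordMap]
  | smul a x _ hx =>
    obtain ⟨c, hc, hc'⟩ := hx
    refine ⟨a • c, fun u hu => hc u (Finsupp.support_smul hu), fun n A _ _ Y => ?_⟩
    rw [ev_smul, ← hc']
    simp [matrixWordMap]

/-- Extending the scalars of the coefficients does not change the values. -/
lemma ev_mapRange {K k A J : Type*} [Field K] [Field k] [CommRing A] [Algebra K k] [Algebra K A]
    [Algebra k A] [IsScalarTower K k A] {n : ℕ} (c : List J →₀ K)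
    (Y : J → Matrix (Fin n) (Fin n) A) :
    ev (c.mapRange (algebraMap K k) (map_zero _)) Y = ev c Y := by
  rw [ev, Finsupp.sum_mapRange_index (by simp), ev]
  simp [algebraMap_smul]

end WordFlat

open WordFlat MvPolynomial in
theorem matrix_word_maps_convolution_flat :
    ∃ C : ℝ, 0 < C ∧ C < 10 ^ 6 ∧
      ∀ (K : Type) [Field K] [CharZero K],
      ∀ (d : ℕ), 2 ≤ d →
      ∀ (m : ℕ) (r : Fin m → ℕ) (w : ∀ i : Fin m, FreeAlgebra K (Fin (r i))),
        (∀ i, AlgWordDegLE K d (w i)) →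
      ∀ (n : ℕ), 1 ≤ n →
        (∀ i, MatrixWordGenerating K n (w i)) →
        C * (d : ℝ) ^ 3 ≤ (m : ℝ) →
      -- the comorphism `K[M_n] → K[M_n^{r₁+⋯+r_m}]` of the convolution of the word maps
      ∀ (Φ : MvPolynomial (Fin n × Fin n) K →ₐ[K]
          MvPolynomial ((Σ i : Fin m, Fin (r i)) × (Fin n × Fin n)) K),
        (∀ (v : ((Σ i : Fin m, Fin (r i)) × (Fin n × Fin n)) → K) (a b : Fin n),
          MvPolynomial.aeval v (Φ (MvPolynomial.X (a, b))) =
            (∑ i : Fin m,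
              matrixWordMap (w i)
                (fun j : Fin (r i) => Matrix.of fun a' b' => v (⟨i, j⟩, (a', b')))) a b) →
        RingHom.Flat Φ.toRingHom := by
  refine ⟨1000, by norm_num, by norm_num, ?_⟩
  intro K _ _ d hd m r w hw n hn hgen hm Φ hΦ
  have hm' : 1000 * d ^ 3 ≤ Fintype.card (Fin m) := by
    rw [Fintype.card_fin]; exact_mod_cast hm
  choose c hc hcw using fun i => exists_coeffs (hw i)
  let c' : ∀ i, List (Fin (r i)) →₀ AlgebraicClosure K := fun i =>
    (c i).mapRange (algebraMap K (AlgebraicClosure K)) (map_zero _)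
  have hcore := core (k := AlgebraicClosure K) hn hd c'
    (fun i u hu => hc i u (Finsupp.support_mapRange hu))
    (fun i W c₀ h => hgen i W c₀ fun y => by
      rw [hcw, ← ev_mapRange (k := AlgebraicClosure K)]; exact h y) hm'
  refine flat_descent _ _ ?_ hcore
  -- over `K` the comorphism is given by the entries of the generic value
  have hX : ∀ a b, Φ (X (a, b)) = (∑ i, ev (c i) (gen K (fun i => Fin (r i)) i)) a b := by
    intro a b
    refine MvPolynomial.funext fun v => ?_
    have h1 := hΦ v a b
    rw [← aeval_eq_eval]
    change aeval v _ = aeval v _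
    rw [h1, Matrix.sum_apply, Matrix.sum_apply, map_sum]
    refine Finset.sum_congr rfl fun i _ => ?_
    rw [hcw]
    have := congrFun (congrFun (ev_map (aeval v) (c i) (gen K (fun i => Fin (r i)) i)) a) b
    rw [Matrix.map_apply] at this
    rw [this]
    congr 2
    ext j x y
    simp [gen]
  refine MvPolynomial.ringHom_ext (fun x => ?_) fun p => ?_
  · have : Φ (C x) = C x := Φ.commutes x
    simp [this]
  · obtain ⟨a, b⟩ := p
    simp only [RingHom.comp_apply, map_X]
    change map (algebraMap K (AlgebraicClosure K)) (Φ (X (a, b))) = aeval _ (X (a, b))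
    rw [hX, aeval_X, Matrix.sum_apply, Matrix.sum_apply, map_sum]
    refine Finset.sum_congr rfl fun i _ => ?_
    have := congrFun (congrFun (ev_map (mapAlgHom (Algebra.ofId K (AlgebraicClosure K)))
      (c i) (gen K (fun i => Fin (r i)) i)) a) b
    rw [Matrix.map_apply] at this
    simp only [c']
    rw [ev_mapRange]
    refine Eq.trans ?_ (this.trans ?_)
    · rfl
    · congr 2
      ext j x y
      simp [gen]
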